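/- Let R be a quantum nilpotent algebra of dimension N over a field K with torus H, and for 1 ≤ k ≤ N let R_k denote the subalgebra generated by x_1, …, x_k. Then there exist a function η : [1,N] → ℤ and elements c_k ∈ R_{k−1} for all 2 ≤ k ≤ N with δ_k ≠ 0 such that the elements y_1, …, y_N of R, recursively defined by y_k := y_{p(k)} x_k − c_k if δ_k ≠ 0 and y_k := x_k if δ_k = 0 (where p is the predecessor function of the level sets of η, with y_{−∞} interpreted as 1), are H-eigenvectors and have the property that for every k ∈ [1,N] the homogeneous prime elements of R_k are precisely the nonzero scalar multiples of the elements y_l for l ∈ [1,k] with s(l) > k. In particular, y_k is a homogeneous prime element of R_k for all k ∈ [1,N]. Furthermore, the sequence y_1, …, y_N and the level sets of a function η with these properties are both unique. -/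

import Mathlib

open scoped BigOperators

noncomputable section

universe u v

/-- The group of `K`-points of a split torus of rank `r`. -/
abbrev Torus (K : Type u) [Field K] (r : ℕ) : Type u := Fin r → Kˣ

section Core

variable (K : Type u) [Field K] {R : Type v} [Ring R] [Algebra K R] {r N : ℕ}

/-- `a` is an eigenvector of the torus action `act` with (integral) character `f`. -/
def IsEigenWith (act : Torus K r →* (R ≃ₐ[K] R)) (f : Fin r → ℤ) (a : R) : Prop :=
  ∀ ξ : Torus K r, act ξ a = ((∏ i, ξ i ^ f i : Kˣ) : K) • a

/-- The torus action `act` is rational: every element is a finite sum of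
eigenvectors whose eigenvalues are given by integral characters of the torus. -/
def IsRationalAction (act : Torus K r →* (R ≃ₐ[K] R)) : Prop :=
  ∀ a : R, ∃ (s : Finset (Fin r → ℤ)) (c : (Fin r → ℤ) → R),
    a = ∑ f ∈ s, c f ∧ ∀ f ∈ s, IsEigenWith K act f (c f)

/-- The ordered monomial `x 0 ^ m 0 * x 1 ^ m 1 * ⋯ * x (N-1) ^ m (N-1)`. -/
def ordMonomial (x : Fin N → R) (m : Fin N → ℕ) : R :=
  ((List.finRange N).map fun k => x k ^ m k).prod

/-- The ordered monomial in the reversed order of the generators. -/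
def revOrdMonomial (x : Fin N → R) (m : Fin N → ℕ) : R :=
  ((List.finRange N).reverse.map fun k => x k ^ m k).prod

/-- The subalgebra generated by the first `m` of the elements `x 0, …, x (N-1)`. -/
def Rsub (x : Fin N → R) (m : ℕ) : Subalgebra K R :=
  Algebra.adjoin K (x '' {l : Fin N | (l : ℕ) < m})

/-- The subalgebra generated by the elements `x l` with `m < l` (for the reversed order). -/
def RsubRev (x : Fin N → R) (m : ℕ) : Subalgebra K R :=
  Algebra.adjoin K (x '' {l : Fin N | m < (l : ℕ)})

/-- The skew derivation `δ_k : a ↦ x_k a − (h_k · a) x_k` attached to the `k`-th generator. -/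
def skewDelta (act : Torus K r →* (R ≃ₐ[K] R)) (x : Fin N → R) (h : Fin N → Torus K r)
    (k : Fin N) : R → R :=
  fun a => x k * a - act (h k) a * x k

end Core

/-- A quantum nilpotent algebra (CGL extension) of dimension `N`:  an iterated skew
polynomial extension `R = K[x_1][x_2; σ_2, δ_2]⋯[x_N; σ_N, δ_N]` equipped with a rational
action of a torus `H = (Kˣ)^r` by `K`-algebra automorphisms such that the `x_k` are
`H`-eigenvectors, each `δ_k` is a locally nilpotent `σ_k`-derivation of the subalgebra
generated by `x_1, …, x_{k-1}`, and each `σ_k` is given by the action of a torus element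
`h_k` whose eigenvalue `λ_k` on `x_k` is not a root of unity.  The iterated skew polynomial
presentation is encoded by the generation, linear independence of ordered monomials
(PBW basis) and the skew commutation conditions. -/
structure QNA (K : Type u) [Field K] (R : Type v) [Ring R] [Algebra K R] (N r : ℕ) where
  x : Fin N → R
  act : Torus K r →* (R ≃ₐ[K] R)
  h : Fin N → Torus K r
  lam : Fin N → K
  rational : IsRationalAction K act
  gen : Algebra.adjoin K (Set.range x) = ⊤
  pbw : LinearIndependent K (ordMonomial (R := R) x)
  eigenvec : ∀ k : Fin N, ∃ f : Fin r → ℤ, IsEigenWith K act f (x k)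
  stable : ∀ k : Fin N, ∀ a ∈ Rsub K x (k : ℕ), skewDelta K act x h k a ∈ Rsub K x (k : ℕ)
  locnil : ∀ k : Fin N, ∀ a ∈ Rsub K x (k : ℕ), ∃ n : ℕ, (skewDelta K act x h k)^[n] a = 0
  hx : ∀ k, act (h k) (x k) = lam k • x k
  lam_not_root : ∀ k, ∀ n : ℕ, n ≠ 0 → lam k ^ n ≠ 1

/-- A symmetric quantum nilpotent algebra: a quantum nilpotent algebra which admits an
iterated skew polynomial presentation, satisfying the same axioms, also for the reversed
order `x_N, x_{N-1}, …, x_1` of the generators, with respect to torus elements `h*_k`. -/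
structure SymQNA (K : Type u) [Field K] (R : Type v) [Ring R] [Algebra K R] (N r : ℕ)
    extends QNA K R N r where
  hstar : Fin N → Torus K r
  lamstar : Fin N → K
  pbwRev : LinearIndependent K (revOrdMonomial (R := R) x)
  stableRev : ∀ k : Fin N, ∀ a ∈ RsubRev K x (k : ℕ),
    skewDelta K act x hstar k a ∈ RsubRev K x (k : ℕ)
  locnilRev : ∀ k : Fin N, ∀ a ∈ RsubRev K x (k : ℕ),
    ∃ n : ℕ, (skewDelta K act x hstar k)^[n] a = 0
  hxstar : ∀ k, act (hstar k) (x k) = lamstar k • x k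
  lamstar_not_root : ∀ k, ∀ n : ℕ, n ≠ 0 → lamstar k ^ n ≠ 1

section Prime

variable (K : Type u) [Field K] {R : Type v} [Ring R] [Algebra K R] {r N : ℕ}

/-- The skew derivation `δ_k` of the `k`-th step of the presentation vanishes. -/
def deltaZero (Q : QNA K R N r) (k : Fin N) : Prop :=
  ∀ a ∈ Rsub K Q.x (k : ℕ), skewDelta K Q.act Q.x Q.h k a = 0

/-- `p` is a prime element of the subalgebra `A`:  `p` is a nonzero noninvertible normal
element of `A` (`pA = Ap`) such that `A/Ap` is a domain. -/
def IsPrimeIn (A : Subalgebra K R) (p : R) : Prop :=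
  p ∈ A ∧ p ≠ 0 ∧ (¬ ∃ u ∈ A, p * u = 1 ∧ u * p = 1) ∧
  (∀ a ∈ A, ∃ b ∈ A, a * p = p * b) ∧
  (∀ a ∈ A, ∃ b ∈ A, p * a = b * p) ∧
  (∀ a ∈ A, ∀ b ∈ A, (∃ d ∈ A, a * b = p * d) → (∃ d ∈ A, a = p * d) ∨ (∃ d ∈ A, b = p * d))

/-- The predecessor function of the level sets of `η`:  `p(k)` is the largest `l < k`
with `η l = η k`, and `⊥` (i.e. `−∞`) if there is no such `l`. -/
def predIdx {α : Type*} [DecidableEq α] (η : Fin N → α) (k : Fin N) : WithBot (Fin N) :=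
  (Finset.univ.filter fun l => l < k ∧ η l = η k).max

/-- The successor function of the level sets of `η`:  `s(k)` is the smallest `l > k`
with `η l = η k`, and `⊤` (i.e. `+∞`) if there is no such `l`. -/
def succIdx {α : Type*} [DecidableEq α] (η : Fin N → α) (k : Fin N) : WithTop (Fin N) :=
  (Finset.univ.filter fun l => k < l ∧ η l = η k).min

/-- `(η, c, y)` is a sequence of homogeneous prime elements for the quantum nilpotent
algebra `Q` in the sense of the prime element theorem:  `y` is defined by the recursion
`y_k = y_{p(k)} x_k − c_k` (if `δ_k ≠ 0`; `y_k = x_k` if `δ_k = 0`), the `y_k` are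
`H`-eigenvectors, and for every `k` the homogeneous prime elements of the subalgebra
`R_k` generated by `x_1, …, x_k` are precisely the nonzero scalar multiples of the
`y_l` with `l ≤ k` and `s(l) > k`. -/
structure IsPrimeSeq (Q : QNA K R N r) (η : Fin N → ℤ) (c : Fin N → R) (y : Fin N → R) :
    Prop where
  c_mem : ∀ k : Fin N, ¬ deltaZero K Q k → c k ∈ Rsub K Q.x (k : ℕ)
  rec_delta_zero : ∀ k : Fin N, deltaZero K Q k → y k = Q.x k
  rec_delta_ne : ∀ k : Fin N, ¬ deltaZero K Q k →
    y k = (WithBot.recBotCoe (1 : R) (fun l => y l) (predIdx η k)) * Q.x k - c k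
  homog : ∀ k : Fin N, ∃ f : Fin r → ℤ, IsEigenWith K Q.act f (y k)
  prime_iff : ∀ k : Fin N, ∀ u : R,
    (IsPrimeIn K (Rsub K Q.x ((k : ℕ) + 1)) u ∧ ∃ f : Fin r → ℤ, IsEigenWith K Q.act f u) ↔
    (∃ l : Fin N, l ≤ k ∧ (∀ l' : Fin N, l < l' → l' ≤ k → η l' ≠ η l) ∧
      ∃ t : Kˣ, u = (t : K) • y l)

/-- The vector `ē_k = e_k + e_{p(k)} + e_{p²(k)} + ⋯ ∈ ℤ^N`. -/
def ebar (η : Fin N → ℤ) (k : Fin N) : Fin N → ℤ :=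
  fun l => if l ≤ k ∧ η l = η k then 1 else 0

/-- The multiplicatively skewsymmetric matrix of eigenvalues:  `1` on the diagonal,
`λ_{kl}` below it and `λ_{lk}⁻¹` above it. -/
def omegaEntry (lam2 : Fin N → Fin N → Kˣ) (k l : Fin N) : Kˣ :=
  if k = l then 1 else if l < k then lam2 k l else (lam2 l k)⁻¹

/-- The unique group bicharacter `Ω : ℤ^N × ℤ^N → Kˣ` with `Ω(e_k, e_l)` equal to `1`,
`λ_{kl}`, `λ_{lk}⁻¹` according as `k = l`, `k > l`, `k < l`. -/
def Omega (lam2 : Fin N → Fin N → Kˣ) (f g : Fin N → ℤ) : Kˣ :=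
  ∏ k, ∏ l, (omegaEntry K lam2 k l) ^ (f k * g l)

/-- The set of exchangeable indices: those `k` with `s(k) ≠ +∞`. -/
def exSet (η : Fin N → ℤ) : Finset (Fin N) :=
  Finset.univ.filter fun k => ∃ l, k < l ∧ η l = η k

/-- Condition (A): `K` contains square roots of the scalars `λ_{kl}` such that the
subgroup of `Kˣ` generated by all of them contains no elements of order 2. -/
def CondA (lam2 : Fin N → Fin N → Kˣ) : Prop :=
  ∃ sq : Fin N → Fin N → Kˣ, (∀ k l : Fin N, l < k → sq k l ^ 2 = lam2 k l) ∧
    ∀ g ∈ Subgroup.closure {u : Kˣ | ∃ k l : Fin N, l < k ∧ u = sq k l}, g ^ 2 = 1 → g = 1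

/-- Condition (B): there exist positive integers `d_n`, `n ∈ range η`, such that
`(λ*_k)^{d_{η(l)}} = (λ*_l)^{d_{η(k)}}` for all exchangeable `k, l`. -/
def CondB (η : Fin N → ℤ) (lamstar : Fin N → K) : Prop :=
  ∃ d : ℤ → ℕ, (∀ n ∈ Set.range η, 0 < d n) ∧
    ∀ k ∈ exSet η, ∀ l ∈ exSet η, lamstar k ^ d (η l) = lamstar l ^ d (η k)

/-- The defining conditions for the exchange matrix `B̃ ∈ M_{N×ex}(ℤ)`:  columns indexed
outside `ex` vanish; `Ω(Σ_l b_{lk} ē_l, ē_n)` equals `λ*_n` for `k = n` and `1` otherwise;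
and the products `y_1^{b_{1k}} ⋯ y_N^{b_{Nk}}` are fixed under `H`, i.e. the characters
`χ_{y_l}` of the `y_l` satisfy `Σ_l b_{lk} χ_{y_l} = 0`. -/
def IsExchangeMatrix (lam2 : Fin N → Fin N → Kˣ) (η : Fin N → ℤ) (lamstar : Fin N → K)
    (chiy : Fin N → Fin r → ℤ) (B : Fin N → Fin N → ℤ) : Prop :=
  (∀ k : Fin N, k ∉ exSet η → ∀ l, B l k = 0) ∧
  (∀ k ∈ exSet η, ∀ n : Fin N,
    ((Omega K lam2 (fun j => ∑ l, B l k * ebar η l j) (ebar η n) : Kˣ) : K) =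
      (if k = n then lamstar n else 1)) ∧
  (∀ k ∈ exSet η, ∀ i : Fin r, (∑ l, B l k * chiy l i) = 0)

/-- `ι : R →ₐ[K] D` realizes the division ring `D` as the division ring of fractions
`Fract R`:  `ι` is injective and every element of `D` is a right fraction `ι(a) ι(b)⁻¹`. -/
def IsFractionEmb {D : Type v} [DivisionRing D] [Algebra K D] (ι : R →ₐ[K] D) : Prop :=
  Function.Injective ι ∧ ∀ d : D, ∃ a b : R, b ≠ 0 ∧ d * ι b = ι a

end Prime

/-!
The theorem is proved by induction along the tower `R_0 ⊂ R_1 ⊂ ⋯ ⊂ R_N`. What is carried through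
the induction is a finite set `Y` of `q`-commuting homogeneous elements of `R_k` generating `R_k`
after localization, together with the subset `L ⊆ Y` of those that are prime in `R_k`, such that
every nonzero graded ideal of `R_k` contains a product of elements of `L`; the last property forces
the homogeneous primes to be the scalar multiples of elements of `L`.

In the step from `A = R_k` to `B = R_{k+1} = A[X; σ, δ]`, the decomposition of `δ` on this
localization of `A` into joint eigencomponents yields `w ∈ A` and `e ∈ A` such that `w X - e`
`q`-commutes with `Y`; here the eigenvalue `λ` of `X` not being a root of unity is used. If `δ ≠ 0`,
dividing out common prime factors makes `w` a single element `p` of `L`, because `δ`, being locally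
nilpotent with multiplicative degree, cannot be nonzero on two prime factors of `w`. The element
`y = p X - c` is then a prime of `B` which replaces `p`, all other elements of `L` staying prime. If
`δ = 0`, the prime `y = X` is added to `L`.
-/

section DegreeFiltration

variable {K : Type u} [CommRing K] {R : Type v} [Ring R] [Algebra K R]
  {A B : Subalgebra K R} {X : R} {s : R → R} {m n : ℕ} {a a' b f g : R}

/-- The elements of the form `∑ i < n, a i * X ^ i` with coefficients `a i` in `A`, the analogue of
`Polynomial.degreeLT` for skew polynomials with coefficients written on the left. -/
def skewDegreeLT (A : Subalgebra K R) (X : R) : ℕ → Submodule K R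
  | 0 => ⊥
  | n + 1 => skewDegreeLT A X n ⊔ (Subalgebra.toSubmodule A).map (LinearMap.mulRight K (X ^ n))

theorem mem_skewDegreeLT_zero : b ∈ skewDegreeLT A X 0 ↔ b = 0 := by
  simp [skewDegreeLT]

theorem mem_skewDegreeLT_succ :
    b ∈ skewDegreeLT A X (n + 1) ↔ ∃ f ∈ skewDegreeLT A X n, ∃ a ∈ A, f + a * X ^ n = b := by
  simp [skewDegreeLT, Submodule.mem_sup]

theorem mem_skewDegreeLT_one : b ∈ skewDegreeLT A X 1 ↔ b ∈ A := by
  simp [mem_skewDegreeLT_succ, mem_skewDegreeLT_zero]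

theorem skewDegreeLT_mono (A : Subalgebra K R) (X : R) : Monotone (skewDegreeLT A X) :=
  monotone_nat_of_le_succ fun _ => le_sup_left

theorem mul_pow_mem_skewDegreeLT (ha : a ∈ A) (X : R) (n : ℕ) :
    a * X ^ n ∈ skewDegreeLT A X (n + 1) :=
  mem_skewDegreeLT_succ.2 ⟨0, zero_mem _, a, ha, zero_add _⟩

@[elab_as_elim]
theorem skewDegreeLT_induction {motive : (n : ℕ) → (b : R) → b ∈ skewDegreeLT A X n → Prop}
    (zero : motive 0 0 (zero_mem _))
    (add_mul_pow : ∀ n f a (hf : f ∈ skewDegreeLT A X n) (ha : a ∈ A), motive n f hf →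
      motive (n + 1) (f + a * X ^ n) (mem_skewDegreeLT_succ.2 ⟨f, hf, a, ha, rfl⟩))
    (hb : b ∈ skewDegreeLT A X n) : motive n b hb := by
  induction n generalizing b with
  | zero =>
    obtain rfl := mem_skewDegreeLT_zero.1 hb
    exact zero
  | succ n ih =>
    obtain ⟨f, hf, a, ha, rfl⟩ := mem_skewDegreeLT_succ.1 hb
    exact add_mul_pow n f a hf ha (ih hf)

theorem mul_mem_skewDegreeLT_of_mem_left (ha : a ∈ A) (hb : b ∈ skewDegreeLT A X n) :
    a * b ∈ skewDegreeLT A X n := by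
  induction hb using skewDegreeLT_induction with
  | zero => simp
  | add_mul_pow n f c _ hc ih =>
    exact mem_skewDegreeLT_succ.2 ⟨a * f, ih, a * c, mul_mem ha hc, by rw [mul_add, mul_assoc]⟩

theorem mul_pow_mem_skewDegreeLT_add (hb : b ∈ skewDegreeLT A X n) (m : ℕ) :
    b * X ^ m ∈ skewDegreeLT A X (n + m) := by
  induction hb using skewDegreeLT_induction with
  | zero => simp
  | add_mul_pow n f a _ ha ih =>
    rw [add_mul, mul_assoc, ← pow_add, Nat.add_right_comm]
    exact mem_skewDegreeLT_succ.2 ⟨_, ih, a, ha, rfl⟩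

theorem skewDegreeLT_subset (hAB : A ≤ B) (hX : X ∈ B) (hb : b ∈ skewDegreeLT A X n) : b ∈ B := by
  induction hb using skewDegreeLT_induction with
  | zero => exact zero_mem B
  | add_mul_pow n f a _ ha ih => exact add_mem ih (mul_mem (hAB ha) (pow_mem hX n))

/-- `X` satisfies the commutation rule of an Ore extension of `A`: `X * a` equals `s a * X` up to an
element of `A`. -/
structure IsOreGenerator (A : Subalgebra K R) (X : R) (s : R → R) : Prop where
  map_mem : ∀ a ∈ A, s a ∈ A
  comm_mem : ∀ a ∈ A, X * a - s a * X ∈ A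

theorem IsOreGenerator.mul_mem_skewDegreeLT (hX : IsOreGenerator A X s)
    (hb : b ∈ skewDegreeLT A X n) : X * b ∈ skewDegreeLT A X (n + 1) := by
  induction hb using skewDegreeLT_induction with
  | zero => simp
  | add_mul_pow n f a _ ha ih =>
    refine mem_skewDegreeLT_succ.2 ⟨X * f + (X * a - s a * X) * X ^ n,
      add_mem ih (mul_pow_mem_skewDegreeLT (hX.comm_mem a ha) X n), s a, hX.map_mem a ha, ?_⟩
    rw [pow_succ']
    noncomm_ring

theorem IsOreGenerator.pow_mul_mem_skewDegreeLT (hX : IsOreGenerator A X s)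
    (hb : b ∈ skewDegreeLT A X n) (m : ℕ) : X ^ m * b ∈ skewDegreeLT A X (n + m) := by
  induction m with
  | zero => simpa using hb
  | succ m ih =>
    rw [pow_succ', mul_assoc]
    exact hX.mul_mem_skewDegreeLT ih

theorem IsOreGenerator.iterate_mem (hX : IsOreGenerator A X s) (n : ℕ) (ha : a ∈ A) :
    s^[n] a ∈ A :=
  Set.MapsTo.iterate (s := (A : Set R)) hX.map_mem n ha

theorem IsOreGenerator.pow_mul_sub_mem (hX : IsOreGenerator A X s) (ha : a ∈ A) (n : ℕ) :
    X ^ n * a - s^[n] a * X ^ n ∈ skewDegreeLT A X n := by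
  induction n with
  | zero => simp
  | succ n ih =>
    have h := add_mem (hX.mul_mem_skewDegreeLT ih)
      (mul_pow_mem_skewDegreeLT (hX.comm_mem _ (hX.iterate_mem n ha)) X n)
    rw [Function.iterate_succ_apply']
    convert h using 1
    rw [pow_succ']
    noncomm_ring

theorem IsOreGenerator.mul_mem_skewDegreeLT_add (hX : IsOreGenerator A X s)
    (hg : g ∈ skewDegreeLT A X (m + 1)) (hf : f ∈ skewDegreeLT A X n) :
    f * g ∈ skewDegreeLT A X (n + m) := by
  induction hf using skewDegreeLT_induction with
  | zero => simp
  | add_mul_pow n f a _ ha ih =>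
    rw [add_mul, mul_assoc]
    refine add_mem (skewDegreeLT_mono A X (by lia) ih) (mul_mem_skewDegreeLT_of_mem_left ha ?_)
    exact skewDegreeLT_mono A X (by lia) (hX.pow_mul_mem_skewDegreeLT hg n)

/-- `b = a * X ^ n + (terms of lower degree)`. The coefficient `a` may vanish. -/
structure HasLeadingTerm (A : Subalgebra K R) (X : R) (n : ℕ) (a b : R) : Prop where
  coeff_mem : a ∈ A
  sub_mem : b - a * X ^ n ∈ skewDegreeLT A X n

namespace HasLeadingTerm

theorem mem_skewDegreeLT (h : HasLeadingTerm A X n a b) : b ∈ skewDegreeLT A X (n + 1) :=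
  mem_skewDegreeLT_succ.2 ⟨_, h.sub_mem, a, h.coeff_mem, sub_add_cancel _ _⟩

theorem mul_pow (ha : a ∈ A) (X : R) (n : ℕ) : HasLeadingTerm A X n a (a * X ^ n) :=
  ⟨ha, by simp⟩

theorem pow (A : Subalgebra K R) (X : R) (n : ℕ) : HasLeadingTerm A X n 1 (X ^ n) := by
  simpa using mul_pow A.one_mem X n

theorem const (X : R) (ha : a ∈ A) : HasLeadingTerm A X 0 a a := by
  simpa using mul_pow ha X 0

theorem mul_sub (X : R) (ha : a ∈ A) (hb : b ∈ A) : HasLeadingTerm A X 1 a (a * X - b) :=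
  ⟨ha, by simpa [mem_skewDegreeLT_one] using hb⟩

theorem mul (hX : IsOreGenerator A X s) (hf : HasLeadingTerm A X n a f)
    (hg : HasLeadingTerm A X m b g) : HasLeadingTerm A X (n + m) (a * s^[n] b) (f * g) := by
  refine ⟨mul_mem hf.coeff_mem (hX.iterate_mem n hg.coeff_mem), ?_⟩
  have expand : f * g - a * s^[n] b * X ^ (n + m) =
      a * ((X ^ n * b - s^[n] b * X ^ n) * X ^ m) + a * (X ^ n * (g - b * X ^ m)) +
        (f - a * X ^ n) * g := by
    rw [pow_add]
    noncomm_ring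
  rw [expand]
  refine add_mem (add_mem ?_ ?_) (hX.mul_mem_skewDegreeLT_add hg.mem_skewDegreeLT hf.sub_mem)
  · exact mul_mem_skewDegreeLT_of_mem_left hf.coeff_mem
      (mul_pow_mem_skewDegreeLT_add (hX.pow_mul_sub_mem hg.coeff_mem n) m)
  · refine mul_mem_skewDegreeLT_of_mem_left hf.coeff_mem (skewDegreeLT_mono A X ?_
      (hX.pow_mul_mem_skewDegreeLT hg.sub_mem n))
    lia

end HasLeadingTerm

theorem IsOreGenerator.exists_mem_skewDegreeLT (hX : IsOreGenerator A X s)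
    (hb : b ∈ Algebra.adjoin K (insert X (A : Set R))) :
    ∃ n, b ∈ skewDegreeLT A X n := by
  induction hb using Algebra.adjoin_induction with
  | mem z hz =>
    rcases hz with rfl | hz
    · exact ⟨2, by simpa using (HasLeadingTerm.pow A z 1).mem_skewDegreeLT⟩
    · exact ⟨1, mem_skewDegreeLT_one.2 hz⟩
  | algebraMap t => exact ⟨1, mem_skewDegreeLT_one.2 (A.algebraMap_mem t)⟩
  | add a b _ _ ha hb =>
    obtain ⟨n, hn⟩ := ha
    obtain ⟨m, hm⟩ := hb
    exact ⟨max n m, add_mem (skewDegreeLT_mono A X (le_max_left n m) hn)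
      (skewDegreeLT_mono A X (le_max_right n m) hm)⟩
  | mul a b _ _ ha hb =>
    obtain ⟨n, hn⟩ := ha
    obtain ⟨m, hm⟩ := hb
    exact ⟨n + m, hX.mul_mem_skewDegreeLT_add (skewDegreeLT_mono A X m.le_succ hm) hn⟩

theorem exists_hasLeadingTerm_of_mem_skewDegreeLT_succ (hb : b ∈ skewDegreeLT A X (n + 1)) :
    ∃ a, HasLeadingTerm A X n a b := by
  obtain ⟨f, hf, a, ha, rfl⟩ := mem_skewDegreeLT_succ.1 hb
  exact ⟨a, ha, by simpa using hf⟩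

theorem exists_hasLeadingTerm_of_ne_zero (hb : b ∈ skewDegreeLT A X n) (hb0 : b ≠ 0) :
    ∃ m a, m < n ∧ HasLeadingTerm A X m a b ∧ a ≠ 0 := by
  induction hb using skewDegreeLT_induction with
  | zero => exact absurd rfl hb0
  | add_mul_pow n f a hf ha ih =>
    rcases eq_or_ne a 0 with rfl | ha0
    · rw [zero_mul, add_zero] at hb0 ⊢
      obtain ⟨m, c, hm, hc⟩ := ih hb0
      exact ⟨m, c, by lia, hc⟩
    · exact ⟨n, a, by lia, ⟨ha, by simpa using hf⟩, ha0⟩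

/-- The powers of `X` are left linearly independent over `A`. -/
def LeftIndependentPowers (A : Subalgebra K R) (X : R) : Prop :=
  ∀ n, ∀ a ∈ A, a * X ^ n ∈ skewDegreeLT A X n → a = 0

namespace LeftIndependentPowers

theorem coeff_eq_zero (hX : LeftIndependentPowers A X) (h : HasLeadingTerm A X n a b)
    (hb : b ∈ skewDegreeLT A X n) : a = 0 :=
  hX n a h.coeff_mem (by simpa using sub_mem hb h.sub_mem)

theorem coeff_unique (hX : LeftIndependentPowers A X) (h : HasLeadingTerm A X n a b)
    (h' : HasLeadingTerm A X n a' b) : a = a' := by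
  refine sub_eq_zero.1 (hX n _ (sub_mem h.coeff_mem h'.coeff_mem) ?_)
  convert sub_mem h'.sub_mem h.sub_mem using 1
  noncomm_ring

theorem ne_zero (hX : LeftIndependentPowers A X) (h : HasLeadingTerm A X n a b) (ha : a ≠ 0) :
    b ≠ 0 := by
  rintro rfl
  exact ha (hX.coeff_eq_zero h (zero_mem _))

theorem degree_lt (hX : LeftIndependentPowers A X) (h : HasLeadingTerm A X n a b) (ha : a ≠ 0)
    (hb : b ∈ skewDegreeLT A X m) : n < m := by
  by_contra hmn
  exact ha (hX.coeff_eq_zero h (skewDegreeLT_mono A X (not_lt.1 hmn) hb))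

theorem mul_sub_notMem (hX : LeftIndependentPowers A X) (ha : a ∈ A) (ha0 : a ≠ 0)
    (hb : b ∈ A) : a * X - b ∉ A :=
  fun h => ha0 (hX.coeff_eq_zero (.mul_sub X ha hb) (mem_skewDegreeLT_one.2 h))

end LeftIndependentPowers

end DegreeFiltration

section SkewDerivation

variable {K : Type u} [Field K] {R : Type v} [Ring R] [Algebra K R]
  {σ : R ≃ₐ[K] R} {δ : R →ₗ[K] R} {q : K} {m n : ℕ} {a b : R}

/-- The `q`-factorial `[n]! = ∏ i < n, (1 + q + ⋯ + q ^ i)`. -/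
def qFactorial (q : K) (n : ℕ) : K :=
  ∏ i ∈ Finset.range n, ∑ j ∈ Finset.range (i + 1), q ^ j

theorem qFactorial_succ (q : K) (n : ℕ) :
    qFactorial q (n + 1) = (∑ j ∈ Finset.range (n + 1), q ^ j) * qFactorial q n := by
  rw [qFactorial, Finset.prod_range_succ, mul_comm, qFactorial]

theorem qFactorial_ne_zero (hq : ∀ n : ℕ, n ≠ 0 → q ^ n ≠ 1) (n : ℕ) : qFactorial q n ≠ 0 := by
  refine Finset.prod_ne_zero_iff.2 fun i _ hi => hq (i + 1) i.succ_ne_zero ?_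
  rw [← sub_eq_zero, ← geom_sum_mul, hi, zero_mul]

/-- `δ` is a `K`-linear left `σ`-derivation with `δ ∘ σ = q • (σ ∘ δ)`. -/
structure IsQSkewDerivation (σ : R ≃ₐ[K] R) (δ : R →ₗ[K] R) (q : K) : Prop where
  map_mul : ∀ a b, δ (a * b) = σ a * δ b + δ a * b
  map_aut : ∀ a, δ (σ a) = q • σ (δ a)

theorem iterate_eq_zero_of_le (hmn : m ≤ n) (ha : δ^[m] a = 0) : δ^[n] a = 0 := by
  obtain ⟨k, rfl⟩ := Nat.exists_eq_add_of_le' hmn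
  rw [Function.iterate_add_apply, ha, iterate_map_zero]

theorem iterate_map_smul_apply (σ : R ≃ₐ[K] R) (n : ℕ) (t : K) (a : R) :
    σ^[n] (t • a) = t • σ^[n] a := by
  induction n with
  | zero => rfl
  | succ n ih => rw [Function.iterate_succ_apply', ih, map_smul, Function.iterate_succ_apply']

namespace IsQSkewDerivation

theorem iterate_map_aut (hδ : IsQSkewDerivation σ δ q) (m : ℕ) (a : R) :
    δ^[m] (σ a) = q ^ m • σ (δ^[m] a) := by
  induction m with
  | zero => simp
  | succ m ih =>
    rw [Function.iterate_succ_apply', Function.iterate_succ_apply', ih, map_smul, hδ.map_aut,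
      smul_smul, pow_succ]

theorem iterate_succ_mul (hδ : IsQSkewDerivation σ δ q) (n : ℕ) (a b : R) :
    δ^[n + 1] (a * b) = δ^[n] (σ a * δ b) + δ^[n] (δ a * b) := by
  rw [Function.iterate_succ_apply, hδ.map_mul, iterate_map_add]

theorem iterate_mul_eq_zero (hδ : IsQSkewDerivation σ δ q) {k : ℕ} (hk : m + n ≤ k + 1)
    (ha : δ^[m] a = 0) (hb : δ^[n] b = 0) : δ^[k] (a * b) = 0 := by
  induction k generalizing m n a b with
  | zero =>
    obtain rfl | rfl : m = 0 ∨ n = 0 := by lia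
    · obtain rfl : a = 0 := ha
      simp
    · obtain rfl : b = 0 := hb
      simp
  | succ k ih =>
    have left_term : δ^[k] (σ a * δ b) = 0 := by
      rcases n with _ | n
      · obtain rfl : b = 0 := hb
        simp
      · exact ih (m := m) (n := n) (by lia) (by rw [hδ.iterate_map_aut, ha, map_zero, smul_zero]) hb
    have right_term : δ^[k] (δ a * b) = 0 := by
      rcases m with _ | m
      · obtain rfl : a = 0 := ha
        simp
      · exact ih (m := m) (n := n) (by lia) ha hb
    rw [hδ.iterate_succ_mul, left_term, right_term, add_zero]

/-- The only surviving term of the `q`-Leibniz formula for `δ ^ (m + n) (a * b)`, cleared of the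
denominators of the `q`-binomial coefficient. -/
theorem qFactorial_smul_iterate_mul (hδ : IsQSkewDerivation σ δ q) (ha : δ^[m + 1] a = 0)
    (hb : δ^[n + 1] b = 0) :
    (qFactorial q m * qFactorial q n) • δ^[m + n] (a * b) =
      qFactorial q (m + n) • (σ^[n] (δ^[m] a) * δ^[n] b) := by
  induction hN : m + n generalizing m n a b with
  | zero =>
    obtain ⟨rfl, rfl⟩ : m = 0 ∧ n = 0 := by lia
    simp [qFactorial]
  | succ N ih =>
    have left_term : (qFactorial q m * qFactorial q n) • δ^[N] (σ a * δ b) =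
        (q ^ m * (∑ j ∈ Finset.range n, q ^ j) * qFactorial q N) •
          (σ^[n] (δ^[m] a) * δ^[n] b) := by
      rcases n with _ | n
      · obtain hb : δ b = 0 := hb
        simp [hb]
      · have hσ : δ^[m + 1] (σ a) = 0 := by rw [hδ.iterate_map_aut, ha, map_zero, smul_zero]
        have h := ih hσ (b := δ b) (n := n) hb (by lia)
        rw [qFactorial_succ, mul_left_comm, mul_smul, h, hδ.iterate_map_aut,
          iterate_map_smul_apply, smul_mul_assoc, smul_smul, smul_smul]
        congr 1
        ring
    have right_term : (qFactorial q m * qFactorial q n) • δ^[N] (δ a * b) =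
        ((∑ j ∈ Finset.range m, q ^ j) * qFactorial q N) • (σ^[n] (δ^[m] a) * δ^[n] b) := by
      rcases m with _ | m
      · obtain ha : δ a = 0 := ha
        simp [ha]
      · have h := ih (a := δ a) (m := m) ha hb (by lia)
        rw [qFactorial_succ, mul_assoc, mul_smul, h, smul_smul]
        rfl
    rw [hδ.iterate_succ_mul, smul_add, left_term, right_term, ← add_smul, qFactorial_succ, ← hN,
      Finset.sum_range_add]
    simp only [pow_add, ← Finset.mul_sum]
    congr 1
    ring

end IsQSkewDerivation

/-- `n` is the largest exponent with `δ^[n] a ≠ 0`. -/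
structure HasNilDegree (δ : R →ₗ[K] R) (n : ℕ) (a : R) : Prop where
  ne_zero : δ^[n] a ≠ 0
  eq_zero : δ^[n + 1] a = 0

theorem exists_hasNilDegree (ha : ∃ n : ℕ, δ^[n] a = 0) (ha0 : a ≠ 0) :
    ∃ n, HasNilDegree δ n a := by
  classical
  obtain ⟨n, hn⟩ := Nat.exists_eq_succ_of_ne_zero (n := Nat.find ha) fun h0 => ha0 (by
    simpa [h0] using Nat.find_spec ha)
  exact ⟨n, Nat.find_min ha (by lia), by simpa only [hn] using Nat.find_spec ha⟩

theorem HasNilDegree.mul [NoZeroDivisors R] (hδ : IsQSkewDerivation σ δ q)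
    (hq : ∀ n : ℕ, n ≠ 0 → q ^ n ≠ 1) (ha : HasNilDegree δ m a) (hb : HasNilDegree δ n b) :
    HasNilDegree δ (m + n) (a * b) where
  ne_zero h0 := by
    have h := hδ.qFactorial_smul_iterate_mul ha.eq_zero hb.eq_zero
    rw [h0, smul_zero, eq_comm, smul_eq_zero_iff_right (qFactorial_ne_zero hq _)] at h
    refine mul_ne_zero (fun h' => ha.ne_zero ?_) hb.ne_zero h
    exact (σ.injective.iterate n) (h'.trans (iterate_map_zero σ n).symm)
  eq_zero := hδ.iterate_mul_eq_zero (by lia) ha.eq_zero hb.eq_zero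

namespace IsQSkewDerivation

variable [NoZeroDivisors R]

theorem apply_eq_zero_of_apply_eq_mul (hδ : IsQSkewDerivation σ δ q)
    (hq : ∀ n : ℕ, n ≠ 0 → q ^ n ≠ 1) (ha : ∃ n : ℕ, δ^[n] a = 0) (hb : ∃ n : ℕ, δ^[n] b = 0)
    (hab : δ b = a * b) : δ b = 0 := by
  by_contra hne
  obtain ⟨m, hm⟩ := exists_hasNilDegree ha (by rintro rfl; exact hne (by simpa using hab))
  obtain ⟨n, hn⟩ := exists_hasNilDegree hb (by rintro rfl; exact hne (map_zero δ))
  have h := (hm.mul hδ hq hn).ne_zero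
  rw [← hab, ← Function.iterate_succ_apply] at h
  exact h (iterate_eq_zero_of_le (by lia) hn.eq_zero)

theorem apply_apply_mul_ne_zero (hδ : IsQSkewDerivation σ δ q)
    (hq : ∀ n : ℕ, n ≠ 0 → q ^ n ≠ 1) (ha : ∃ n : ℕ, δ^[n] a = 0) (hb : ∃ n : ℕ, δ^[n] b = 0)
    (ha' : δ a ≠ 0) (hb' : δ b ≠ 0) : δ (δ (a * b)) ≠ 0 := by
  intro h0
  obtain ⟨m, hm⟩ := exists_hasNilDegree ha (by rintro rfl; exact ha' (map_zero δ))
  obtain ⟨n, hn⟩ := exists_hasNilDegree hb (by rintro rfl; exact hb' (map_zero δ))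
  have hm0 : m ≠ 0 := by rintro rfl; exact ha' hm.eq_zero
  have hn0 : n ≠ 0 := by rintro rfl; exact hb' hn.eq_zero
  exact (hm.mul hδ hq hn).ne_zero (iterate_eq_zero_of_le (m := 2) (by lia) h0)

end IsQSkewDerivation

/-- The inner `σ`-derivation `a ↦ X * a - σ a * X`. -/
def innerSkewDer (σ : R ≃ₐ[K] R) (X : R) : R →ₗ[K] R :=
  LinearMap.mulLeft K X - LinearMap.mulRight K X ∘ₗ σ.toLinearMap

theorem innerSkewDer_apply (σ : R ≃ₐ[K] R) (X a : R) :
    innerSkewDer σ X a = X * a - σ a * X := rfl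

theorem mul_eq_aut_mul_add_innerSkewDer (σ : R ≃ₐ[K] R) (X a : R) :
    X * a = σ a * X + innerSkewDer σ X a := by
  rw [innerSkewDer_apply, add_sub_cancel]

theorem innerSkewDer_one (σ : R ≃ₐ[K] R) (X : R) : innerSkewDer σ X 1 = 0 := by
  simp [innerSkewDer_apply]

theorem innerSkewDer_mul (σ : R ≃ₐ[K] R) (X a b : R) :
    innerSkewDer σ X (a * b) = σ a * innerSkewDer σ X b + innerSkewDer σ X a * b := by
  simp only [innerSkewDer_apply, map_mul]
  noncomm_ring

theorem isQSkewDerivation_innerSkewDer {X : R} (hq : q ≠ 0) (hX : σ X = q • X) :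
    IsQSkewDerivation σ (innerSkewDer σ X) q⁻¹ where
  map_mul := innerSkewDer_mul σ X
  map_aut a := by
    simp only [innerSkewDer_apply, map_sub, map_mul, hX, mul_smul_comm, smul_mul_assoc,
      ← smul_sub, inv_smul_smul₀ hq]

end SkewDerivation

section Characters

variable {K : Type u} [Field K] {R : Type v} [Ring R] [Algebra K R] {r : ℕ}
  {act : Torus K r →* (R ≃ₐ[K] R)} {f g : Fin r → ℤ} {a b : R}

/-- The value at `ξ` of the character of the torus with exponent vector `f`. -/
def torusChar (f : Fin r → ℤ) (ξ : Torus K r) : K :=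
  ((∏ i, ξ i ^ f i : Kˣ) : K)

theorem torusChar_ne_zero (f : Fin r → ℤ) (ξ : Torus K r) : torusChar f ξ ≠ 0 :=
  Units.ne_zero _

theorem torusChar_zero (ξ : Torus K r) : torusChar 0 ξ = 1 := by
  simp [torusChar]

theorem torusChar_add (f g : Fin r → ℤ) (ξ : Torus K r) :
    torusChar (f + g) ξ = torusChar f ξ * torusChar g ξ := by
  simp only [torusChar, Pi.add_apply, zpow_add, Finset.prod_mul_distrib, Units.val_mul]

theorem torusChar_nsmul (n : ℕ) (f : Fin r → ℤ) (ξ : Torus K r) :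
    torusChar (n • f) ξ = torusChar f ξ ^ n := by
  induction n with
  | zero => simp [torusChar_zero]
  | succ n ih => rw [succ_nsmul, torusChar_add, ih, pow_succ]

namespace IsEigenWith

theorem apply (ha : IsEigenWith K act f a) (ξ : Torus K r) : act ξ a = torusChar f ξ • a := ha ξ

theorem zero (f : Fin r → ℤ) : IsEigenWith K act f (0 : R) := fun ξ => by simp

theorem one : IsEigenWith K act 0 (1 : R) := fun ξ => by simp

theorem mul (ha : IsEigenWith K act f a) (hb : IsEigenWith K act g b) :
    IsEigenWith K act (f + g) (a * b) := fun ξ => by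
  rw [map_mul, ha.apply, hb.apply, smul_mul_smul_comm, ← torusChar_add, torusChar]

theorem add (ha : IsEigenWith K act f a) (hb : IsEigenWith K act f b) :
    IsEigenWith K act f (a + b) := fun ξ => by
  rw [map_add, ha ξ, hb ξ, smul_add]

theorem smul (ha : IsEigenWith K act f a) (t : K) : IsEigenWith K act f (t • a) := fun ξ => by
  rw [map_smul, ha ξ, smul_comm]

theorem sub (ha : IsEigenWith K act f a) (hb : IsEigenWith K act f b) :
    IsEigenWith K act f (a - b) := fun ξ => by
  rw [map_sub, ha ξ, hb ξ, smul_sub]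

theorem sum {ι : Type*} {s : Finset ι} {c : ι → R} (hc : ∀ i ∈ s, IsEigenWith K act f (c i)) :
    IsEigenWith K act f (∑ i ∈ s, c i) := fun ξ => by
  rw [map_sum, Finset.smul_sum]
  exact Finset.sum_congr rfl fun i hi => hc i hi ξ

theorem pow (ha : IsEigenWith K act f a) (n : ℕ) : IsEigenWith K act (n • f) (a ^ n) := by
  induction n with
  | zero => simpa using one
  | succ n ih =>
    rw [succ_nsmul, pow_succ]
    exact ih.mul ha

theorem map_act (ha : IsEigenWith K act f a) (ξ : Torus K r) : IsEigenWith K act f (act ξ a) := by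
  rw [ha.apply]
  exact ha.smul _

theorem iterate_act (ha : IsEigenWith K act f a) (ξ : Torus K r) (n : ℕ) :
    (act ξ)^[n] a = torusChar f ξ ^ n • a := by
  induction n with
  | zero => simp
  | succ n ih => rw [Function.iterate_succ_apply', ih, map_smul, ha.apply, smul_smul, pow_succ]

theorem of_mul_right [NoZeroDivisors R] (hab : IsEigenWith K act f (a * b))
    (hb : IsEigenWith K act g b) (hb0 : b ≠ 0) : IsEigenWith K act (f - g) a := fun ξ => by
  have h : torusChar g ξ • (act ξ a * b) = torusChar g ξ • (torusChar (f - g) ξ • a * b) := by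
    rw [← mul_smul_comm, ← hb.apply, ← map_mul, hab.apply, smul_mul_assoc, smul_smul,
      ← torusChar_add, add_sub_cancel]
  exact mul_right_cancel₀ hb0 (smul_right_injective R (torusChar_ne_zero g ξ) h)

theorem of_mul_left [NoZeroDivisors R] (hab : IsEigenWith K act f (b * a))
    (hb : IsEigenWith K act g b) (hb0 : b ≠ 0) : IsEigenWith K act (f - g) a := fun ξ => by
  have h : torusChar g ξ • (b * act ξ a) = torusChar g ξ • (b * torusChar (f - g) ξ • a) := by
    rw [← smul_mul_assoc, ← hb.apply, ← map_mul, hab.apply, mul_smul_comm, smul_smul,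
      ← torusChar_add, add_sub_cancel]
  exact mul_left_cancel₀ hb0 (smul_right_injective R (torusChar_ne_zero g ξ) h)

theorem innerSkewDer (ha : IsEigenWith K act f a) (hb : IsEigenWith K act g b) (ξ : Torus K r) :
    IsEigenWith K act (f + g) (innerSkewDer (act ξ) b a) := by
  rw [innerSkewDer_apply]
  exact .sub (add_comm g f ▸ hb.mul ha) ((ha.map_act ξ).mul hb)

end IsEigenWith

end Characters

section OreStep

variable {K : Type u} [Field K] {R : Type v} [Ring R] [Algebra K R] {r : ℕ}
  {act : Torus K r →* (R ≃ₐ[K] R)} {A B : Subalgebra K R} {X a b : R} {h : Torus K r}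
  {χX : Fin r → ℤ}

/-- A two-sided ideal of `A` graded by the characters of the torus, given by its homogeneous
components `J χ`. -/
structure IsGradedIdeal (act : Torus K r →* (R ≃ₐ[K] R)) (A : Subalgebra K R)
    (J : (Fin r → ℤ) → Submodule K R) : Prop where
  mem : ∀ {χ a}, a ∈ J χ → a ∈ A
  isEigenWith : ∀ {χ a}, a ∈ J χ → IsEigenWith K act χ a
  mul_left_mem : ∀ {χ ψ a b}, a ∈ J χ → b ∈ A → IsEigenWith K act ψ b → b * a ∈ J (ψ + χ)
  mul_right_mem : ∀ {χ ψ a b}, a ∈ J χ → b ∈ A → IsEigenWith K act ψ b → a * b ∈ J (χ + ψ)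

/-- `B` is the Ore extension `A[X; σ, δ]` with `σ` the action of the torus element `h` and `δ`
locally nilpotent, and `X` is an eigenvector with character `χX` whose eigenvalue under `h` is not
a root of unity: one step of a quantum nilpotent algebra. -/
structure OreStep (act : Torus K r →* (R ≃ₐ[K] R)) (A B : Subalgebra K R) (X : R)
    (h : Torus K r) (χX : Fin r → ℤ) : Prop where
  act_mem : ∀ ξ, ∀ a ∈ A, act ξ a ∈ A
  le : A ≤ B
  gen_mem : X ∈ B
  der_mem : ∀ a ∈ A, innerSkewDer (act h) X a ∈ A
  der_nilpotent : ∀ a ∈ A, ∃ n : ℕ, (innerSkewDer (act h) X)^[n] a = 0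
  gen_isEigenWith : IsEigenWith K act χX X
  torusChar_pow_ne_one : ∀ n : ℕ, n ≠ 0 → torusChar χX h ^ n ≠ 1
  exists_degree : ∀ b ∈ B, ∃ n, b ∈ skewDegreeLT A X n
  indep : LeftIndependentPowers A X

namespace OreStep

theorem isOreGenerator (D : OreStep act A B X h χX) : IsOreGenerator A X (act h) where
  map_mem := D.act_mem h
  comm_mem := D.der_mem

theorem mem_of_mem_skewDegreeLT (D : OreStep act A B X h χX) {n : ℕ}
    (hb : b ∈ skewDegreeLT A X n) : b ∈ B :=
  skewDegreeLT_subset D.le D.gen_mem hb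

theorem mem_adjoin (D : OreStep act A B X h χX) (hb : b ∈ B) :
    b ∈ Algebra.adjoin K (insert X (A : Set R)) := by
  obtain ⟨n, hn⟩ := D.exists_degree b hb
  have hA : A ≤ Algebra.adjoin K (insert X (A : Set R)) := fun a ha =>
    Algebra.subset_adjoin (Set.mem_insert_of_mem X ha)
  exact skewDegreeLT_subset hA (Algebra.subset_adjoin (Set.mem_insert X _)) hn

theorem mul_ne_zero_of_mem (D : OreStep act A B X h χX)
    (hA : ∀ a ∈ A, ∀ b ∈ A, a ≠ 0 → b ≠ 0 → a * b ≠ 0) (ha : a ∈ B) (hb : b ∈ B) (ha0 : a ≠ 0)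
    (hb0 : b ≠ 0) : a * b ≠ 0 := by
  obtain ⟨_, han⟩ := D.exists_degree a ha
  obtain ⟨_, hbm⟩ := D.exists_degree b hb
  obtain ⟨n, f, -, haf, hf⟩ := exists_hasLeadingTerm_of_ne_zero han ha0
  obtain ⟨m, g, -, hbg, hg⟩ := exists_hasLeadingTerm_of_ne_zero hbm hb0
  refine D.indep.ne_zero (haf.mul D.isOreGenerator hbg) (hA f haf.coeff_mem _
    (D.isOreGenerator.iterate_mem n hbg.coeff_mem) hf fun e => hg ?_)
  exact ((act h).injective.iterate n) (e.trans (iterate_map_zero (act h) n).symm)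

theorem isQSkewDerivation (D : OreStep act A B X h χX) :
    IsQSkewDerivation (act h) (innerSkewDer (act h) X) (torusChar χX h)⁻¹ :=
  isQSkewDerivation_innerSkewDer (torusChar_ne_zero _ _) (D.gen_isEigenWith.apply h)

theorem inv_torusChar_pow_ne_one (D : OreStep act A B X h χX) (n : ℕ) (hn : n ≠ 0) :
    (torusChar χX h)⁻¹ ^ n ≠ 1 := by
  rw [inv_pow, inv_ne_one]
  exact D.torusChar_pow_ne_one n hn

variable [NoZeroDivisors R]

theorem der_eq_zero_of_der_eq_mul (D : OreStep act A B X h χX) (ha : a ∈ A) (hb : b ∈ A)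
    (hab : innerSkewDer (act h) X b = a * b) : innerSkewDer (act h) X b = 0 :=
  D.isQSkewDerivation.apply_eq_zero_of_apply_eq_mul D.inv_torusChar_pow_ne_one
    (D.der_nilpotent a ha) (D.der_nilpotent b hb) hab

theorem der_der_mul_ne_zero (D : OreStep act A B X h χX) (ha : a ∈ A) (hb : b ∈ A)
    (ha' : innerSkewDer (act h) X a ≠ 0) (hb' : innerSkewDer (act h) X b ≠ 0) :
    innerSkewDer (act h) X (innerSkewDer (act h) X (a * b)) ≠ 0 :=
  D.isQSkewDerivation.apply_apply_mul_ne_zero D.inv_torusChar_pow_ne_one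
    (D.der_nilpotent a ha) (D.der_nilpotent b hb) ha' hb'

end OreStep

end OreStep

section QCommuting

variable {K : Type u} [Field K] {R : Type v} [Ring R] [Algebra K R] {Z : Set R} {a b c : R}

/-- `a` and `b` commute up to a nonzero scalar. -/
def QCommute (K : Type u) [Field K] {R : Type v} [Ring R] [Algebra K R] (a b : R) : Prop :=
  ∃ q : K, q ≠ 0 ∧ a * b = q • (b * a)

/-- Any two elements of `Z` commute up to a nonzero scalar. -/
def QCommuting (K : Type u) [Field K] {R : Type v} [Ring R] [Algebra K R] (Z : Set R) : Prop :=
  ∀ a ∈ Z, ∀ b ∈ Z, QCommute K a b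

namespace QCommute

theorem symm (h : QCommute K a b) : QCommute K b a := by
  obtain ⟨q, hq, e⟩ := h
  exact ⟨q⁻¹, inv_ne_zero hq, by rw [e, inv_smul_smul₀ hq]⟩

theorem refl (a : R) : QCommute K a a := ⟨1, one_ne_zero, by simp⟩

theorem one_right (a : R) : QCommute K a 1 := ⟨1, one_ne_zero, by simp⟩

theorem mul_right (hb : QCommute K a b) (hc : QCommute K a c) : QCommute K a (b * c) := by
  obtain ⟨q, hq, e⟩ := hb
  obtain ⟨q', hq', e'⟩ := hc
  refine ⟨q * q', mul_ne_zero hq hq', ?_⟩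
  rw [← mul_assoc, e, smul_mul_assoc, mul_assoc, e', mul_smul_comm, smul_smul, mul_assoc]

theorem pow_right (h : QCommute K a b) (n : ℕ) : QCommute K a (b ^ n) := by
  induction n with
  | zero => simpa only [pow_zero] using one_right a
  | succ n ih => simpa only [pow_succ] using ih.mul_right h

theorem of_mem_closure (h : ∀ b ∈ Z, QCommute K a b) (hb : b ∈ Submonoid.closure Z) :
    QCommute K a b := by
  induction hb using Submonoid.closure_induction with
  | mem x hx => exact h x hx
  | one => exact one_right a
  | mul x y _ _ hx hy => exact hx.mul_right hy

end QCommute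

namespace QCommuting

theorem of_mem_closure (hZ : QCommuting K Z) (ha : a ∈ Submonoid.closure Z)
    (hb : b ∈ Submonoid.closure Z) : QCommute K a b :=
  .of_mem_closure (fun c hc => (QCommute.of_mem_closure (hZ c hc) ha).symm) hb

theorem insert (hZ : QCommuting K Z) (ha : ∀ b ∈ Z, QCommute K a b) :
    QCommuting K (insert a Z) := by
  rintro b (rfl | hb) c (rfl | hc)
  · exact .refl _
  · exact ha c hc
  · exact (ha b hb).symm
  · exact hZ b hb c hc

end QCommuting

theorem mem_adjoin_of_mem_closure (ha : a ∈ Submonoid.closure Z) : a ∈ Algebra.adjoin K Z :=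
  (Submonoid.closure_le (S := (Algebra.adjoin K Z).toSubmonoid)).2 Algebra.subset_adjoin ha

theorem exists_mul_eq_mul_of_mem_adjoin (ha : ∀ b ∈ Z, QCommute K a b)
    (hb : b ∈ Algebra.adjoin K Z) : ∃ b' ∈ Algebra.adjoin K Z, a * b = b' * a := by
  induction hb using Algebra.adjoin_induction with
  | mem x hx =>
    obtain ⟨q, -, e⟩ := ha x hx
    exact ⟨q • x, Subalgebra.smul_mem _ (Algebra.subset_adjoin hx) _, by rw [e, smul_mul_assoc]⟩
  | algebraMap t => exact ⟨_, Subalgebra.algebraMap_mem _ t, (Algebra.commutes t a).symm⟩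
  | add x y _ _ hx hy =>
    obtain ⟨x', hx', ex⟩ := hx
    obtain ⟨y', hy', ey⟩ := hy
    exact ⟨x' + y', add_mem hx' hy', by rw [mul_add, ex, ey, add_mul]⟩
  | mul x y _ _ hx hy =>
    obtain ⟨x', hx', ex⟩ := hx
    obtain ⟨y', hy', ey⟩ := hy
    exact ⟨x' * y', mul_mem hx' hy', by rw [← mul_assoc, ex, mul_assoc, ey, mul_assoc]⟩

theorem exists_mul_mem_adjoin (hZ : QCommuting K Z) {W : Submonoid R}
    (hW : W ≤ Submonoid.closure Z) {S : Set R}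
    (hS : ∀ a ∈ S, ∃ w ∈ W, w * a ∈ Algebra.adjoin K Z) (ha : a ∈ Algebra.adjoin K S) :
    ∃ w ∈ W, w * a ∈ Algebra.adjoin K Z := by
  have hW' {w : R} (hw : w ∈ W) : w ∈ Algebra.adjoin K Z := mem_adjoin_of_mem_closure (hW hw)
  induction ha using Algebra.adjoin_induction with
  | mem x hx => exact hS x hx
  | algebraMap t => exact ⟨1, one_mem _, by rw [one_mul]; exact Subalgebra.algebraMap_mem _ t⟩
  | add x y _ _ hx hy =>
    obtain ⟨v, hv, hvx⟩ := hx
    obtain ⟨w, hw, hwy⟩ := hy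
    obtain ⟨q, -, e⟩ := hZ.of_mem_closure (hW hv) (hW hw)
    refine ⟨v * w, mul_mem hv hw, ?_⟩
    rw [mul_add, mul_assoc v w y, e, smul_mul_assoc, mul_assoc]
    exact add_mem (Subalgebra.smul_mem _ (mul_mem (hW' hw) hvx) _) (mul_mem (hW' hv) hwy)
  | mul x y _ _ hx hy =>
    obtain ⟨v, hv, hvx⟩ := hx
    obtain ⟨w, hw, hwy⟩ := hy
    obtain ⟨g, hg, e⟩ := exists_mul_eq_mul_of_mem_adjoin
      (fun b hb => hZ.of_mem_closure (hW hw) (Submonoid.subset_closure hb)) hvx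
    refine ⟨w * v, mul_mem hw hv, ?_⟩
    rw [mul_assoc w v, ← mul_assoc v x, ← mul_assoc w, e, mul_assoc]
    exact mul_mem hg hwy

theorem exists_mul_apply_eq_mul (hfin : Z.Finite) (hZ : QCommuting K Z) (d : R → R)
    (hd : ∀ y ∈ Z, ∃ w ∈ Submonoid.closure Z, w * d y ∈ Algebra.adjoin K Z) :
    ∃ w ∈ Submonoid.closure Z, ∀ y ∈ Z, ∃ e ∈ Algebra.adjoin K Z, w * d y = e * y := by
  suffices H : ∀ T ⊆ Z, ∃ w ∈ Submonoid.closure Z, ∀ y ∈ T, ∃ e ∈ Algebra.adjoin K Z,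
      w * d y = e * y from H Z subset_rfl
  intro T hT
  induction T, hfin.subset hT using Set.Finite.induction_on with
  | empty => exact ⟨1, one_mem _, by simp⟩
  | @insert y T _ _ ih =>
    obtain ⟨hy, hT⟩ := Set.insert_subset_iff.1 hT
    obtain ⟨w, hw, hwT⟩ := ih hT
    obtain ⟨v, hv, hvy⟩ := hd y hy
    obtain ⟨g, hg, eg⟩ := exists_mul_eq_mul_of_mem_adjoin (hZ y hy) hvy
    have hyv : y * v ∈ Submonoid.closure Z := mul_mem (Submonoid.subset_closure hy) hv
    obtain ⟨q, -, e⟩ := hZ.of_mem_closure hyv hw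
    refine ⟨y * v * w, mul_mem hyv hw, ?_⟩
    rintro z (rfl | hz)
    · refine ⟨q • (w * g), Subalgebra.smul_mem _ (mul_mem (mem_adjoin_of_mem_closure hw) hg) _, ?_⟩
      rw [e, smul_mul_assoc, smul_mul_assoc, mul_assoc w g, ← eg, mul_assoc, mul_assoc z]
    · obtain ⟨g', hg', eg'⟩ := hwT z hz
      exact ⟨y * v * g', mul_mem (mem_adjoin_of_mem_closure hyv) hg', by simp only [mul_assoc, eg']⟩

end QCommuting

section EigenLabels

theorem eq_zero_of_sum_eq_zero_of_eigen_pencil {K : Type u} [Field K] {V : Type v}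
    [AddCommGroup V] [Module K V] {ι : Type*} (L M : ι → V →ₗ[K] V)
    (hM : ∀ i, Function.Injective (M i)) (s : Finset (ι → K)) (g : (ι → K) → V)
    (hg : ∀ ω ∈ s, ∀ i, L i (g ω) = ω i • M i (g ω)) (h0 : ∑ ω ∈ s, g ω = 0) :
    ∀ ω ∈ s, g ω = 0 := by
  classical
  induction s using Finset.induction_on generalizing g with
  | empty => simp
  | insert ω₁ s h₁ ih =>
    have hs : ∀ ω ∈ s, g ω = 0 := by
      intro ω hω
      obtain ⟨i, hi⟩ := Function.ne_iff.1 (ne_of_mem_of_not_mem hω h₁)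
      have hL : L i (∑ ω ∈ insert ω₁ s, g ω) = ∑ ω ∈ insert ω₁ s, ω i • M i (g ω) := by
        rw [map_sum]
        exact Finset.sum_congr rfl fun ω hω => hg ω hω i
      have hsum : M i (∑ ω ∈ s, (ω i - ω₁ i) • g ω) = 0 := by
        calc M i (∑ ω ∈ s, (ω i - ω₁ i) • g ω)
            = ∑ ω ∈ insert ω₁ s, (ω i - ω₁ i) • M i (g ω) := by
              simp [Finset.sum_insert h₁]
          _ = L i (∑ ω ∈ insert ω₁ s, g ω) - ω₁ i • M i (∑ ω ∈ insert ω₁ s, g ω) := by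
              simp only [hL, map_sum, Finset.smul_sum, ← Finset.sum_sub_distrib, sub_smul]
          _ = 0 := by simp [h0]
      refine (smul_eq_zero.1 (ih (fun ω => (ω i - ω₁ i) • g ω) (fun ω hω j => ?_)
        (hM i (hsum.trans (map_zero _).symm)) ω hω)).resolve_left (sub_ne_zero.2 hi)
      rw [map_smul, map_smul, hg ω (Finset.mem_insert_of_mem hω), smul_comm]
    rw [Finset.sum_insert h₁, Finset.sum_eq_zero hs, add_zero] at h0
    exact Finset.forall_mem_insert _ _ _ |>.2 ⟨h0, hs⟩

variable {K : Type u} [Field K] {R : Type v} [Ring R] [Algebra K R] {r : ℕ}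
  {act : Torus K r →* (R ≃ₐ[K] R)} {Y : Set R} {v : R}

theorem exists_isEigenWith_of_mem_closure (hom : ∀ y ∈ Y, ∃ f, IsEigenWith K act f y)
    (hv : v ∈ Submonoid.closure Y) : ∃ f, IsEigenWith K act f v := by
  induction hv using Submonoid.closure_induction with
  | mem x hx => exact hom x hx
  | one => exact ⟨0, .one⟩
  | mul x y _ _ hx hy =>
    obtain ⟨f, hf⟩ := hx
    obtain ⟨g, hg⟩ := hy
    exact ⟨f + g, hf.mul hg⟩

theorem ne_zero_of_mem_closure [NoZeroDivisors R] [Nontrivial R] (ne : ∀ y ∈ Y, y ≠ 0)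
    (hv : v ∈ Submonoid.closure Y) : v ≠ 0 :=
  nonZeroDivisors.ne_zero <| (Submonoid.closure_le (S := nonZeroDivisors R)).2
    (fun y hy => mem_nonZeroDivisors_of_ne_zero (ne y hy)) hv

theorem act_mem_adjoin (hom : ∀ y ∈ Y, ∃ f, IsEigenWith K act f y)
    (hv : v ∈ Algebra.adjoin K Y) (ξ : Torus K r) : act ξ v ∈ Algebra.adjoin K Y := by
  refine Algebra.adjoin_le (S := (Algebra.adjoin K Y).comap (act ξ : R →ₐ[K] R)) (fun y hy => ?_) hv
  obtain ⟨f, hf⟩ := hom y hy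
  change act ξ y ∈ Algebra.adjoin K Y
  rw [hf.apply]
  exact Subalgebra.smul_mem _ (Algebra.subset_adjoin hy) _

/-- The elements `g` of the algebra generated by `Y` with `y * g = ω y • (g * y)` for all `y` in
`Y`. -/
def qWeightSpace (Y : Set R) (ω : Y → K) : Submodule K R where
  carrier := {g | g ∈ Algebra.adjoin K Y ∧ ∀ y : Y, (y : R) * g = ω y • (g * y)}
  add_mem' := by
    rintro a b ⟨ha, ha'⟩ ⟨hb, hb'⟩
    exact ⟨add_mem ha hb, fun y => by rw [mul_add, ha', hb', add_mul, smul_add]⟩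
  zero_mem' := ⟨zero_mem _, by simp⟩
  smul_mem' := by
    rintro t a ⟨ha, ha'⟩
    exact ⟨Subalgebra.smul_mem _ ha _,
      fun y => by rw [mul_smul_comm, ha', smul_mul_assoc, smul_comm]⟩

theorem exists_qWeightSpace_decomposition (qc : QCommuting K Y) (hv : v ∈ Algebra.adjoin K Y) :
    ∃ f : (Y → K) →₀ R, (∀ ω, f ω ∈ qWeightSpace Y ω) ∧ f.sum (fun _ x => x) = v := by
  rw [← Submodule.mem_iSup_iff_exists_finsupp]
  rw [← Subalgebra.mem_toSubmodule, Algebra.adjoin_eq_span] at hv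
  refine Submodule.span_le.2 (fun w hw => ?_) hv
  choose q _ hq using fun y : Y => qc.of_mem_closure (Submonoid.subset_closure y.2) hw
  exact Submodule.mem_iSup_of_mem q ⟨mem_adjoin_of_mem_closure hw, hq⟩

variable {s : Finset (Y → K)} {F G : (Y → K) → R}

theorem eq_of_sum_eq_sum_of_mem_qWeightSpace [NoZeroDivisors R] (ne : ∀ y ∈ Y, y ≠ 0)
    (hF : ∀ ω ∈ s, F ω ∈ qWeightSpace Y ω) (hG : ∀ ω ∈ s, G ω ∈ qWeightSpace Y ω)
    (h : ∑ ω ∈ s, F ω = ∑ ω ∈ s, G ω) : ∀ ω ∈ s, F ω = G ω := by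
  have hdiff := eq_zero_of_sum_eq_zero_of_eigen_pencil (fun y : Y => LinearMap.mulLeft K (y : R))
    (fun y : Y => LinearMap.mulRight K (y : R))
    (fun y _ _ hab => mul_right_cancel₀ (ne y y.2) hab) s (F - G)
    (fun ω hω y => (sub_mem (hF ω hω) (hG ω hω)).2 y)
    (by simp only [Pi.sub_apply, Finset.sum_sub_distrib, h, sub_self])
  exact fun ω hω => sub_eq_zero.1 (hdiff ω hω)

theorem isEigenWith_of_sum_of_mem_qWeightSpace [NoZeroDivisors R] (ne : ∀ y ∈ Y, y ≠ 0)
    (hom : ∀ y ∈ Y, ∃ f, IsEigenWith K act f y) (hF : ∀ ω ∈ s, F ω ∈ qWeightSpace Y ω)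
    {χ : Fin r → ℤ} (h : IsEigenWith K act χ (∑ ω ∈ s, F ω)) :
    ∀ ω ∈ s, IsEigenWith K act χ (F ω) := by
  refine fun ω hω ξ => eq_of_sum_eq_sum_of_mem_qWeightSpace (F := fun ω => act ξ (F ω))
    (G := fun ω => torusChar χ ξ • F ω) ne (fun ω hω => ⟨act_mem_adjoin hom (hF ω hω).1 ξ, ?_⟩)
    (fun ω hω => Submodule.smul_mem _ _ (hF ω hω)) ?_ ω hω
  · intro y
    obtain ⟨f, hf⟩ := hom y y.2
    have hy := congrArg (act ξ) ((hF ω hω).2 y)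
    rw [map_mul, map_smul, map_mul, hf.apply, smul_mul_assoc, mul_smul_comm, smul_comm (ω y)] at hy
    exact smul_right_injective R (torusChar_ne_zero f ξ) hy
  · rw [← map_sum, h.apply, Finset.smul_sum]

end EigenLabels

section QCommutingGenerator

variable {K : Type u} [Field K] {R : Type v} [Ring R] [Algebra K R] {r : ℕ}
  {act : Torus K r →* (R ≃ₐ[K] R)} {A B : Subalgebra K R} {X w g : R} {h : Torus K r}
  {χX χ ψ : Fin r → ℤ} {Y : Set R} {p : Y → K} {E : Y → R} {F : Y → (Y → K) → R}
  {s : Finset (Y → K)} {ω : Y → K}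

theorem qCommute_mul_gen_sub {e : R} (hp : ∀ y : Y, p y ≠ 0 ∧ w * act h y = p y • (y * w))
    (he : ∀ y : Y, e * y - p y • (y * e) = w * innerSkewDer (act h) X y) :
    ∀ y ∈ Y, QCommute K (w * X - e) y := by
  intro y hy
  obtain ⟨hp0, hpy⟩ := hp ⟨y, hy⟩
  refine ⟨p ⟨y, hy⟩, hp0, ?_⟩
  rw [sub_mul, mul_assoc, mul_eq_aut_mul_add_innerSkewDer (act h) X y, mul_add, ← he ⟨y, hy⟩,
    ← mul_assoc, hpy, smul_mul_assoc, mul_assoc, mul_sub, smul_sub]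
  abel

variable [NoZeroDivisors R]

/-- Both `w` and `g` intertwine the same automorphism of the algebra generated by `Y` with its
inclusion; evaluating at `w` and at `g` compares `w * act h g` with `g * w` in two ways. -/
theorem torusChar_eq_of_mem_qWeightSpace (hw : w ∈ Algebra.adjoin K Y) (hw0 : w ≠ 0)
    (hχ : IsEigenWith K act χ w) (hp : ∀ y : Y, w * act h y = p y • (y * w))
    (hpω : ∀ y, p y * ω y = 1) (hg : g ∈ qWeightSpace Y ω) (hg0 : g ≠ 0)
    (hψ : IsEigenWith K act ψ g) : torusChar ψ h = torusChar χ h := by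
  have twist : ∀ a ∈ Algebra.adjoin K Y, ∃ a', w * act h a = a' * w ∧ a' * g = g * a := by
    intro a ha
    induction ha using Algebra.adjoin_induction with
    | mem y hy =>
      refine ⟨p ⟨y, hy⟩ • y, by rw [hp ⟨y, hy⟩, smul_mul_assoc], ?_⟩
      rw [smul_mul_assoc, hg.2 ⟨y, hy⟩, smul_smul, hpω, one_smul]
    | algebraMap t =>
      exact ⟨algebraMap K R t, by rw [AlgEquiv.commutes, Algebra.commutes t w],
        Algebra.commutes t g⟩
    | add a b _ _ ha hb =>
      obtain ⟨a', ha, ha'⟩ := ha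
      obtain ⟨b', hb, hb'⟩ := hb
      exact ⟨a' + b', by rw [map_add, mul_add, ha, hb, add_mul], by rw [add_mul, ha', hb', mul_add]⟩
    | mul a b _ _ ha hb =>
      obtain ⟨a', ha, ha'⟩ := ha
      obtain ⟨b', hb, hb'⟩ := hb
      exact ⟨a' * b', by rw [map_mul, ← mul_assoc, ha, mul_assoc, hb, mul_assoc],
        by rw [mul_assoc, hb', ← mul_assoc, ha', mul_assoc]⟩
  obtain ⟨g', hwg, hgg⟩ := twist g hg.1
  obtain ⟨w', hww, hwg'⟩ := twist w hw
  obtain rfl : g' = g := mul_right_cancel₀ hg0 hgg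
  rw [hχ.apply, mul_smul_comm, ← smul_mul_assoc] at hww
  obtain rfl : torusChar χ h • w = w' := mul_right_cancel₀ hw0 hww
  rw [hψ.apply, ← hwg', mul_smul_comm, smul_mul_assoc] at hwg
  exact smul_left_injective K (mul_ne_zero hw0 hg0) hwg

theorem qWeight_relation (qc : QCommuting K Y) (ne : ∀ y ∈ Y, y ≠ 0)
    (hp : ∀ y : Y, w * act h y = p y • (y * w))
    (hE : ∀ y : Y, w * innerSkewDer (act h) X y = E y * y)
    (hF : ∀ y ω, F y ω ∈ qWeightSpace Y ω) (hEF : ∀ y, E y = ∑ ω ∈ s, F y ω) (i j : Y) :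
    ∀ ω ∈ s, (p i * ω i - 1) • F j ω = (p j * ω j - 1) • F i ω := by
  refine eq_of_sum_eq_sum_of_mem_qWeightSpace ne (fun ω _ => Submodule.smul_mem _ _ (hF j ω))
    (fun ω _ => Submodule.smul_mem _ _ (hF i ω)) ?_
  obtain ⟨q, -, e⟩ := qc i i.2 j j.2
  have sum_mul (i j : Y) : (∑ ω ∈ s, (p i * ω i - 1) • F j ω) * i =
      p i • (i * E j) - E j * i := by
    simp only [hEF, Finset.mul_sum, Finset.sum_mul, Finset.smul_sum, ← Finset.sum_sub_distrib]
    refine Finset.sum_congr rfl fun ω _ => ?_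
    rw [(hF j ω).2 i, smul_mul_assoc, sub_smul, mul_smul, one_smul]
  have der_mul (i j : Y) : w * innerSkewDer (act h) X ((i : R) * j) =
      p i • (i * E j * j) + E i * (i * j) := by
    rw [innerSkewDer_mul, mul_add, ← mul_assoc, hp, smul_mul_assoc, mul_assoc, hE, ← mul_assoc w,
      hE, mul_assoc (E i), mul_assoc]
  have hij := der_mul i j
  rw [e, map_smul, mul_smul_comm, der_mul j i] at hij
  refine mul_right_cancel₀ (mul_ne_zero (ne i i.2) (ne j j.2)) ?_
  calc (∑ ω ∈ s, (p i * ω i - 1) • F j ω) * ((i : R) * j)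
      = p i • (i * E j * j) - q • (E j * (j * i)) := by
        rw [← mul_assoc, sum_mul, sub_mul, smul_mul_assoc, mul_assoc (E j), e, mul_smul_comm]
    _ = q • (p j • (j * E i * i)) - E i * ((i : R) * j) := by
        rw [sub_eq_sub_iff_add_eq_add, e, ← smul_add, ← hij]
    _ = (∑ ω ∈ s, (p j * ω j - 1) • F i ω) * ((i : R) * j) := by
        rw [e, mul_smul_comm, mul_smul_comm, ← mul_assoc (∑ ω ∈ s, _), sum_mul, sub_mul,
          smul_mul_assoc, smul_sub, mul_assoc (E i)]

theorem exists_qWeight_potential (D : OreStep act A B X h χX) (qc : QCommuting K Y)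
    (ne : ∀ y ∈ Y, y ≠ 0) (hw : w ∈ Algebra.adjoin K Y) (hw0 : w ≠ 0)
    (hχ : IsEigenWith K act χ w) (hp : ∀ y : Y, w * act h y = p y • (y * w))
    (hE : ∀ y : Y, w * innerSkewDer (act h) X y = E y * y)
    (hF : ∀ y ω, F y ω ∈ qWeightSpace Y ω) (hEF : ∀ y, E y = ∑ ω ∈ s, F y ω)
    (hFχ : ∀ y, ∀ ω ∈ s, IsEigenWith K act (χ + χX) (F y ω)) (hω : ω ∈ s) :
    ∃ d ∈ qWeightSpace Y ω, IsEigenWith K act (χ + χX) d ∧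
      ∀ y, F y ω = (1 - p y * ω y) • d := by
  by_cases hres : ∃ i, p i * ω i ≠ 1
  · obtain ⟨i, hi⟩ := hres
    have hi' : 1 - p i * ω i ≠ 0 := sub_ne_zero.2 hi.symm
    refine ⟨(1 - p i * ω i)⁻¹ • F i ω, Submodule.smul_mem _ _ (hF i ω), (hFχ i ω hω).smul _,
      fun j => smul_right_injective R hi' ?_⟩
    dsimp only
    rw [smul_comm, smul_inv_smul₀ hi', ← neg_sub, neg_smul,
      qWeight_relation qc ne hp hE hF hEF i j ω hω, ← neg_smul, neg_sub]
  · push Not at hres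
    refine ⟨0, zero_mem _, .zero _, fun j => ?_⟩
    rw [smul_zero]
    by_contra hj
    have heq := torusChar_eq_of_mem_qWeightSpace hw hw0 hχ hp hres (hF j ω) hj (hFχ j ω hω)
    rw [torusChar_add, mul_eq_left₀ (torusChar_ne_zero _ _)] at heq
    exact D.torusChar_pow_ne_one 1 one_ne_zero (by rw [pow_one, heq])

/-- Write `w * δ y = E y * y` and split `E y` into weight components. Since `δ` is a skew
derivation, the components satisfy the relations of a `1`-cocycle; it is a coboundary because `h`
does not fix `X`. Subtracting the potential from `w * X` gives an element commuting with `Y` up to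
scalars. -/
theorem OreStep.exists_qCommute (D : OreStep act A B X h χX) [Nontrivial R] (fin : Y.Finite)
    (qc : QCommuting K Y) (hom : ∀ y ∈ Y, ∃ f, IsEigenWith K act f y) (ne : ∀ y ∈ Y, y ≠ 0)
    (sub : Y ⊆ A) (ore : ∀ a ∈ A, ∃ w ∈ Submonoid.closure Y, w * a ∈ Algebra.adjoin K Y) :
    ∃ w ∈ Submonoid.closure Y, ∃ χ, IsEigenWith K act χ w ∧ ∃ e ∈ Algebra.adjoin K Y,
      IsEigenWith K act (χ + χX) e ∧ ∀ y ∈ Y, QCommute K (w * X - e) y := by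
  classical
  have : Fintype Y := fin.fintype
  obtain ⟨w, hw, hwY⟩ := exists_mul_apply_eq_mul fin qc (innerSkewDer (act h) X)
    fun y hy => ore _ (D.der_mem y (sub hy))
  obtain ⟨χ, hχ⟩ := exists_isEigenWith_of_mem_closure hom hw
  choose E hEm hE using fun y : Y => hwY y y.2
  have hp (y : Y) : ∃ p : K, p ≠ 0 ∧ w * act h (y : R) = p • (y * w) := by
    obtain ⟨q, hq, e⟩ := qc.of_mem_closure hw (Submonoid.subset_closure y.2)
    obtain ⟨f, hf⟩ := hom y y.2
    exact ⟨torusChar f h * q, mul_ne_zero (torusChar_ne_zero _ _) hq,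
      by rw [hf.apply, mul_smul_comm, e, smul_smul]⟩
  choose p hp using hp
  choose F hF hFs using fun y : Y => exists_qWeightSpace_decomposition qc (hEm y)
  let s : Finset (Y → K) := Finset.univ.biUnion fun y : Y => (F y).support
  have hEF (y : Y) : E y = ∑ ω ∈ s, F y ω := by
    rw [← hFs y, Finsupp.sum]
    exact Finset.sum_subset (Finset.subset_biUnion_of_mem (fun y => (F y).support)
      (Finset.mem_univ y)) fun ω _ hω => Finsupp.notMem_support_iff.1 hω
  have hEχ (y : Y) : IsEigenWith K act (χ + χX) (∑ ω ∈ s, F y ω) := by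
    obtain ⟨f, hf⟩ := hom y y.2
    have hEy := (hE y ▸ hχ.mul (hf.innerSkewDer D.gen_isEigenWith h)).of_mul_right hf (ne y y.2)
    rwa [hEF, add_left_comm, add_sub_cancel_left] at hEy
  have hFχ (y : Y) := isEigenWith_of_sum_of_mem_qWeightSpace ne hom (fun ω _ => hF y ω) (hEχ y)
  choose! d hd hdχ hFd using fun ω (hω : ω ∈ s) => exists_qWeight_potential D qc ne
    (mem_adjoin_of_mem_closure hw) (ne_zero_of_mem_closure ne hw) hχ (fun y => (hp y).2) hE hF hEF
    hFχ hω
  refine ⟨w, hw, χ, hχ, ∑ ω ∈ s, d ω, sum_mem fun ω hω => (hd ω hω).1, .sum hdχ,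
    qCommute_mul_gen_sub hp fun y => ?_⟩
  rw [hE, hEF, Finset.sum_mul, Finset.mul_sum, Finset.smul_sum, Finset.sum_mul,
    ← Finset.sum_sub_distrib]
  refine Finset.sum_congr rfl fun ω hω => ?_
  rw [(hd ω hω).2 y, hFd ω hω, smul_mul_assoc, sub_smul, one_smul, smul_smul]

end QCommutingGenerator

section NormalElements

variable {K : Type u} [Field K] {R : Type v} [Ring R] [Algebra K R] {A : Subalgebra K R}
  {S : Set R} {a a' c p u v : R}

/-- Divisibility in the subalgebra `A`, with the divisor on the left as in `IsPrimeIn`. -/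
def DvdIn (A : Subalgebra K R) (u a : R) : Prop := ∃ d ∈ A, a = u * d

theorem DvdIn.smul (h : DvdIn A u a) (t : K) : DvdIn A u (t • a) := by
  obtain ⟨d, hd, rfl⟩ := h
  exact ⟨t • d, Subalgebra.smul_mem _ hd t, (mul_smul_comm t u d).symm⟩

theorem DvdIn.mul_right (h : DvdIn A u a) (hv : v ∈ A) : DvdIn A u (a * v) := by
  obtain ⟨d, hd, rfl⟩ := h
  exact ⟨d * v, mul_mem hd hv, mul_assoc u d v⟩

/-- `u` is a normal element of `A`: it lies in `A` and `A u = u A`. -/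
structure IsNormalIn (A : Subalgebra K R) (u : R) : Prop where
  mem : u ∈ A
  exists_mul_eq_mul_left : ∀ a ∈ A, ∃ b ∈ A, a * u = u * b
  exists_mul_eq_mul_right : ∀ a ∈ A, ∃ b ∈ A, u * a = b * u

namespace IsNormalIn

theorem one (A : Subalgebra K R) : IsNormalIn A 1 :=
  ⟨one_mem _, fun a ha => ⟨a, ha, by simp⟩, fun a ha => ⟨a, ha, by simp⟩⟩

theorem mul (hu : IsNormalIn A u) (hv : IsNormalIn A v) : IsNormalIn A (u * v) := by
  refine ⟨mul_mem hu.mem hv.mem, fun a ha => ?_, fun a ha => ?_⟩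
  · obtain ⟨b, hb, e⟩ := hu.exists_mul_eq_mul_left a ha
    obtain ⟨b', hb', e'⟩ := hv.exists_mul_eq_mul_left b hb
    exact ⟨b', hb', by rw [← mul_assoc, e, mul_assoc, e', mul_assoc]⟩
  · obtain ⟨b, hb, e⟩ := hv.exists_mul_eq_mul_right a ha
    obtain ⟨b', hb', e'⟩ := hu.exists_mul_eq_mul_right b hb
    exact ⟨b', hb', by rw [mul_assoc, e, ← mul_assoc, e', mul_assoc]⟩

theorem of_mem_closure (hS : ∀ p ∈ S, IsNormalIn A p) (hv : v ∈ Submonoid.closure S) :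
    IsNormalIn A v := by
  induction hv using Submonoid.closure_induction with
  | mem x hx => exact hS x hx
  | one => exact one A
  | mul x y _ _ hx hy => exact hx.mul hy

theorem pow (hu : IsNormalIn A u) (n : ℕ) : IsNormalIn A (u ^ n) :=
  of_mem_closure (S := {u}) (fun _ h => h ▸ hu)
    (pow_mem (Submonoid.subset_closure (Set.mem_singleton u)) n)

theorem dvdIn_mul_left (hu : IsNormalIn A u) (ha : DvdIn A u a) (hv : v ∈ A) :
    DvdIn A u (v * a) := by
  obtain ⟨d, hd, rfl⟩ := ha
  obtain ⟨v', hv', e⟩ := hu.exists_mul_eq_mul_left v hv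
  exact ⟨v' * d, mul_mem hv' hd, by rw [← mul_assoc, e, mul_assoc]⟩

theorem dvdIn_of_mul_eq_mul [NoZeroDivisors R] (hu : IsNormalIn A u) (hu0 : u ≠ 0)
    (hup : QCommute K u p) (e : u * a = a' * u) (hd : DvdIn A p a') : DvdIn A p a := by
  obtain ⟨d, hd, rfl⟩ := hd
  obtain ⟨d', hd', e'⟩ := hu.exists_mul_eq_mul_left d hd
  obtain ⟨q, -, e''⟩ := hup.symm
  refine ⟨q • d', Subalgebra.smul_mem _ hd' _, ?_⟩
  apply mul_left_cancel₀ hu0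
  rw [e, mul_assoc, e', ← mul_assoc, e'', smul_mul_assoc, mul_smul_comm, mul_smul_comm, mul_assoc]

end IsNormalIn

namespace IsPrimeIn

theorem mem (hp : IsPrimeIn K A p) : p ∈ A := hp.1

theorem ne_zero (hp : IsPrimeIn K A p) : p ≠ 0 := hp.2.1

theorem isNormalIn (hp : IsPrimeIn K A p) : IsNormalIn A p :=
  ⟨hp.1, hp.2.2.2.1, hp.2.2.2.2.1⟩

theorem dvdIn_or_dvdIn (hp : IsPrimeIn K A p) (ha : a ∈ A) (hc : c ∈ A) (h : DvdIn A p (a * c)) :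
    DvdIn A p a ∨ DvdIn A p c :=
  hp.2.2.2.2.2 a ha c hc h

end IsPrimeIn

theorem dvdIn_of_dvdIn_mul_of_mem_closure [NoZeroDivisors R] (hS : ∀ p ∈ S, IsPrimeIn K A p)
    (hc : c ∈ A) (hSc : ∀ p ∈ S, ¬ DvdIn A p c) (hv : v ∈ Submonoid.closure S) :
    ∀ a ∈ A, DvdIn A v (a * c) → DvdIn A v a := by
  induction hv using Submonoid.closure_induction_left with
  | one => exact fun a ha _ => ⟨a, ha, (one_mul a).symm⟩
  | mul_left p hp w hw ih =>
    rintro a ha ⟨d, hd, e⟩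
    have hwA : w ∈ A := (IsNormalIn.of_mem_closure (fun q hq => (hS q hq).isNormalIn) hw).mem
    rw [mul_assoc] at e
    obtain ⟨b, hb, rfl⟩ := ((hS p hp).dvdIn_or_dvdIn ha hc ⟨_, mul_mem hwA hd, e⟩).resolve_right
      (hSc p hp)
    rw [mul_assoc] at e
    obtain ⟨d', hd', rfl⟩ := ih b hb ⟨d, hd, mul_left_cancel₀ (hS p hp).ne_zero e⟩
    exact ⟨d', hd', (mul_assoc p w d').symm⟩

theorem QCommuting.exists_prod_eq_smul_prod {l l' : List R} (hS : QCommuting K S)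
    (hl : ∀ p ∈ l, p ∈ S) (h : l.Perm l') : ∃ t : K, t ≠ 0 ∧ l.prod = t • l'.prod := by
  induction h with
  | nil => exact ⟨1, one_ne_zero, by simp⟩
  | cons p _ ih =>
    obtain ⟨t, ht, e⟩ := ih fun q hq => hl q (List.mem_cons_of_mem p hq)
    exact ⟨t, ht, by rw [List.prod_cons, e, List.prod_cons, mul_smul_comm]⟩
  | swap p q l =>
    obtain ⟨t, ht, e⟩ := hS q (hl q (by simp)) p (hl p (by simp))
    exact ⟨t, ht, by simp only [List.prod_cons, ← mul_assoc, e, smul_mul_assoc]⟩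
  | trans h _ ih ih' =>
    obtain ⟨t, ht, e⟩ := ih hl
    obtain ⟨t', ht', e'⟩ := ih' fun q hq => hl q (h.mem_iff.2 hq)
    exact ⟨t * t', mul_ne_zero ht ht', by rw [e, e', smul_smul]⟩

theorem exists_mul_of_mem_closure_of_ne_one (hv : v ∈ Submonoid.closure S) (hv1 : v ≠ 1) :
    ∃ p ∈ S, ∃ w ∈ Submonoid.closure S, v = p * w := by
  induction hv using Submonoid.closure_induction_left with
  | one => exact absurd rfl hv1
  | mul_left p hp w hw _ => exact ⟨p, hp, w, hw, rfl⟩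

end NormalElements

section PrimeSystem

variable {K : Type u} [Field K] {R : Type v} [Ring R] [Algebra K R] {r : ℕ}
  {act : Torus K r →* (R ≃ₐ[K] R)} {A : Subalgebra K R} {Y L : Set R} {v : R}

/-- The data carried along the tower of Ore extensions: a finite set `Y` of `q`-commuting
homogeneous elements of `A`, over which every element of `A` is a polynomial after clearing a
denominator, and a set `L ⊆ Y` of pairwise nonassociate primes of `A`, products of which lie in
every nonzero graded ideal. -/
structure PrimeSystem (act : Torus K r →* (R ≃ₐ[K] R)) (A : Subalgebra K R) (Y L : Set R) :
    Prop where
  finite : Y.Finite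
  subset : L ⊆ Y
  subset_algebra : Y ⊆ A
  ne_zero : ∀ y ∈ Y, y ≠ 0
  homogeneous : ∀ y ∈ Y, ∃ f, IsEigenWith K act f y
  qCommuting : QCommuting K Y
  exists_denominator : ∀ a ∈ A, ∃ w ∈ Submonoid.closure Y, w * a ∈ Algebra.adjoin K Y
  isPrimeIn : ∀ p ∈ L, IsPrimeIn K A p
  eq_of_dvdIn : ∀ p ∈ L, ∀ p' ∈ L, DvdIn A p' p → p = p'
  exists_mem_gradedIdeal : ∀ J, IsGradedIdeal act A J → ∀ χ, ∀ a ∈ J χ, a ≠ 0 →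
    ∃ v ∈ Submonoid.closure L, ∃ θ, v ∈ J θ
  exists_algebraMap_eq : ∀ a ∈ A, ∀ b ∈ A, a * b = 1 → ∃ t : K, a = algebraMap K R t

namespace PrimeSystem

theorem closure_mem (I : PrimeSystem act A Y L) (hv : v ∈ Submonoid.closure Y) : v ∈ A :=
  (Submonoid.closure_le (S := A.toSubmonoid)).2 I.subset_algebra hv

theorem adjoin_mem (I : PrimeSystem act A Y L) (hv : v ∈ Algebra.adjoin K Y) : v ∈ A :=
  Algebra.adjoin_le I.subset_algebra hv

theorem closure_mono (I : PrimeSystem act A Y L) (hv : v ∈ Submonoid.closure L) :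
    v ∈ Submonoid.closure Y :=
  Submonoid.closure_mono I.subset hv

theorem isNormalIn (I : PrimeSystem act A Y L) (hv : v ∈ Submonoid.closure L) : IsNormalIn A v :=
  .of_mem_closure (fun p hp => (I.isPrimeIn p hp).isNormalIn) hv

theorem closure_ne_zero [NoZeroDivisors R] [Nontrivial R] (I : PrimeSystem act A Y L)
    (hv : v ∈ Submonoid.closure Y) : v ≠ 0 :=
  ne_zero_of_mem_closure I.ne_zero hv

end PrimeSystem

end PrimeSystem

section SaturatedIdeal

variable {K : Type u} [Field K] {R : Type v} [Ring R] [Algebra K R] {A B : Subalgebra K R}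
  {Y : Set R} {P : Submodule K R} {b f z : R}

/-- A two-sided ideal `P` of `B` which meets the subalgebra `A` trivially and from which products of
elements of `Y` can be cancelled on the left. -/
structure IsSaturatedIdeal (A B : Subalgebra K R) (Y : Set R) (P : Submodule K R) : Prop where
  mem : ∀ {f}, f ∈ P → f ∈ B
  mul_left_mem : ∀ {f b}, f ∈ P → b ∈ B → b * f ∈ P
  mul_right_mem : ∀ {f b}, f ∈ P → b ∈ B → f * b ∈ P
  eq_zero_of_mem : ∀ {a}, a ∈ A → a ∈ P → a = 0
  mem_of_mul_mem : ∀ {v f}, v ∈ Submonoid.closure Y → f ∈ B → v * f ∈ P → f ∈ P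

/-- The elements of `B` which become left multiples of `z` after inverting `Y`. -/
def leftSaturation (B : Subalgebra K R) {Y : Set R} (hY : Y ⊆ B) (qc : QCommuting K Y) (z : R) :
    Submodule K R where
  carrier := {f | f ∈ B ∧ ∃ v ∈ Submonoid.closure Y, ∃ b ∈ B, v * f = b * z}
  add_mem' := by
    rintro f g ⟨hf, v, hv, b, hb, e⟩ ⟨hg, v', hv', b', hb', e'⟩
    obtain ⟨q, -, e''⟩ := qc.of_mem_closure hv hv'
    have closure_le : Submonoid.closure Y ≤ B.toSubmonoid := Submonoid.closure_le.2 hY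
    refine ⟨add_mem hf hg, v * v', mul_mem hv hv', q • (v' * b) + v * b',
      add_mem (Subalgebra.smul_mem _ (mul_mem (closure_le hv') hb) _)
        (mul_mem (closure_le hv) hb'), ?_⟩
    rw [mul_add, add_mul, mul_assoc v b', ← e', smul_mul_assoc, mul_assoc v' b, ← e, e'',
      smul_mul_assoc, mul_assoc, ← mul_assoc v v' g, e'', smul_mul_assoc]
  zero_mem' := ⟨zero_mem _, 1, one_mem _, 0, zero_mem _, by simp⟩
  smul_mem' := by
    rintro t f ⟨hf, v, hv, b, hb, e⟩
    exact ⟨Subalgebra.smul_mem _ hf t, v, hv, t • b, Subalgebra.smul_mem _ hb t,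
      by rw [mul_smul_comm, e, smul_mul_assoc]⟩

section LeftSaturation

variable {hY : Y ⊆ B} {qc : QCommuting K Y}

theorem self_mem_leftSaturation (hz : z ∈ B) : z ∈ leftSaturation B hY qc z :=
  ⟨hz, 1, one_mem _, 1, one_mem _, rfl⟩

theorem mem_leftSaturation_of_mul_mem {v : R} (hv : v ∈ Submonoid.closure Y) (hf : f ∈ B)
    (hvf : v * f ∈ leftSaturation B hY qc z) : f ∈ leftSaturation B hY qc z := by
  obtain ⟨-, u, hu, b, hb, e⟩ := hvf
  exact ⟨hf, u * v, mul_mem hu hv, b, hb, by rw [mul_assoc, e]⟩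

variable (hzB : z ∈ B) (hz : ∀ y ∈ Y, QCommute K z y)
  (ore : ∀ b ∈ B, ∃ w ∈ Submonoid.closure Y, w * b ∈ Algebra.adjoin K (insert z Y))

include hzB hz ore

theorem mul_left_mem_leftSaturation (hf : f ∈ leftSaturation B hY qc z) (hb : b ∈ B) :
    b * f ∈ leftSaturation B hY qc z := by
  obtain ⟨hfB, v, hv, b', hb', e⟩ := hf
  obtain ⟨u, hu, hg⟩ := ore b hb
  have hvZ (c : R) (hc : c ∈ insert z Y) : QCommute K v c :=
    (qc.insert hz).of_mem_closure (Submonoid.closure_mono (Set.subset_insert z Y) hv)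
      (Submonoid.subset_closure hc)
  obtain ⟨g', hg', e'⟩ := exists_mul_eq_mul_of_mem_adjoin hvZ hg
  have hg'B : g' ∈ B := Algebra.adjoin_le (Set.insert_subset hzB hY) hg'
  refine ⟨mul_mem hb hfB, v * u, mul_mem hv hu, g' * b', mul_mem hg'B hb', ?_⟩
  rw [mul_assoc g', ← e, ← mul_assoc g', ← e']
  simp only [mul_assoc]

theorem mul_right_mem_leftSaturation (hf : f ∈ leftSaturation B hY qc z) (hb : b ∈ B) :
    f * b ∈ leftSaturation B hY qc z := by
  obtain ⟨hfB, v, hv, b', hb', e⟩ := hf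
  obtain ⟨u, hu, hg⟩ := ore b hb
  have hzb : z * b ∈ leftSaturation B hY qc z := by
    obtain ⟨g', hg', e'⟩ := exists_mul_eq_mul_of_mem_adjoin (a := z)
      (by rintro c (rfl | hc); exacts [.refl _, hz c hc]) hg
    obtain ⟨q, -, e''⟩ := (QCommute.of_mem_closure hz hu).symm
    refine ⟨mul_mem hzB hb, u, hu, q • g', Subalgebra.smul_mem _
      (Algebra.adjoin_le (Set.insert_subset hzB hY) hg') _, ?_⟩
    rw [smul_mul_assoc, ← e', ← mul_assoc, e'', smul_mul_assoc, mul_assoc]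
  refine mem_leftSaturation_of_mul_mem hv (mul_mem hfB hb) ?_
  rw [← mul_assoc, e, mul_assoc]
  exact mul_left_mem_leftSaturation hzB hz ore hzb hb'

end LeftSaturation

variable {r : ℕ} {act : Torus K r →* (R ≃ₐ[K] R)} {X e w : R} {h : Torus K r} {χX : Fin r → ℤ}
  {L : Set R} [NoZeroDivisors R]

theorem OreStep.degree_lt_of_mul_mem {m n : ℕ} {a c g : R} (D : OreStep act A B X h χX)
    (hf : HasLeadingTerm A X m a f) (hg : HasLeadingTerm A X n c g) (ha : a ≠ 0) (hc : c ≠ 0)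
    {k : ℕ} (hfg : f * g ∈ skewDegreeLT A X k) : m + n < k :=
  D.indep.degree_lt (hf.mul D.isOreGenerator hg) (mul_ne_zero ha fun h0 =>
    hc ((act h).injective.iterate m (h0.trans (iterate_map_zero (act h) m).symm))) hfg

theorem OreStep.eq_zero_of_mul_mem {z : R} (D : OreStep act A B X h χX) (hb : b ∈ B)
    (hz : HasLeadingTerm A X 1 w z) (hw : w ≠ 0) (hbz : b * z ∈ A) : b = 0 := by
  by_contra hb0
  obtain ⟨n, hn⟩ := D.exists_degree b hb
  obtain ⟨m, c, -, hc, hc0⟩ := exists_hasLeadingTerm_of_ne_zero hn hb0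
  have := D.degree_lt_of_mul_mem hc hz hc0 hw (mem_skewDegreeLT_one.2 hbz)
  lia

theorem OreStep.eq_zero_of_mem_leftSaturation [Nontrivial R] (D : OreStep act A B X h χX)
    (hY : Y ⊆ A) (ne : ∀ y ∈ Y, y ≠ 0) {qc : QCommuting K Y} (hw : w ∈ A) (hw0 : w ≠ 0)
    (he : e ∈ A) {a : R} (ha : a ∈ A)
    (haP : a ∈ leftSaturation B (hY.trans D.le) qc (w * X - e)) : a = 0 := by
  obtain ⟨-, v, hv, b, hb, e'⟩ := haP
  have hvA : v ∈ A := (Submonoid.closure_le (S := A.toSubmonoid)).2 hY hv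
  have hb0 : b = 0 := D.eq_zero_of_mul_mem hb (.mul_sub X hw he) hw0 (e' ▸ mul_mem hvA ha)
  rw [hb0, zero_mul] at e'
  exact (mul_eq_zero.1 e').resolve_left (ne_zero_of_mem_closure ne hv)

theorem OreStep.exists_isSaturatedIdeal [Nontrivial R] (D : OreStep act A B X h χX)
    (I : PrimeSystem act A Y L) : ∃ P, IsSaturatedIdeal A B Y P ∧
      ∃ w ∈ A, w ≠ 0 ∧ ∃ χ, IsEigenWith K act χ w ∧
        ∃ e ∈ A, IsEigenWith K act (χ + χX) e ∧ w * X - e ∈ P := by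
  obtain ⟨w, hw, χ, hχ, e, he, heχ, hq⟩ := D.exists_qCommute I.finite I.qCommuting I.homogeneous
    I.ne_zero I.subset_algebra I.exists_denominator
  have hw0 := I.closure_ne_zero hw
  have hwA := I.closure_mem hw
  have heA := I.adjoin_mem he
  have hzB : w * X - e ∈ B := sub_mem (mul_mem (D.le hwA) D.gen_mem) (D.le heA)
  have hYZ := Algebra.adjoin_mono (R := K) (Set.subset_insert (w * X - e) Y)
  have ore (b : R) (hb : b ∈ B) :
      ∃ v ∈ Submonoid.closure Y, v * b ∈ Algebra.adjoin K (insert (w * X - e) Y) := by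
    refine exists_mul_mem_adjoin (I.qCommuting.insert hq)
      (Submonoid.closure_mono (Set.subset_insert _ _)) ?_ (D.mem_adjoin hb)
    rintro a (rfl | ha)
    · refine ⟨w, hw, ?_⟩
      simpa only [sub_add_cancel] using
        add_mem (Algebra.subset_adjoin (Set.mem_insert (w * a - e) Y)) (hYZ he)
    · obtain ⟨v, hv, hva⟩ := I.exists_denominator a ha
      exact ⟨v, hv, hYZ hva⟩
  refine ⟨leftSaturation B (I.subset_algebra.trans D.le) I.qCommuting (w * X - e), ?_,
    w, hwA, hw0, χ, hχ, e, heA, heχ, self_mem_leftSaturation hzB⟩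
  exact
    { mem := fun hf => hf.1
      mul_left_mem := mul_left_mem_leftSaturation hzB hq ore
      mul_right_mem := mul_right_mem_leftSaturation hzB hq ore
      eq_zero_of_mem := D.eq_zero_of_mem_leftSaturation I.subset_algebra I.ne_zero hwA hw0 heA
      mem_of_mul_mem := mem_leftSaturation_of_mul_mem }

end SaturatedIdeal

section ReducedRelation

variable {K : Type u} [Field K] {R : Type v} [Ring R] [Algebra K R] {r : ℕ}
  {act : Torus K r →* (R ≃ₐ[K] R)} {A B : Subalgebra K R} {X c f u : R} {h : Torus K r}
  {χX θ : Fin r → ℤ} {Y L : Set R} {P : Submodule K R}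

/-- The coefficients `a` of character `θ` of the homogeneous elements `a * X - b` of `P`, with `a`
and `b` in `A`. -/
def linearCoeff (act : Torus K r →* (R ≃ₐ[K] R)) (A : Subalgebra K R) (X : R) (χX : Fin r → ℤ)
    (P : Submodule K R) (θ : Fin r → ℤ) : Submodule K R where
  carrier := {a | a ∈ A ∧ IsEigenWith K act θ a ∧
    ∃ b ∈ A, IsEigenWith K act (θ + χX) b ∧ a * X - b ∈ P}
  add_mem' := by
    rintro a a' ⟨ha, haθ, b, hb, hbθ, hab⟩ ⟨ha', haθ', b', hb', hbθ', hab'⟩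
    refine ⟨add_mem ha ha', haθ.add haθ', b + b', add_mem hb hb', hbθ.add hbθ', ?_⟩
    rw [add_mul, add_sub_add_comm]
    exact add_mem hab hab'
  zero_mem' := ⟨zero_mem _, .zero _, 0, zero_mem _, .zero _, by simp⟩
  smul_mem' := by
    rintro t a ⟨ha, haθ, b, hb, hbθ, hab⟩
    refine ⟨Subalgebra.smul_mem _ ha t, haθ.smul t, t • b, Subalgebra.smul_mem _ hb t,
      hbθ.smul t, ?_⟩
    rw [smul_mul_assoc, ← smul_sub]
    exact P.smul_mem t hab

theorem OreStep.isGradedIdeal_linearCoeff (D : OreStep act A B X h χX)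
    (hP : IsSaturatedIdeal A B Y P) : IsGradedIdeal act A (linearCoeff act A X χX P) where
  mem ha := ha.1
  isEigenWith ha := ha.2.1
  mul_left_mem := by
    rintro χ ψ a d ⟨ha, haχ, b, hb, hbχ, hab⟩ hd hψ
    refine ⟨mul_mem hd ha, hψ.mul haχ, d * b, mul_mem hd hb, add_assoc ψ χ χX ▸ hψ.mul hbχ, ?_⟩
    rw [mul_assoc, ← mul_sub]
    exact hP.mul_left_mem hab (D.le hd)
  mul_right_mem := by
    rintro χ ψ a d ⟨ha, haχ, b, hb, hbχ, hab⟩ hd hψ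
    have hadχ : IsEigenWith K act (χ + ψ + χX) (a * innerSkewDer (act h) X d) :=
      add_assoc χ ψ χX ▸ haχ.mul (hψ.innerSkewDer D.gen_isEigenWith h)
    have hbdχ : IsEigenWith K act (χ + ψ + χX) (b * d) := add_right_comm χ χX ψ ▸ hbχ.mul hψ
    refine ⟨mul_mem ha hd, haχ.mul hψ,
      (torusChar ψ h)⁻¹ • (b * d - a * innerSkewDer (act h) X d),
      Subalgebra.smul_mem _ (sub_mem (mul_mem hb hd) (mul_mem ha (D.der_mem d hd))) _,
      (hbdχ.sub hadχ).smul _, ?_⟩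
    convert P.smul_mem (torusChar ψ h)⁻¹ (hP.mul_right_mem hab (D.le hd)) using 1
    rw [sub_mul, mul_assoc a X d, mul_eq_aut_mul_add_innerSkewDer (act h) X d, hψ.apply, mul_add,
      smul_mul_assoc, mul_smul_comm, add_sub_assoc, smul_add,
      inv_smul_smul₀ (torusChar_ne_zero ψ h), ← mul_assoc, ← neg_sub (b * d), smul_neg,
      sub_eq_add_neg]

variable [NoZeroDivisors R]

theorem mem_linearCoeff_of_mul_mem {p v d : R} {φ : Fin r → ℤ} (D : OreStep act A B X h χX)
    (hP : IsSaturatedIdeal A B Y P) (hp : p ∈ Y) (hpφ : IsEigenWith K act φ p) (hp0 : p ≠ 0)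
    (hv : v ∈ A) (hd : d ∈ A) (hpv : IsEigenWith K act θ (p * v))
    (hpd : IsEigenWith K act (θ + χX) (p * d)) (hvd : p * v * X - p * d ∈ P) :
    v ∈ linearCoeff act A X χX P (θ - φ) := by
  refine ⟨hv, hpv.of_mul_left hpφ hp0, d, hd, ?_, ?_⟩
  · exact add_sub_right_comm θ χX φ ▸ hpd.of_mul_left hpφ hp0
  · refine hP.mem_of_mul_mem (Submonoid.subset_closure hp)
      (sub_mem (mul_mem (D.le hv) D.gen_mem) (D.le hd)) ?_
    rwa [mul_sub, ← mul_assoc]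

/-- Take a product of as few elements of `L` as possible: a factor dividing `c` could be
cancelled. -/
theorem OreStep.exists_reduced_relation [Nontrivial R] (D : OreStep act A B X h χX)
    (I : PrimeSystem act A Y L) (hP : IsSaturatedIdeal A B Y P) {a : R}
    (ha : a ∈ linearCoeff act A X χX P θ) (ha0 : a ≠ 0) :
    ∃ c ∈ A, ∃ u ∈ Submonoid.closure {p ∈ L | ¬ DvdIn A p c}, ∃ θ,
      IsEigenWith K act θ u ∧ IsEigenWith K act (θ + χX) c ∧ u * X - c ∈ P := by
  classical
  obtain ⟨v, hv, φ, hvφ⟩ :=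
    I.exists_mem_gradedIdeal _ (D.isGradedIdeal_linearCoeff hP) θ a ha ha0
  obtain ⟨l₀, hl₀, rfl⟩ := Submonoid.exists_list_of_mem_closure hv
  have exists_list : ∃ n : ℕ, ∃ l : List R, l.length = n ∧ (∀ p ∈ l, p ∈ L) ∧
      ∃ θ, l.prod ∈ linearCoeff act A X χX P θ := ⟨_, l₀, rfl, hl₀, φ, hvφ⟩
  obtain ⟨l, hlen, hl, θ, -, hlθ, c, hc, hcθ, hz⟩ := Nat.find_spec exists_list
  refine ⟨c, hc, l.prod, Submonoid.list_prod_mem _ fun p hp =>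
    Submonoid.subset_closure ⟨hl p hp, ?_⟩, θ, hlθ, hcθ, hz⟩
  rintro ⟨d, hd, rfl⟩
  have hpY := I.subset (hl p hp)
  obtain ⟨t, ht, e⟩ := I.qCommuting.exists_prod_eq_smul_prod (fun q hq => I.subset (hl q hq))
    (List.perm_cons_erase hp)
  rw [List.prod_cons, ← inv_smul_eq_iff₀ ht] at e
  have hl' : ∀ q ∈ l.erase p, q ∈ L := fun q hq => hl q (List.mem_of_mem_erase hq)
  obtain ⟨φ, hφ⟩ := I.homogeneous p hpY
  refine Nat.find_min exists_list (m := (l.erase p).length) ?_ ⟨_, rfl, hl', θ - φ,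
    mem_linearCoeff_of_mul_mem (d := t⁻¹ • d) D hP hpY hφ (I.ne_zero p hpY)
      (I.isNormalIn (Submonoid.list_prod_mem _ fun q hq => Submonoid.subset_closure (hl' q hq))).mem
      (Subalgebra.smul_mem _ hd _) (e ▸ hlθ.smul _) ?_ ?_⟩
  · rw [← hlen, List.length_erase_of_mem hp]
    exact Nat.sub_lt (List.length_pos_of_mem hp) one_pos
  · rw [mul_smul_comm]
    exact hcθ.smul _
  · rw [← e, mul_smul_comm, smul_mul_assoc, ← smul_sub]
    exact P.smul_mem _ hz

section Reduction

variable [Nontrivial R] (D : OreStep act A B X h χX) (I : PrimeSystem act A Y L)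
  (hP : IsSaturatedIdeal A B Y P) (hc : c ∈ A)
  (hu : u ∈ Submonoid.closure {p ∈ L | ¬ DvdIn A p c}) (hz : u * X - c ∈ P)

include D I hP hc hu hz

theorem exists_pow_mul_pow_sub_mem (n : ℕ) :
    ∃ a ∈ A, u ^ n * X ^ n - a ∈ P ∧ ∀ p ∈ L, ¬ DvdIn A p c → ¬ DvdIn A p a := by
  induction n with
  | zero =>
    exact ⟨1, one_mem _, by simp, fun p _ hpc hp => hpc (one_mul c ▸ hp.mul_right hc)⟩
  | succ n ih =>
    obtain ⟨a, ha, hna, hpa⟩ := ih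
    have hunL := pow_mem (Submonoid.closure_mono (Set.sep_subset L _) hu) n
    have hun := I.isNormalIn hunL
    obtain ⟨c', hc', e⟩ := hun.exists_mul_eq_mul_right c hc
    refine ⟨c' * a, mul_mem hc' ha, ?_, fun p hp hpc hpd => ?_⟩
    · have expand : u ^ (n + 1) * X ^ (n + 1) - c' * a =
          u ^ n * (u * X - c) * X ^ n + c' * (u ^ n * X ^ n - a) := by
        rw [mul_sub c', ← mul_assoc c', ← e, pow_succ, pow_succ']
        noncomm_ring
      rw [expand]
      exact add_mem (hP.mul_right_mem (hP.mul_left_mem hz (D.le hun.mem)) (pow_mem D.gen_mem n))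
        (hP.mul_left_mem hna (D.le hc'))
    · have hqp : QCommute K (u ^ n) p := I.qCommuting.of_mem_closure (I.closure_mono hunL)
        (Submonoid.subset_closure (I.subset hp))
      refine ((I.isPrimeIn p hp).dvdIn_or_dvdIn hc' ha hpd).elim (fun hpc' => hpc ?_) (hpa p hp hpc)
      exact hun.dvdIn_of_mul_eq_mul (I.closure_ne_zero (I.closure_mono hunL)) hqp e hpc'

theorem exists_pow_mul_sub_mem (n : ℕ) (hf : f ∈ skewDegreeLT A X (n + 1)) :
    ∃ a ∈ A, u ^ n * f - a ∈ P := by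
  have huL := I.isNormalIn (Submonoid.closure_mono (Set.sep_subset L _) hu)
  induction n generalizing f with
  | zero => exact ⟨f, mem_skewDegreeLT_one.1 hf, by simp⟩
  | succ n ih =>
    obtain ⟨g, hg, a, ha, rfl⟩ := mem_skewDegreeLT_succ.1 hf
    obtain ⟨b, hb, hgb⟩ := ih hg
    obtain ⟨d, hd, hXd, -⟩ := exists_pow_mul_pow_sub_mem D I hP hc hu hz (n + 1)
    obtain ⟨a', ha', e⟩ := (I.isNormalIn (pow_mem (Submonoid.closure_mono (Set.sep_subset L _) hu)
      (n + 1))).exists_mul_eq_mul_right a ha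
    refine ⟨u * b + a' * d, add_mem (mul_mem huL.mem hb) (mul_mem ha' hd), ?_⟩
    have expand : u ^ (n + 1) * (g + a * X ^ (n + 1)) - (u * b + a' * d) =
        u * (u ^ n * g - b) + a' * (u ^ (n + 1) * X ^ (n + 1) - d) := by
      rw [mul_sub a', ← mul_assoc a', ← e, pow_succ' u]
      noncomm_ring
    rw [expand]
    exact add_mem (hP.mul_left_mem hgb (D.le huL.mem)) (hP.mul_left_mem hXd (D.le ha'))

theorem dvdIn_leadingCoeff_of_mem {n : ℕ} {a : R} (hf : f ∈ P)
    (hlead : HasLeadingTerm A X (n + 1) a f) : DvdIn A u a := by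
  have huL := Submonoid.closure_mono (Set.sep_subset L _) hu
  have hun := I.isNormalIn (pow_mem huL (n + 1))
  obtain ⟨d, hd, hXd, hpd⟩ := exists_pow_mul_pow_sub_mem D I hP hc hu hz (n + 1)
  obtain ⟨b, hb, hfb⟩ := exists_pow_mul_sub_mem D I hP hc hu hz n hlead.sub_mem
  obtain ⟨a', ha', e⟩ := hun.exists_mul_eq_mul_right a hlead.coeff_mem
  have huA := (I.isNormalIn huL).mem
  have eq_zero : a' * d + u * b = 0 := by
    refine hP.eq_zero_of_mem (add_mem (mul_mem ha' hd) (mul_mem huA hb)) ?_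
    have expand : a' * d + u * b = u ^ (n + 1) * f - (u * (u ^ n * (f - a * X ^ (n + 1)) - b) +
        a' * (u ^ (n + 1) * X ^ (n + 1) - d)) := by
      rw [mul_sub a', ← mul_assoc a', ← e, pow_succ' u]
      noncomm_ring
    rw [expand]
    exact sub_mem (hP.mul_left_mem hf (D.le hun.mem)) (add_mem (hP.mul_left_mem hfb (D.le huA))
      (hP.mul_left_mem hXd (D.le ha')))
  have hua' : DvdIn A u a' := dvdIn_of_dvdIn_mul_of_mem_closure (fun p hp => I.isPrimeIn p hp.1) hd
    (fun p hp => hpd p hp.1 hp.2) hu a' ha'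
    ⟨-b, neg_mem hb, by rw [mul_neg]; exact eq_neg_of_add_eq_zero_left eq_zero⟩
  have huY := I.closure_mono huL
  exact hun.dvdIn_of_mul_eq_mul (I.closure_ne_zero (pow_mem huY _))
    (I.qCommuting.of_mem_closure (pow_mem huY _) huY) e hua'

theorem exists_eq_mul_of_mem_of_reduced (hθ : IsEigenWith K act θ u) (hf : f ∈ P) :
    ∃ b ∈ B, f = b * (u * X - c) := by
  have huL := I.isNormalIn (Submonoid.closure_mono (Set.sep_subset L _) hu)
  obtain ⟨n, hn⟩ := D.exists_degree f (hP.mem hf)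
  induction n generalizing f with
  | zero => exact ⟨0, zero_mem _, by rw [mem_skewDegreeLT_zero.1 hn, zero_mul]⟩
  | succ n ih =>
    rcases n with _ | n
    · exact ⟨0, zero_mem _, by rw [hP.eq_zero_of_mem (mem_skewDegreeLT_one.1 hn) hf, zero_mul]⟩
    obtain ⟨a, ha⟩ := exists_hasLeadingTerm_of_mem_skewDegreeLT_succ hn
    obtain ⟨d, hd, rfl⟩ := dvdIn_leadingCoeff_of_mem D I hP hc hu hz hf ha
    obtain ⟨d', hd', e⟩ := huL.exists_mul_eq_mul_right d hd
    have hg : HasLeadingTerm A X n ((torusChar θ h ^ n)⁻¹ • d')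
        ((torusChar θ h ^ n)⁻¹ • d' * X ^ n) := .mul_pow (Subalgebra.smul_mem _ hd' _) X n
    have hgz := hg.mul D.isOreGenerator (.mul_sub X huL.mem hc)
    rw [hθ.iterate_act, smul_mul_smul_comm,
      inv_mul_cancel₀ (pow_ne_zero n (torusChar_ne_zero θ h)), one_smul, ← e] at hgz
    have hgB := D.mem_of_mem_skewDegreeLT hg.mem_skewDegreeLT
    obtain ⟨b, hb, hfb⟩ := ih (sub_mem hf (hP.mul_left_mem hz hgB))
      (by simpa using sub_mem ha.sub_mem hgz.sub_mem)
    exact ⟨_, add_mem hb hgB, by rw [add_mul, ← hfb, sub_add_cancel]⟩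

end Reduction

end ReducedRelation

section LinearPrime

variable {K : Type u} [Field K] {R : Type v} [Ring R] [Algebra K R] {r : ℕ}
  {act : Torus K r →* (R ≃ₐ[K] R)} {A B : Subalgebra K R} {X a c f u z : R} {h : Torus K r}
  {χX θ : Fin r → ℤ} {Y L : Set R} {P : Submodule K R}

/-- A homogeneous prime `u * X - c` of the Ore extension `B` of `A`, of degree one in `X`, whose
leading coefficient `u` is a product of elements of `L`, together with its commutation rules with
`X` and with the elements of `A`. -/
structure LinearPrime (act : Torus K r →* (R ≃ₐ[K] R)) (A B : Subalgebra K R) (X : R)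
    (h : Torus K r) (χX : Fin r → ℤ) (L : Set R) (u c : R) (θ : Fin r → ℤ) : Prop where
  mem_closure : u ∈ Submonoid.closure L
  const_mem : c ∈ A
  isEigenWith : IsEigenWith K act θ u
  const_isEigenWith : IsEigenWith K act (θ + χX) c
  mul_gen : (u * X - c) * X = (torusChar θ h)⁻¹ • (X * (u * X - c))
  mul_eq_mul : ∀ a ∈ A, ∀ a' ∈ A, u * act h a = a' * u → (u * X - c) * a = a' * (u * X - c)
  isPrimeIn : IsPrimeIn K B (u * X - c)

theorem LeftIndependentPowers.linear_unique {a' b b' : R} (hX : LeftIndependentPowers A X)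
    (ha : a ∈ A) (hb : b ∈ A) (ha' : a' ∈ A) (hb' : b' ∈ A) (e : a * X - b = a' * X - b') :
    a = a' ∧ b = b' := by
  have h' : HasLeadingTerm A X 1 a' (a * X - b) := by
    rw [e]
    exact .mul_sub X ha' hb'
  obtain rfl := hX.coeff_unique (.mul_sub X ha hb) h'
  exact ⟨rfl, sub_right_injective e⟩

theorem IsSaturatedIdeal.isPrimeIn [NoZeroDivisors R] [Nontrivial R]
    (hP : IsSaturatedIdeal A B Y P) (hAB : A ≤ B) (hz : z ∈ P) (hz0 : z ≠ 0)
    (hzB : IsNormalIn B z) (hPz : ∀ f ∈ P, ∃ b ∈ B, f = b * z) (hu : IsNormalIn A u)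
    (hu0 : u ≠ 0) (huY : u ∈ Submonoid.closure Y)
    (hred : ∀ f ∈ B, ∃ n : ℕ, ∃ a ∈ A, u ^ n * f - a ∈ P) : IsPrimeIn K B z := by
  have dvdIn_of_mem {f : R} (hf : f ∈ P) : DvdIn B z f := by
    obtain ⟨b, hb, rfl⟩ := hPz f hf
    exact hzB.exists_mul_eq_mul_left b hb
  have dvdIn_of_pow_mul_mem {f : R} {n : ℕ} (hf : f ∈ B) (h : u ^ n * f ∈ P) : DvdIn B z f :=
    dvdIn_of_mem (hP.mem_of_mul_mem (pow_mem huY n) hf h)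
  refine ⟨hzB.mem, hz0, ?_, hzB.exists_mul_eq_mul_left, hzB.exists_mul_eq_mul_right, ?_⟩
  · rintro ⟨v, hv, e, -⟩
    exact one_ne_zero (hP.eq_zero_of_mem (one_mem A) (e ▸ hP.mul_right_mem hz hv))
  · rintro f hf g hg ⟨d, hd, e⟩
    have hfg : f * g ∈ P := e ▸ hP.mul_right_mem hz hd
    obtain ⟨m, a, ha, haf⟩ := hred f hf
    obtain ⟨n, b, hb, hbg⟩ := hred g hg
    obtain ⟨a', ha', e'⟩ := (hu.pow n).exists_mul_eq_mul_right a ha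
    have hag : a * g ∈ P := by
      convert sub_mem (hP.mul_left_mem hfg (pow_mem (hAB hu.mem) m)) (hP.mul_right_mem haf hg)
        using 1
      noncomm_ring
    have hab : a' * b ∈ P := by
      convert sub_mem (hP.mul_left_mem hag (pow_mem (hAB hu.mem) n))
        (hP.mul_left_mem hbg (hAB ha')) using 1
      rw [mul_sub, ← mul_assoc, e', mul_assoc, sub_sub_cancel]
    rcases mul_eq_zero.1 (hP.eq_zero_of_mem (mul_mem ha' hb) hab) with rfl | rfl
    · rw [zero_mul] at e'
      obtain rfl := (mul_eq_zero.1 e').resolve_left (pow_ne_zero n hu0)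
      exact .inl (dvdIn_of_pow_mul_mem hf (sub_zero (u ^ m * f) ▸ haf))
    · exact .inr (dvdIn_of_pow_mul_mem hg (sub_zero (u ^ n * g) ▸ hbg))

namespace OreStep

theorem exists_act_eq (D : OreStep act A B X h χX) (ha : a ∈ A) : ∃ a' ∈ A, act h a' = a :=
  ⟨act h⁻¹ a, D.act_mem _ a ha, by
    rw [← AlgEquiv.mul_apply, ← map_mul, mul_inv_cancel, map_one, AlgEquiv.one_apply]⟩

theorem isNormalIn (D : OreStep act A B X h χX) (hz : z ∈ B) (hzX : QCommute K z X)
    (hl : ∀ a ∈ A, ∃ b ∈ A, a * z = z * b) (hr : ∀ a ∈ A, ∃ b ∈ A, z * a = b * z) :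
    IsNormalIn B z := by
  refine ⟨hz, fun b hb => ?_, fun b hb => ?_⟩ <;> obtain ⟨n, hn⟩ := D.exists_degree b hb <;>
    clear hb
  · induction hn using skewDegreeLT_induction with
    | zero => exact ⟨0, zero_mem _, by simp⟩
    | add_mul_pow n f a _ ha ih =>
      obtain ⟨f', hf', ef⟩ := ih
      obtain ⟨a', ha', ea⟩ := hl a ha
      obtain ⟨q, -, e⟩ := (hzX.pow_right n).symm
      refine ⟨f' + q • (a' * X ^ n), add_mem hf' (Subalgebra.smul_mem _
        (mul_mem (D.le ha') (pow_mem D.gen_mem n)) q), ?_⟩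
      rw [add_mul, mul_add, ef, mul_assoc, e, mul_smul_comm, ← mul_assoc, ea, mul_smul_comm,
        mul_assoc]
  · induction hn using skewDegreeLT_induction with
    | zero => exact ⟨0, zero_mem _, by simp⟩
    | add_mul_pow n f a _ ha ih =>
      obtain ⟨f', hf', ef⟩ := ih
      obtain ⟨a', ha', ea⟩ := hr a ha
      obtain ⟨q, -, e⟩ := hzX.pow_right n
      refine ⟨f' + q • (a' * X ^ n), add_mem hf' (Subalgebra.smul_mem _
        (mul_mem (D.le ha') (pow_mem D.gen_mem n)) q), ?_⟩
      rw [add_mul, mul_add, ef, ← mul_assoc, ea, mul_assoc, e, mul_smul_comm, smul_mul_assoc,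
        mul_assoc]

section Commutation

variable (D : OreStep act A B X h χX) (hθ : IsEigenWith K act θ u)
  (hcθ : IsEigenWith K act (θ + χX) c)

include hθ hcθ

theorem linear_mul_gen_sub (X : R) (h : Torus K r) :
    (u * X - c) * X - (torusChar θ h)⁻¹ • (X * (u * X - c)) =
    ((torusChar χX h - 1) • c - (torusChar θ h)⁻¹ • innerSkewDer (act h) X u) * X -
      -((torusChar θ h)⁻¹ • innerSkewDer (act h) X c) := by
  have hXu := mul_eq_aut_mul_add_innerSkewDer (act h) X u
  have hXc := mul_eq_aut_mul_add_innerSkewDer (act h) X c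
  rw [hθ.apply] at hXu
  rw [hcθ.apply, torusChar_add] at hXc
  rw [mul_sub, ← mul_assoc, hXu, hXc]
  simp only [smul_sub, smul_add, sub_mul, add_mul, smul_mul_assoc, sub_smul, one_smul, mul_smul,
    inv_smul_smul₀ (torusChar_ne_zero θ h), mul_assoc]
  abel

variable (hu : u ∈ A) (hc : c ∈ A)

include D hu hc

theorem innerSkewDer_eq_of_linear_mul_gen
    (hX : (u * X - c) * X = (torusChar θ h)⁻¹ • (X * (u * X - c))) :
    innerSkewDer (act h) X u = (torusChar θ h * (torusChar χX h - 1)) • c ∧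
      innerSkewDer (act h) X c = 0 := by
  have hβ := inv_ne_zero (torusChar_ne_zero θ h)
  have expand := linear_mul_gen_sub hθ hcθ X h
  rw [hX, sub_self] at expand
  obtain ⟨eu, ec⟩ := D.indep.linear_unique (zero_mem A) (zero_mem A)
    (sub_mem (Subalgebra.smul_mem _ hc _) (Subalgebra.smul_mem _ (D.der_mem u hu) _))
    (neg_mem (Subalgebra.smul_mem _ (D.der_mem c hc) _)) (by rwa [zero_mul, sub_zero])
  rw [eq_comm, neg_eq_zero, smul_eq_zero_iff_right hβ] at ec
  rw [eq_comm, sub_eq_zero, eq_inv_smul_iff₀ (torusChar_ne_zero θ h), smul_smul] at eu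
  exact ⟨eu.symm, ec⟩

theorem linear_mul_gen_of_eq_mul [NoZeroDivisors R] (hu0 : u ≠ 0) (hc0 : c ≠ 0) (hf : f ∈ B)
    (hfX : (u * X - c) * X = f * (u * X - c)) :
    (u * X - c) * X = (torusChar θ h)⁻¹ • (X * (u * X - c)) := by
  have hβ := torusChar_ne_zero θ h
  set g := f - (torusChar θ h)⁻¹ • X with hg
  have hgB : g ∈ B := sub_mem hf (Subalgebra.smul_mem _ D.gen_mem _)
  have hs : (torusChar χX h - 1) • c - (torusChar θ h)⁻¹ • innerSkewDer (act h) X u ∈ A :=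
    sub_mem (Subalgebra.smul_mem _ hc _) (Subalgebra.smul_mem _ (D.der_mem u hu) _)
  have ht : -((torusChar θ h)⁻¹ • innerSkewDer (act h) X c) ∈ A :=
    neg_mem (Subalgebra.smul_mem _ (D.der_mem c hc) _)
  have hgy := linear_mul_gen_sub hθ hcθ X h
  rw [hfX, ← smul_mul_assoc, ← sub_mul, ← hg] at hgy
  suffices hg0 : g = 0 by rw [hfX, sub_eq_zero.1 hg0, smul_mul_assoc]
  by_contra hg0
  have hgA : g ∈ A := by
    obtain ⟨n, hn⟩ := D.exists_degree g hgB
    obtain ⟨m, a, -, ha, ha0⟩ := exists_hasLeadingTerm_of_ne_zero hn hg0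
    have hm := D.degree_lt_of_mul_mem ha (.mul_sub X hu hc) ha0 hu0
      (hgy ▸ (HasLeadingTerm.mul_sub X hs ht).mem_skewDegreeLT)
    obtain rfl : m = 0 := by lia
    exact mem_skewDegreeLT_one.1 ha.mem_skewDegreeLT
  rw [mul_sub, ← mul_assoc] at hgy
  obtain ⟨-, ec⟩ := D.indep.linear_unique (mul_mem hgA hu) (mul_mem hgA hc) hs ht hgy
  have hδc : innerSkewDer (act h) X c = -(torusChar θ h • g) * c := by
    rw [neg_mul, smul_mul_assoc, ec, smul_neg, neg_neg, smul_inv_smul₀ hβ]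
  rw [D.der_eq_zero_of_der_eq_mul (neg_mem (Subalgebra.smul_mem _ hgA _)) hc hδc, smul_zero,
    neg_zero] at ec
  exact mul_ne_zero hg0 hc0 ec

end Commutation

theorem linear_mul_eq_mul (D : OreStep act A B X h χX) (hP : IsSaturatedIdeal A B Y P)
    (hu : u ∈ A) (hc : c ∈ A) (hz : u * X - c ∈ P) {a' : R} (ha : a ∈ A) (ha' : a' ∈ A)
    (e : u * act h a = a' * u) : (u * X - c) * a = a' * (u * X - c) := by
  have expand : (u * X - c) * a - a' * (u * X - c) =
      u * innerSkewDer (act h) X a - c * a + a' * c := by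
    rw [sub_mul, mul_assoc, mul_eq_aut_mul_add_innerSkewDer (act h) X a, mul_add, ← mul_assoc, e]
    noncomm_ring
  have hmem := sub_mem (hP.mul_right_mem hz (D.le ha)) (hP.mul_left_mem hz (D.le ha'))
  rw [expand] at hmem
  rw [← sub_eq_zero, expand]
  exact hP.eq_zero_of_mem (add_mem (sub_mem (mul_mem hu (D.der_mem a ha)) (mul_mem hc ha))
    (mul_mem ha' hc)) hmem

theorem linear_isNormalIn (D : OreStep act A B X h χX) (hu : IsNormalIn A u) (hc : c ∈ A)
    (hX : (u * X - c) * X = (torusChar θ h)⁻¹ • (X * (u * X - c)))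
    (hcomm : ∀ a ∈ A, ∀ a' ∈ A, u * act h a = a' * u → (u * X - c) * a = a' * (u * X - c)) :
    IsNormalIn B (u * X - c) := by
  refine D.isNormalIn (sub_mem (mul_mem (D.le hu.mem) D.gen_mem) (D.le hc))
    ⟨_, inv_ne_zero (torusChar_ne_zero θ h), hX⟩ (fun a ha => ?_) (fun a ha => ?_)
  · obtain ⟨b, hb, e⟩ := hu.exists_mul_eq_mul_left a ha
    obtain ⟨a', ha', rfl⟩ := D.exists_act_eq hb
    exact ⟨a', ha', (hcomm a' ha' a ha e.symm).symm⟩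
  · obtain ⟨a', ha', e⟩ := hu.exists_mul_eq_mul_right _ (D.act_mem h a ha)
    exact ⟨a', ha', hcomm a ha a' ha' e⟩

theorem mem_of_reduced [NoZeroDivisors R] (D : OreStep act A B X h χX)
    (I : PrimeSystem act A Y L) (hu : u ∈ Submonoid.closure {p ∈ L | ¬ DvdIn A p c})
    (hc0 : c ≠ 0) {t : K} (ht : t ≠ 0) (hδu : innerSkewDer (act h) X u = t • c)
    (hδc : innerSkewDer (act h) X c = 0) : u ∈ L := by
  have closure_mem {v : R} (hv : v ∈ Submonoid.closure {p ∈ L | ¬ DvdIn A p c}) : v ∈ A :=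
    (I.isNormalIn (Submonoid.closure_mono (Set.sep_subset L _) hv)).mem
  have not_dvdIn {p : R} (hp : ¬ DvdIn A p c) : ¬ DvdIn A p (innerSkewDer (act h) X u) :=
    fun hd => hp (inv_smul_smul₀ ht c ▸ hδu ▸ hd.smul t⁻¹)
  have hu1 : u ≠ 1 := by
    rintro rfl
    rw [innerSkewDer_one] at hδu
    exact smul_ne_zero ht hc0 hδu.symm
  obtain ⟨p, ⟨hp, hpc⟩, w, hw, rfl⟩ := exists_mul_of_mem_closure_of_ne_one hu hu1
  have hpA := (I.isPrimeIn p hp).mem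
  rcases eq_or_ne w 1 with rfl | hw1
  · rwa [mul_one]
  refine absurd (by rw [hδu, map_smul, hδc, smul_zero])
    (D.der_der_mul_ne_zero hpA (closure_mem hw) (fun h0 => not_dvdIn hpc ?_) fun h0 => ?_)
  · obtain ⟨f, hf⟩ := I.homogeneous p (I.subset hp)
    rw [innerSkewDer_mul, h0, zero_mul, add_zero, hf.apply, smul_mul_assoc]
    exact DvdIn.smul ⟨_, D.der_mem w (closure_mem hw), rfl⟩ _
  · obtain ⟨q, ⟨hq, hqc⟩, w', hw', rfl⟩ := exists_mul_of_mem_closure_of_ne_one hw hw1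
    refine not_dvdIn hqc ?_
    rw [innerSkewDer_mul, h0, mul_zero, zero_add, ← mul_assoc]
    exact ((I.isPrimeIn q hq).isNormalIn.dvdIn_mul_left ⟨1, one_mem _, (mul_one q).symm⟩
      (D.der_mem p hpA)).mul_right (closure_mem hw')

theorem exists_eq_add_mul_gen (D : OreStep act A B X h χX) (hf : f ∈ B) :
    ∃ a ∈ A, ∃ b ∈ B, f = a + b * X := by
  obtain ⟨n, hn⟩ := D.exists_degree f hf
  clear hf
  induction hn using skewDegreeLT_induction with
  | zero => exact ⟨0, zero_mem _, 0, zero_mem _, by simp⟩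
  | add_mul_pow n f a' _ ha' ih =>
    obtain ⟨a, ha, b, hb, rfl⟩ := ih
    cases n with
    | zero => exact ⟨a + a', add_mem ha ha', b, hb, by rw [pow_zero]; noncomm_ring⟩
    | succ n =>
      exact ⟨a, ha, b + a' * X ^ n, add_mem hb (mul_mem (D.le ha') (pow_mem D.gen_mem n)),
        by rw [pow_succ]; noncomm_ring⟩

variable [NoZeroDivisors R] [Nontrivial R]

theorem exists_linearPrime_of_reduced (D : OreStep act A B X h χX) (I : PrimeSystem act A Y L)
    (hne : ∃ a ∈ A, innerSkewDer (act h) X a ≠ 0) (hP : IsSaturatedIdeal A B Y P) (hc : c ∈ A)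
    (hu : u ∈ Submonoid.closure {p ∈ L | ¬ DvdIn A p c}) (hθ : IsEigenWith K act θ u)
    (hcθ : IsEigenWith K act (θ + χX) c) (hz : u * X - c ∈ P) :
    u ∈ L ∧ LinearPrime act A B X h χX L u c θ := by
  have huL := Submonoid.closure_mono (Set.sep_subset L _) hu
  have huY := I.closure_mono huL
  have huA := I.isNormalIn huL
  have hu0 := I.closure_ne_zero huY
  have hcomm : ∀ a ∈ A, ∀ a' ∈ A, u * act h a = a' * u →
      (u * X - c) * a = a' * (u * X - c) :=
    fun a ha a' ha' => D.linear_mul_eq_mul hP huA.mem hc hz ha ha'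
  have hc0 : c ≠ 0 := by
    rintro rfl
    obtain ⟨a, ha, ha0⟩ := hne
    have hXP : X ∈ P := hP.mem_of_mul_mem huY D.gen_mem (by simpa only [sub_zero] using hz)
    refine ha0 (hP.eq_zero_of_mem (D.der_mem a ha) ?_)
    exact sub_mem (hP.mul_right_mem hXP (D.le ha))
      (hP.mul_left_mem hXP (D.le (D.act_mem h a ha)))
  have hPz (f : R) (hf : f ∈ P) : ∃ b ∈ B, f = b * (u * X - c) :=
    exists_eq_mul_of_mem_of_reduced D I hP hc hu hz hθ hf
  obtain ⟨f, hf, hfX⟩ := hPz _ (hP.mul_right_mem hz D.gen_mem)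
  have hX := D.linear_mul_gen_of_eq_mul hθ hcθ huA.mem hc hu0 hc0 hf hfX
  obtain ⟨hδu, hδc⟩ := D.innerSkewDer_eq_of_linear_mul_gen hθ hcθ huA.mem hc hX
  have ht : torusChar θ h * (torusChar χX h - 1) ≠ 0 := by
    simpa [sub_eq_zero, torusChar_ne_zero] using D.torusChar_pow_ne_one 1 one_ne_zero
  refine ⟨D.mem_of_reduced I hu hc0 ht hδu hδc, huL, hc, hθ, hcθ, hX, hcomm,
    hP.isPrimeIn D.le hz (D.indep.ne_zero (.mul_sub X huA.mem hc) hu0)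
      (D.linear_isNormalIn huA hc hX hcomm) hPz huA hu0 huY fun f hf => ?_⟩
  obtain ⟨n, hn⟩ := D.exists_degree f hf
  exact ⟨n, exists_pow_mul_sub_mem D I hP hc hu hz n (skewDegreeLT_mono A X n.le_succ hn)⟩

theorem exists_linearPrime (D : OreStep act A B X h χX) (I : PrimeSystem act A Y L)
    (hne : ∃ a ∈ A, innerSkewDer (act h) X a ≠ 0) :
    ∃ p ∈ L, ∃ c θ, LinearPrime act A B X h χX L p c θ := by
  obtain ⟨P, hP, w, hw, hw0, χ, hχ, e, he, heχ, hwe⟩ := D.exists_isSaturatedIdeal I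
  obtain ⟨c, hc, u, hu, θ, hθ, hcθ, hz⟩ :=
    D.exists_reduced_relation I hP ⟨hw, hχ, e, he, heχ, hwe⟩ hw0
  obtain ⟨huL, hlin⟩ := D.exists_linearPrime_of_reduced I hne hP hc hu hθ hcθ hz
  exact ⟨u, huL, c, θ, hlin⟩

theorem isSaturatedIdeal_mul_gen (D : OreStep act A B X h χX) (hX : IsNormalIn B X) :
    IsSaturatedIdeal A B ∅ (B.toSubmodule.map (LinearMap.mulRight K X)) where
  mem := by
    rintro _ ⟨b, hb, rfl⟩
    exact mul_mem (S := Subalgebra K R) hb D.gen_mem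
  mul_left_mem := by
    rintro _ b ⟨f, hf, rfl⟩ hb
    exact ⟨b * f, mul_mem (S := Subalgebra K R) hb hf, mul_assoc b f X⟩
  mul_right_mem := by
    rintro _ b ⟨f, hf, rfl⟩ hb
    obtain ⟨b', hb', e⟩ := hX.exists_mul_eq_mul_right b hb
    exact ⟨f * b', mul_mem (S := Subalgebra K R) hf hb', by
      simp only [LinearMap.mulRight_apply, mul_assoc, e]⟩
  eq_zero_of_mem := by
    rintro _ ha ⟨b, hb, rfl⟩
    have hlead := HasLeadingTerm.mul_sub X (one_mem A) (zero_mem A)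
    rw [one_mul, sub_zero] at hlead
    rw [D.eq_zero_of_mul_mem hb hlead one_ne_zero ha, map_zero]
  mem_of_mul_mem := by
    intro v f hv _ hvf
    rw [Submonoid.closure_empty, Submonoid.mem_bot] at hv
    rwa [hv, one_mul] at hvf

theorem linearPrime_one_zero (D : OreStep act A B X h χX)
    (hδ : ∀ a ∈ A, innerSkewDer (act h) X a = 0) : LinearPrime act A B X h χX L 1 0 0 := by
  have hcomm (a : R) (ha : a ∈ A) : X * a = act h a * X := by
    rw [mul_eq_aut_mul_add_innerSkewDer (act h) X a, hδ a ha, add_zero]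
  have hlead := HasLeadingTerm.mul_sub X (one_mem A) (zero_mem A)
  rw [one_mul, sub_zero] at hlead
  have hXB : IsNormalIn B X := by
    refine D.isNormalIn D.gen_mem (.refl X) (fun a ha => ?_)
      fun a ha => ⟨_, D.act_mem h a ha, hcomm a ha⟩
    obtain ⟨a', ha', rfl⟩ := D.exists_act_eq ha
    exact ⟨a', ha', (hcomm a' ha').symm⟩
  refine ⟨one_mem _, zero_mem A, .one, .zero _, ?_, fun a ha a' _ e => ?_, ?_⟩
  · rw [one_mul, sub_zero, torusChar_zero, inv_one, one_smul]
  · rw [one_mul, mul_one] at e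
    rw [one_mul, sub_zero, hcomm a ha, e]
  rw [one_mul, sub_zero]
  have hsat := D.isSaturatedIdeal_mul_gen hXB
  refine hsat.isPrimeIn D.le ⟨1, one_mem B, one_mul X⟩ (D.indep.ne_zero hlead one_ne_zero) hXB
    (fun f hf => ?_) (.one A) one_ne_zero (one_mem _) fun f hf => ?_
  · obtain ⟨b, hb, rfl⟩ := hf
    exact ⟨b, hb, rfl⟩
  · obtain ⟨a, ha, b, hb, rfl⟩ := D.exists_eq_add_mul_gen hf
    exact ⟨0, a, ha, b, hb, by rw [pow_zero, one_mul, add_sub_cancel_left]; rfl⟩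

end OreStep

end LinearPrime

section Extension

variable {K : Type u} [Field K] {R : Type v} [Ring R] [Algebra K R] {r : ℕ}
  {act : Torus K r →* (R ≃ₐ[K] R)} {A B : Subalgebra K R} {X a b c d e f q u z : R}
  {h : Torus K r} {χX χq θ : Fin r → ℤ} {Y L : Set R}

namespace OreStep

section PrimeExtension

variable (D : OreStep act A B X h χX)

include D

theorem exists_dvdIn_sub_of_not_dvdIn (hf : f ∈ B) (hqf : ¬ DvdIn B q f) :
    ∃ n a g, HasLeadingTerm A X n a g ∧ ¬ DvdIn A q a ∧ DvdIn B q (f - g) := by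
  obtain ⟨n, hn⟩ := D.exists_degree f hf
  clear hf
  induction hn using skewDegreeLT_induction with
  | zero => exact absurd ⟨0, zero_mem _, (mul_zero q).symm⟩ hqf
  | add_mul_pow n f a hf ha ih =>
    by_cases hqa : DvdIn A q a
    · obtain ⟨d, hd, rfl⟩ := hqa
      have hdX : d * X ^ n ∈ B := mul_mem (D.le hd) (pow_mem D.gen_mem n)
      obtain ⟨m, a, g, hg, hqa, b, hb, e⟩ := ih fun ⟨b, hb, e⟩ =>
        hqf ⟨b + d * X ^ n, add_mem hb hdX, by rw [e, mul_add, mul_assoc]⟩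
      refine ⟨m, a, g, hg, hqa, b + d * X ^ n, add_mem hb hdX, ?_⟩
      rw [mul_add, ← e, mul_assoc]
      abel
    · exact ⟨n, a, _, ⟨ha, by rwa [add_sub_cancel_right]⟩, hqa, 0, zero_mem _, by simp⟩

theorem dvdIn_of_dvdIn_iterate_act (hqχ : IsEigenWith K act χq q) {n : ℕ}
    (hqa : DvdIn A q ((act h)^[n] a)) : DvdIn A q a := by
  induction n with
  | zero => exact hqa
  | succ n ih =>
    refine ih ?_
    rw [Function.iterate_succ_apply'] at hqa
    obtain ⟨d, hd, e⟩ := hqa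
    obtain ⟨d', hd', rfl⟩ := D.exists_act_eq hd
    refine ⟨(torusChar χq h)⁻¹ • d', Subalgebra.smul_mem _ hd' _, (act h).injective ?_⟩
    rw [e, map_mul, map_smul, hqχ.apply, smul_mul_smul_comm,
      mul_inv_cancel₀ (torusChar_ne_zero χq h), one_smul]

theorem isNormalIn_of_der_eq_zero (hq : IsPrimeIn K A q) (hqχ : IsEigenWith K act χq q)
    (hδq : innerSkewDer (act h) X q = 0) : IsNormalIn B q := by
  refine D.isNormalIn (D.le hq.mem) (.symm ⟨_, torusChar_ne_zero χq h, ?_⟩)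
    hq.isNormalIn.exists_mul_eq_mul_left hq.isNormalIn.exists_mul_eq_mul_right
  rw [mul_eq_aut_mul_add_innerSkewDer (act h) X q, hδq, add_zero, hqχ.apply, smul_mul_assoc]

variable [NoZeroDivisors R]

theorem dvdIn_leadingCoeff {n : ℕ} (hq : q ∈ A) (hq0 : q ≠ 0) (hd : d ∈ B)
    (he : HasLeadingTerm A X n e (q * d)) : DvdIn A q e := by
  have zero : DvdIn A q 0 := ⟨0, zero_mem _, (mul_zero q).symm⟩
  rcases eq_or_ne d 0 with rfl | hd0
  · rw [mul_zero] at he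
    rwa [D.indep.coeff_eq_zero he (zero_mem _)]
  obtain ⟨k, hk⟩ := D.exists_degree d hd
  obtain ⟨m, a, -, ha, ha0⟩ := exists_hasLeadingTerm_of_ne_zero hk hd0
  have hqa : HasLeadingTerm A X m (q * a) (q * d) := by
    simpa using (HasLeadingTerm.const X hq).mul D.isOreGenerator ha
  rcases Nat.lt_succ_iff_lt_or_eq.1
    (D.indep.degree_lt hqa (mul_ne_zero hq0 ha0) he.mem_skewDegreeLT) with hmn | rfl
  · rwa [D.indep.coeff_eq_zero he (skewDegreeLT_mono A X hmn hqa.mem_skewDegreeLT)]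
  · exact ⟨a, ha.coeff_mem, D.indep.coeff_unique he hqa⟩

theorem isPrimeIn_of_der_eq_zero (hq : IsPrimeIn K A q) (hqχ : IsEigenWith K act χq q)
    (hδq : innerSkewDer (act h) X q = 0) : IsPrimeIn K B q := by
  have hqB := D.isNormalIn_of_der_eq_zero hq hqχ hδq
  refine ⟨hqB.mem, hq.ne_zero, ?_, hqB.exists_mul_eq_mul_left, hqB.exists_mul_eq_mul_right, ?_⟩
  · rintro ⟨v, hv, e, -⟩
    have hlead : HasLeadingTerm A X 0 1 (q * v) := by
      rw [e]
      exact .const X (one_mem A)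
    obtain ⟨d, hd, e'⟩ := D.dvdIn_leadingCoeff hq.mem hq.ne_zero hv hlead
    refine hq.2.2.1 ⟨d, hd, e'.symm, mul_left_cancel₀ hq.ne_zero ?_⟩
    rw [← mul_assoc, ← e', one_mul, mul_one]
  · intro f hf g hg ⟨d, hd, e⟩
    change DvdIn B q f ∨ DvdIn B q g
    by_contra! hfg
    obtain ⟨m, a, f', hf', hqa, α, hα, ef⟩ := D.exists_dvdIn_sub_of_not_dvdIn hf hfg.1
    obtain ⟨n, b, g', hg', hqb, β, hβ, eg⟩ := D.exists_dvdIn_sub_of_not_dvdIn hg hfg.2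
    have hf'B := D.mem_of_mem_skewDegreeLT hf'.mem_skewDegreeLT
    obtain ⟨f'', hf'', e''⟩ := hqB.exists_mul_eq_mul_left f' hf'B
    have hlead := hf'.mul D.isOreGenerator hg'
    have hmul : f' * g' = q * (d - α * g - f'' * β) := by
      rw [mul_sub, mul_sub, ← e, ← mul_assoc q, ← ef, ← mul_assoc q f'', ← e'', mul_assoc f', ← eg]
      noncomm_ring
    rw [hmul] at hlead
    have hdB : d - α * g - f'' * β ∈ B := sub_mem (sub_mem hd (mul_mem hα hg)) (mul_mem hf'' hβ)
    rcases hq.dvdIn_or_dvdIn hf'.coeff_mem (D.isOreGenerator.iterate_mem m hg'.coeff_mem)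
      (D.dvdIn_leadingCoeff hq.mem hq.ne_zero hdB hlead) with hqa' | hqb'
    · exact hqa hqa'
    · exact hqb (D.dvdIn_of_dvdIn_iterate_act hqχ hqb')

end PrimeExtension

theorem exists_algebraMap_eq [NoZeroDivisors R] [Nontrivial R] (D : OreStep act A B X h χX)
    (I : PrimeSystem act A Y L) (ha : a ∈ B) (hb : b ∈ B) (hab : a * b = 1) :
    ∃ t : K, a = algebraMap K R t := by
  obtain ⟨k, hk⟩ := D.exists_degree a ha
  obtain ⟨k', hk'⟩ := D.exists_degree b hb
  obtain ⟨m, a', -, hm, ha'⟩ := exists_hasLeadingTerm_of_ne_zero hk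
    (left_ne_zero_of_mul_eq_one hab)
  obtain ⟨n, b', -, hn, hb'⟩ := exists_hasLeadingTerm_of_ne_zero hk'
    (right_ne_zero_of_mul_eq_one hab)
  have hmn := D.degree_lt_of_mul_mem hm hn ha' hb'
    (k := 1) (hab ▸ mem_skewDegreeLT_one.2 (one_mem A))
  obtain ⟨rfl, rfl⟩ : m = 0 ∧ n = 0 := by lia
  exact I.exists_algebraMap_eq a (mem_skewDegreeLT_one.1 hm.mem_skewDegreeLT) b
    (mem_skewDegreeLT_one.1 hn.mem_skewDegreeLT) hab

end OreStep

namespace LinearPrime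

variable (T : LinearPrime act A B X h χX L u c θ)

include T

theorem isEigenWith_linear (D : OreStep act A B X h χX) : IsEigenWith K act (θ + χX) (u * X - c) :=
  (T.isEigenWith.mul D.gen_isEigenWith).sub T.const_isEigenWith

theorem mul_eq_smul_mul {f : Fin r → ℤ} {t : K} (ha : a ∈ A) (hf : IsEigenWith K act f a)
    (hua : u * a = t • (a * u)) :
    (u * X - c) * a = (torusChar f h * t) • (a * (u * X - c)) := by
  rw [← smul_mul_assoc]
  refine T.mul_eq_mul a ha _ (Subalgebra.smul_mem _ ha _) ?_
  rw [hf.apply, mul_smul_comm, hua, smul_smul, smul_mul_assoc]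

variable (I : PrimeSystem act A Y L)

include I

theorem qCommute (hz : z ∈ Y) : QCommute K (u * X - c) z := by
  obtain ⟨f, hf⟩ := I.homogeneous z hz
  obtain ⟨q, hq, e⟩ := I.qCommuting.of_mem_closure (I.closure_mono T.mem_closure)
    (Submonoid.subset_closure hz)
  exact ⟨_, mul_ne_zero (torusChar_ne_zero f h) hq, T.mul_eq_smul_mul (I.subset_algebra hz) hf e⟩

theorem hasLeadingTerm : HasLeadingTerm A X 1 u (u * X - c) :=
  .mul_sub X (I.isNormalIn T.mem_closure).mem T.const_mem

variable (D : OreStep act A B X h χX)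

include D

theorem exists_denominator (hb : b ∈ B) : ∃ w ∈ Submonoid.closure (insert (u * X - c) Y),
    w * b ∈ Algebra.adjoin K (insert (u * X - c) Y) := by
  have hY := Set.subset_insert (u * X - c) Y
  refine exists_mul_mem_adjoin (I.qCommuting.insert fun z hz => T.qCommute I hz) le_rfl ?_
    (D.mem_adjoin hb)
  rintro a (rfl | ha)
  · obtain ⟨w, hw, hwc⟩ := I.exists_denominator c T.const_mem
    have hw' := Submonoid.closure_mono hY hw
    refine ⟨w * u, mul_mem hw' (Submonoid.closure_mono hY (I.closure_mono T.mem_closure)), ?_⟩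
    have expand : w * u * a = w * (u * a - c) + w * c := by noncomm_ring
    rw [expand]
    exact add_mem (mul_mem (mem_adjoin_of_mem_closure hw')
      (Algebra.subset_adjoin (Set.mem_insert _ Y))) (Algebra.adjoin_mono hY hwc)
  · obtain ⟨w, hw, hwa⟩ := I.exists_denominator a ha
    exact ⟨w, Submonoid.closure_mono hY hw, Algebra.adjoin_mono hY hwa⟩

variable [NoZeroDivisors R] [Nontrivial R]

theorem eq_zero_of_mul_mem (hb : b ∈ B) (hbA : (u * X - c) * b ∈ A) : b = 0 := by
  by_contra hb0
  obtain ⟨k, hk⟩ := D.exists_degree b hb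
  obtain ⟨m, a, -, ha, ha0⟩ := exists_hasLeadingTerm_of_ne_zero hk hb0
  have := D.degree_lt_of_mul_mem (T.hasLeadingTerm I) ha
    (I.closure_ne_zero (I.closure_mono T.mem_closure)) ha0 (mem_skewDegreeLT_one.2 hbA)
  lia

variable {L' : Set R} (hL' : L' ⊆ L) (hu : ∀ p ∈ L', ¬ DvdIn A p u)

include hL' hu

theorem eq_of_dvdIn {p p' : R} (hp : p ∈ insert (u * X - c) L') (hp' : p' ∈ insert (u * X - c) L')
    (hpp' : DvdIn B p' p) : p = p' := by
  obtain ⟨d, hd, e⟩ := hpp'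
  rcases hp' with rfl | hp'
  · rcases hp with rfl | hp
    · rfl
    · have hpY := I.subset (hL' hp)
      have hd0 := T.eq_zero_of_mul_mem I D hd (e ▸ I.subset_algebra hpY)
      exact absurd (by rw [e, hd0, mul_zero]) (I.ne_zero p hpY)
  · have hp'A := I.isPrimeIn p' (hL' hp')
    rcases hp with rfl | hp
    · exact absurd (D.dvdIn_leadingCoeff hp'A.mem hp'A.ne_zero hd (e ▸ T.hasLeadingTerm I))
        (hu p' hp')
    · have hlead : HasLeadingTerm A X 0 p (p' * d) := by
        rw [← e]
        exact .const X (I.isPrimeIn p (hL' hp)).mem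
      exact I.eq_of_dvdIn p (hL' hp) p' (hL' hp')
        (D.dvdIn_leadingCoeff hp'A.mem hp'A.ne_zero hd hlead)

theorem primeSystem_insert (hδ : ∀ p ∈ L', innerSkewDer (act h) X p = 0)
    (hJ : ∀ J, IsGradedIdeal act B J → ∀ χ, ∀ a ∈ J χ, a ≠ 0 →
      ∃ v ∈ Submonoid.closure (insert (u * X - c) L'), ∃ φ, v ∈ J φ) :
    PrimeSystem act B (insert (u * X - c) Y) (insert (u * X - c) L') where
  finite := I.finite.insert _
  subset := Set.insert_subset_insert (hL'.trans I.subset)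
  subset_algebra := Set.insert_subset T.isPrimeIn.mem (I.subset_algebra.trans D.le)
  ne_zero := Set.forall_insert_of_forall I.ne_zero T.isPrimeIn.ne_zero
  homogeneous := Set.forall_insert_of_forall I.homogeneous ⟨_, T.isEigenWith_linear D⟩
  qCommuting := I.qCommuting.insert fun _ => T.qCommute I
  exists_denominator _ := T.exists_denominator I D
  isPrimeIn := by
    refine Set.forall_insert_of_forall (fun p hp => ?_) T.isPrimeIn
    obtain ⟨f, hf⟩ := I.homogeneous p (I.subset (hL' hp))
    exact D.isPrimeIn_of_der_eq_zero (I.isPrimeIn p (hL' hp)) hf (hδ p hp)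
  eq_of_dvdIn _ hp _ hp' := T.eq_of_dvdIn I D hL' hu hp hp'
  exists_mem_gradedIdeal := hJ
  exists_algebraMap_eq _ ha _ hb := D.exists_algebraMap_eq I ha hb

end LinearPrime

end Extension

section LeadingCoefficients

variable {K : Type u} [Field K] {R : Type v} [Ring R] [Algebra K R] {A : Subalgebra K R}
  {a b b' f g y : R} {m n : ℕ}

theorem pow_mul_eq_smul_mul_pow {t : K} (h : y * a = t • (a * y)) (n : ℕ) :
    y ^ n * a = t ^ n • (a * y ^ n) := by
  induction n with
  | zero => simp
  | succ n ih =>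
    rw [pow_succ, mul_assoc, h, mul_smul_comm, ← mul_assoc, ih, smul_mul_assoc, smul_smul,
      ← pow_succ', mul_assoc, ← pow_succ]

theorem mul_pow_eq_smul_pow_mul {t : K} (h : y * a = t • (a * y)) (n : ℕ) :
    y * a ^ n = t ^ n • (a ^ n * y) := by
  have : SemiconjBy y a (t • a) := by rwa [SemiconjBy, smul_mul_assoc]
  simpa only [SemiconjBy, smul_pow, smul_mul_assoc] using this.pow_right n

/-- `y` satisfies `y A = A y`; unlike in `IsNormalIn`, it need not belong to `A`. -/
structure Normalizes (A : Subalgebra K R) (y : R) : Prop where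
  exists_mul_eq_mul_left : ∀ a ∈ A, ∃ b ∈ A, a * y = y * b
  exists_mul_eq_mul_right : ∀ a ∈ A, ∃ b ∈ A, y * a = b * y

theorem Normalizes.pow (hy : Normalizes A y) (n : ℕ) : Normalizes A (y ^ n) := by
  induction n with
  | zero => exact ⟨fun a ha => ⟨a, ha, by simp⟩, fun a ha => ⟨a, ha, by simp⟩⟩
  | succ n ih =>
    constructor
    · intro a ha
      obtain ⟨b, hb, e⟩ := ih.exists_mul_eq_mul_left a ha
      obtain ⟨d, hd, e'⟩ := hy.exists_mul_eq_mul_left b hb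
      exact ⟨d, hd, by rw [pow_succ, ← mul_assoc, e, mul_assoc, e', mul_assoc]⟩
    · intro a ha
      obtain ⟨b, hb, e⟩ := hy.exists_mul_eq_mul_right a ha
      obtain ⟨d, hd, e'⟩ := ih.exists_mul_eq_mul_right b hb
      exact ⟨d, hd, by rw [pow_succ, mul_assoc, e, ← mul_assoc, e', mul_assoc]⟩

theorem Normalizes.mul_mem_skewDegreeLT (hy : Normalizes A y) (hf : f ∈ skewDegreeLT A y n)
    (hb : b ∈ A) : f * b ∈ skewDegreeLT A y n := by
  induction hf using skewDegreeLT_induction with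
  | zero => simp
  | add_mul_pow n f a _ ha ih =>
    obtain ⟨d, hd, e⟩ := (hy.pow n).exists_mul_eq_mul_right b hb
    refine mem_skewDegreeLT_succ.2 ⟨f * b, ih, a * d, mul_mem ha hd, ?_⟩
    rw [add_mul, mul_assoc a (y ^ n), e, mul_assoc]

namespace HasLeadingTerm

theorem add (hf : HasLeadingTerm A y n a f) (hg : HasLeadingTerm A y n b g) :
    HasLeadingTerm A y n (a + b) (f + g) :=
  ⟨add_mem hf.coeff_mem hg.coeff_mem, by
    rw [add_mul, add_sub_add_comm]
    exact add_mem hf.sub_mem hg.sub_mem⟩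

theorem smul (hf : HasLeadingTerm A y n a f) (t : K) : HasLeadingTerm A y n (t • a) (t • f) :=
  ⟨Subalgebra.smul_mem _ hf.coeff_mem _, by
    rw [smul_mul_assoc, ← smul_sub]
    exact Submodule.smul_mem _ _ hf.sub_mem⟩

theorem mul_left (hf : HasLeadingTerm A y n a f) (hb : b ∈ A) :
    HasLeadingTerm A y n (b * a) (b * f) :=
  ⟨mul_mem hb hf.coeff_mem, by
    rw [mul_assoc, ← _root_.mul_sub]
    exact mul_mem_skewDegreeLT_of_mem_left hb hf.sub_mem⟩

theorem mul_right (hf : HasLeadingTerm A y n a f) (hy : Normalizes A y) (hb : b ∈ A)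
    (hb' : b' ∈ A) (h : y ^ n * b = b' * y ^ n) : HasLeadingTerm A y n (a * b') (f * b) :=
  ⟨mul_mem hf.coeff_mem hb', by
    rw [mul_assoc, ← h, ← mul_assoc, ← sub_mul]
    exact hy.mul_mem_skewDegreeLT hf.sub_mem hb⟩

end HasLeadingTerm

section Grading

variable {r : ℕ} {act : Torus K r →* (R ≃ₐ[K] R)} {ω χ : Fin r → ℤ}

theorem IsEigenWith.act_mem_skewDegreeLT (hy : IsEigenWith K act ω y)
    (hA : ∀ ξ, ∀ a ∈ A, act ξ a ∈ A) (hf : f ∈ skewDegreeLT A y n) (ξ : Torus K r) :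
    act ξ f ∈ skewDegreeLT A y n := by
  induction hf using skewDegreeLT_induction with
  | zero => simp
  | add_mul_pow n f a _ ha ih =>
    rw [map_add, map_mul, (hy.pow n).apply, mul_smul_comm, ← smul_mul_assoc]
    exact mem_skewDegreeLT_succ.2 ⟨_, ih, _, Subalgebra.smul_mem _ (hA ξ a ha) _, rfl⟩

theorem LeftIndependentPowers.isEigenWith_coeff (hind : LeftIndependentPowers A y)
    (hy : IsEigenWith K act ω y) (hA : ∀ ξ, ∀ a ∈ A, act ξ a ∈ A)
    (hlead : HasLeadingTerm A y n a f) (hf : IsEigenWith K act (χ + n • ω) f) :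
    IsEigenWith K act χ a := by
  intro ξ
  have hleadξ : HasLeadingTerm A y n (torusChar (n • ω) ξ • act ξ a) (act ξ f) := by
    refine ⟨Subalgebra.smul_mem _ (hA ξ a hlead.coeff_mem) _, ?_⟩
    have := hy.act_mem_skewDegreeLT hA hlead.sub_mem ξ
    rwa [map_sub, map_mul, (hy.pow n).apply, mul_smul_comm, ← smul_mul_assoc] at this
  rw [hf.apply, torusChar_add] at hleadξ
  have h := hind.coeff_unique hleadξ (hlead.smul _)
  rw [mul_comm, mul_smul] at h
  exact smul_right_injective R (torusChar_ne_zero (n • ω) ξ) h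

/-- The leading coefficients of the elements of degree at most `n` in `y` of the graded ideal `J`,
where `y` has character `ω`. -/
def leadingCoeff (act : Torus K r →* (R ≃ₐ[K] R)) (A : Subalgebra K R) (y : R) (ω : Fin r → ℤ)
    (n : ℕ) (J : (Fin r → ℤ) → Submodule K R) (χ : Fin r → ℤ) : Submodule K R where
  carrier := {a | IsEigenWith K act χ a ∧ ∃ f ∈ J (χ + n • ω), HasLeadingTerm A y n a f}
  zero_mem' := ⟨.zero χ, 0, zero_mem _, zero_mem _, by simp⟩
  add_mem' := by
    rintro a b ⟨ha, f, hf, haf⟩ ⟨hb, g, hg, hbg⟩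
    exact ⟨ha.add hb, f + g, add_mem hf hg, haf.add hbg⟩
  smul_mem' := by
    rintro t a ⟨ha, f, hf, haf⟩
    exact ⟨ha.smul t, t • f, Submodule.smul_mem _ t hf, haf.smul t⟩

variable {B : Subalgebra K R} {J : (Fin r → ℤ) → Submodule K R}

namespace IsGradedIdeal

theorem leadingCoeff [NoZeroDivisors R] [Nontrivial R] (hJ : IsGradedIdeal act B J) (hAB : A ≤ B)
    (hy : Normalizes A y) (hyω : IsEigenWith K act ω y) (hy0 : y ≠ 0) (n : ℕ) :
    IsGradedIdeal act A (leadingCoeff act A y ω n J) where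
  mem := by
    rintro χ a ⟨-, f, -, haf⟩
    exact haf.coeff_mem
  isEigenWith ha := ha.1
  mul_left_mem := by
    rintro χ ψ a b ⟨ha, f, hf, haf⟩ hb hbψ
    refine ⟨hbψ.mul ha, b * f, ?_, haf.mul_left hb⟩
    rw [add_assoc]
    exact hJ.mul_left_mem hf (hAB hb) hbψ
  mul_right_mem := by
    rintro χ ψ a b ⟨ha, f, hf, haf⟩ hb hbψ
    obtain ⟨d, hd, e⟩ := (hy.pow n).exists_mul_eq_mul_left b hb
    have hdψ : IsEigenWith K act ψ d := by
      have h := hbψ.mul (hyω.pow n)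
      rw [e] at h
      simpa using h.of_mul_left (hyω.pow n) (pow_ne_zero n hy0)
    refine ⟨ha.mul hbψ, f * d, ?_, haf.mul_right hy hd hb e.symm⟩
    rw [add_right_comm]
    exact hJ.mul_right_mem hf (hAB hd) hdψ

/-- If `f = v y ^ (i + m) + a y ^ i + ⋯` has minimal degree in `J`, then comparing `f b` with
`b f` shows that `a` commutes with `b` up to the same scalar as `v y ^ m`. -/
theorem coeff_mul_eq_smul_mul_coeff (hJ : IsGradedIdeal act B J) (hAB : A ≤ B)
    (hind : LeftIndependentPowers A y) (hy : Normalizes A y) {i m : ℕ}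
    (hmin : ∀ χ, ∀ g ∈ J χ, g ∈ skewDegreeLT A y (i + m) → g = 0) {v : R} (hf : f ∈ J χ)
    (hv : f - v * y ^ (i + m) ∈ skewDegreeLT A y (i + m))
    (ha : HasLeadingTerm A y i a (f - v * y ^ (i + m))) {ψ : Fin r → ℤ} {s t : K} (hb : b ∈ A)
    (hbψ : IsEigenWith K act ψ b) (hs : s ≠ 0) (hyb : y * b = s • (b * y))
    (hvb : v * b = t • (b * v)) : a * b = (s ^ m * t) • (b * a) := by
  have htop : v * y ^ (i + m) * b = (s ^ (i + m) * t) • (b * (v * y ^ (i + m))) := by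
    rw [mul_assoc, pow_mul_eq_smul_mul_pow hyb, mul_smul_comm, ← mul_assoc, hvb, smul_mul_assoc,
      smul_smul, mul_assoc]
  have hcomm : f * b - (s ^ (i + m) * t) • (b * f) =
      (f - v * y ^ (i + m)) * b - (s ^ (i + m) * t) • (b * (f - v * y ^ (i + m))) := by
    rw [sub_mul, mul_sub, smul_sub, ← htop]
    abel
  have hzero : f * b - (s ^ (i + m) * t) • (b * f) = 0 := by
    refine hmin (χ + ψ) _ (sub_mem (hJ.mul_right_mem hf (hAB hb) hbψ) ?_) ?_
    · rw [add_comm]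
      exact Submodule.smul_mem _ _ (hJ.mul_left_mem hf (hAB hb) hbψ)
    · rw [hcomm]
      exact sub_mem (hy.mul_mem_skewDegreeLT hv hb)
        (Submodule.smul_mem _ _ (mul_mem_skewDegreeLT_of_mem_left hb hv))
  rw [hcomm, sub_eq_zero] at hzero
  have hleft := ha.mul_right hy hb (Subalgebra.smul_mem _ hb (s ^ i))
    (by rw [pow_mul_eq_smul_mul_pow hyb, smul_mul_assoc])
  rw [hzero, mul_smul_comm] at hleft
  refine smul_right_injective R (pow_ne_zero i hs)
    ((hind.coeff_unique hleft ((ha.mul_left hb).smul _)).trans ?_)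
  dsimp only
  rw [smul_smul, pow_add, mul_assoc]

end IsGradedIdeal

end Grading

end LeadingCoefficients

section IdealProperty

variable {K : Type u} [Field K] {R : Type v} [Ring R] [Algebra K R] {r : ℕ}
  {act : Torus K r →* (R ≃ₐ[K] R)} {A B : Subalgebra K R} {X a b c f u v : R} {h : Torus K r}
  {χX θ χ φ : Fin r → ℤ} {Y L : Set R} {J : (Fin r → ℤ) → Submodule K R} {n : ℕ}

namespace LinearPrime

variable (T : LinearPrime act A B X h χX L u c θ) (I : PrimeSystem act A Y L)

include T I

theorem pow_mul_pow_mem_skewDegreeLT (n : ℕ) :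
    u ^ n * X ^ n ∈ skewDegreeLT A (u * X - c) (n + 1) := by
  have hu := I.isNormalIn T.mem_closure
  induction n with
  | zero => simpa using mem_skewDegreeLT_one.2 (one_mem A)
  | succ n ih =>
    obtain ⟨c', hc', e⟩ := (hu.pow n).exists_mul_eq_mul_right c T.const_mem
    have expand : u ^ (n + 1) * X ^ (n + 1) =
        ((torusChar θ h)⁻¹ ^ n) • (u ^ n * X ^ n * (u * X - c) ^ 1) + c' * (u ^ n * X ^ n) := by
      have hX := mul_pow_eq_smul_pow_mul T.mul_gen n
      rw [pow_one, mul_assoc, ← mul_smul_comm, ← hX, ← mul_assoc c', ← e, pow_succ u,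
        pow_succ' X]
      noncomm_ring
    rw [expand]
    exact add_mem (Submodule.smul_mem _ _ (mul_pow_mem_skewDegreeLT_add ih 1))
      (skewDegreeLT_mono A _ (by lia) (mul_mem_skewDegreeLT_of_mem_left hc' ih))

theorem pow_mul_mem_skewDegreeLT (hf : f ∈ skewDegreeLT A X n) :
    u ^ n * f ∈ skewDegreeLT A (u * X - c) n := by
  have hu := I.isNormalIn T.mem_closure
  induction hf using skewDegreeLT_induction with
  | zero => simp
  | add_mul_pow n f a _ ha ih =>
    obtain ⟨a', ha', e⟩ := (hu.pow n).exists_mul_eq_mul_right a ha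
    have expand : u ^ (n + 1) * (f + a * X ^ n) =
        u * (u ^ n * f) + u * a' * (u ^ n * X ^ n) := by
      rw [pow_succ', mul_add, mul_assoc, mul_assoc, ← mul_assoc (u ^ n) a, e]
      noncomm_ring
    rw [expand]
    exact add_mem (skewDegreeLT_mono A _ (by lia) (mul_mem_skewDegreeLT_of_mem_left hu.mem ih))
      (mul_mem_skewDegreeLT_of_mem_left (mul_mem hu.mem ha') (T.pow_mul_pow_mem_skewDegreeLT I n))

variable (D : OreStep act A B X h χX)

include D

theorem normalizes : Normalizes A (u * X - c) where
  exists_mul_eq_mul_left a ha := by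
    obtain ⟨b, hb, e⟩ := (I.isNormalIn T.mem_closure).exists_mul_eq_mul_left a ha
    obtain ⟨b', hb', rfl⟩ := D.exists_act_eq hb
    exact ⟨b', hb', (T.mul_eq_mul b' hb' a ha e.symm).symm⟩
  exists_mul_eq_mul_right a ha := by
    obtain ⟨b, hb, e⟩ :=
      (I.isNormalIn T.mem_closure).exists_mul_eq_mul_right _ (D.act_mem h a ha)
    exact ⟨b, hb, T.mul_eq_mul a ha b hb e⟩

variable [NoZeroDivisors R] [Nontrivial R]

theorem exists_hasLeadingTerm_pow (n : ℕ) :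
    ∃ w, w ≠ 0 ∧ HasLeadingTerm A X n w ((u * X - c) ^ n) := by
  induction n with
  | zero =>
    rw [pow_zero]
    exact ⟨1, one_ne_zero, .const X (one_mem A)⟩
  | succ n ih =>
    obtain ⟨w, hw, hlead⟩ := ih
    have hu : (act h)^[n] u ≠ 0 := by
      rw [← Function.iterate_fixed (map_zero (act h)) n]
      exact ((act h).injective.iterate n).ne (I.closure_ne_zero (I.closure_mono T.mem_closure))
    rw [pow_succ]
    exact ⟨_, mul_ne_zero hw hu, hlead.mul D.isOreGenerator (T.hasLeadingTerm I)⟩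

theorem skewDegreeLT_le (n : ℕ) : skewDegreeLT A (u * X - c) n ≤ skewDegreeLT A X n := by
  intro f hf
  induction hf using skewDegreeLT_induction with
  | zero => exact zero_mem _
  | add_mul_pow n f a _ ha ih =>
    obtain ⟨w, -, hw⟩ := T.exists_hasLeadingTerm_pow I D n
    exact add_mem (skewDegreeLT_mono A X (by lia) ih) (hw.mul_left ha).mem_skewDegreeLT

theorem leftIndependentPowers : LeftIndependentPowers A (u * X - c) := by
  intro n a ha haf
  obtain ⟨w, hw0, hw⟩ := T.exists_hasLeadingTerm_pow I D n
  exact (mul_eq_zero.1 (D.indep.coeff_eq_zero (hw.mul_left ha)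
    (T.skewDegreeLT_le I D n haf))).resolve_right hw0

theorem exists_minimal_degree (hJ : IsGradedIdeal act B J) (hf : f ∈ J χ) (hf0 : f ≠ 0) :
    ∃ n, (∃ χ, ∃ g ∈ J χ, g ≠ 0 ∧ g ∈ skewDegreeLT A (u * X - c) (n + 1)) ∧
      ∀ χ, ∀ g ∈ J χ, g ∈ skewDegreeLT A (u * X - c) n → g = 0 := by
  classical
  have hex : ∃ n, ∃ χ, ∃ g ∈ J χ, g ≠ 0 ∧ g ∈ skewDegreeLT A (u * X - c) (n + 1) := by
    obtain ⟨n, hn⟩ := D.exists_degree f (hJ.mem hf)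
    have hu := (I.isNormalIn T.mem_closure).pow n
    have hu0 := I.closure_ne_zero (I.closure_mono T.mem_closure)
    exact ⟨n, _, _, hJ.mul_left_mem hf (D.le hu.mem) (T.isEigenWith.pow n),
      mul_ne_zero (pow_ne_zero n hu0) hf0,
      skewDegreeLT_mono A _ (by lia) (T.pow_mul_mem_skewDegreeLT I hn)⟩
  refine ⟨Nat.find hex, Nat.find_spec hex, fun χ g hg hgdeg => ?_⟩
  by_contra hg0
  rcases hn : Nat.find hex with _ | m
  · rw [hn, mem_skewDegreeLT_zero] at hgdeg
    exact hg0 hgdeg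
  · rw [hn] at hgdeg
    exact Nat.find_min hex (m := m) (by lia) ⟨χ, g, hg, hg0, hgdeg⟩

/-- Otherwise `f = v y ^ (i + m) + a y ^ i + ⋯` with `a ≠ 0` and `m ≠ 0`. The scalars by which `a`
commutes with `u` and `v` are then determined, and the resulting scalar by which `a` commutes with
itself is `λ ^ (m * m)`, where `λ` is the eigenvalue of `X`. -/
theorem eq_mul_pow_of_minimal (hJ : IsGradedIdeal act B J)
    (hmin : ∀ χ, ∀ g ∈ J χ, g ∈ skewDegreeLT A (u * X - c) n → g = 0)
    (hv : v ∈ Submonoid.closure L) (hvφ : IsEigenWith K act φ v)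
    (hf : f ∈ J (φ + n • (θ + χX))) (hlead : HasLeadingTerm A (u * X - c) n v f) :
    f = v * (u * X - c) ^ n := by
  by_contra hne
  obtain ⟨i, a, hi, ha, ha0⟩ := exists_hasLeadingTerm_of_ne_zero hlead.sub_mem (sub_ne_zero.2 hne)
  obtain ⟨m, rfl⟩ := Nat.exists_eq_add_of_lt hi
  rw [add_assoc] at *
  have hind := T.leftIndependentPowers I D
  have hy := T.isEigenWith_linear D
  have huA := (I.isNormalIn T.mem_closure).mem
  have hvA := (I.isNormalIn hv).mem
  have haφ : IsEigenWith K act (φ + (m + 1) • (θ + χX)) a := by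
    refine hind.isEigenWith_coeff hy D.act_mem ha ?_
    rw [add_assoc, ← add_smul, add_comm (m + 1)]
    exact (hJ.isEigenWith hf).sub (hvφ.mul (hy.pow _))
  have comm {b : R} {ψ : Fin r → ℤ} {s t : K} (hb : b ∈ A) (hbψ : IsEigenWith K act ψ b)
      (hs : s ≠ 0) (hub : u * b = s • (b * u)) (hvb : v * b = t • (b * v)) :
      a * b = ((torusChar ψ h * s) ^ (m + 1) * t) • (b * a) :=
    hJ.coeff_mul_eq_smul_mul_coeff D.le hind (T.normalizes I D) hmin hf hlead.sub_mem ha hb hbψ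
      (mul_ne_zero (torusChar_ne_zero ψ h) hs) (T.mul_eq_smul_mul hb hbψ hub) hvb
  obtain ⟨q, hq, hvu⟩ := I.qCommuting.of_mem_closure (I.closure_mono hv)
    (I.closure_mono T.mem_closure)
  have huv := (eq_inv_smul_iff₀ hq).2 hvu.symm
  have hθ := torusChar_ne_zero θ h
  have hφ := torusChar_ne_zero φ h
  have hua := (eq_inv_smul_iff₀ (by simp [hθ, hq])).2
    (comm huA T.isEigenWith one_ne_zero (by rw [one_smul]) hvu).symm
  have hva := (eq_inv_smul_iff₀ (by simp [hφ, hq])).2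
    (comm hvA hvφ (t := 1) (inv_ne_zero hq) huv (by rw [one_smul])).symm
  have haa := comm ha.coeff_mem haφ (by simp [hθ, hq]) hua hva
  have hone : (1 : K) = _ := smul_left_injective K (mul_ne_zero ha0 ha0) ((one_smul K _).trans haa)
  rw [torusChar_add, torusChar_nsmul, torusChar_add] at hone
  refine D.torusChar_pow_ne_one ((m + 1) * (m + 1)) (by simp) ?_
  rw [hone]
  simp only [mul_pow, mul_one, ← pow_mul, inv_pow, mul_inv]
  field_simp

theorem exists_mul_pow_mem (hJ : IsGradedIdeal act B J) (hf : f ∈ J χ) (hf0 : f ≠ 0) :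
    ∃ v ∈ Submonoid.closure L, ∃ n ψ, v * (u * X - c) ^ n ∈ J ψ := by
  obtain ⟨n, ⟨ψ, g, hg, hg0, hgdeg⟩, hmin⟩ := T.exists_minimal_degree I D hJ hf hf0
  have hy := T.isEigenWith_linear D
  have hind := T.leftIndependentPowers I D
  obtain ⟨a, ha⟩ := exists_hasLeadingTerm_of_mem_skewDegreeLT_succ hgdeg
  rw [← sub_add_cancel ψ (n • (θ + χX))] at hg
  have ha0 : a ≠ 0 := by
    rintro rfl
    exact hg0 (hmin _ g hg (by simpa using ha.sub_mem))
  obtain ⟨v, hv, φ, hvφ, f', hf', hlead⟩ := I.exists_mem_gradedIdeal _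
    (hJ.leadingCoeff D.le (T.normalizes I D) hy T.isPrimeIn.ne_zero n) _ a
    ⟨hind.isEigenWith_coeff hy D.act_mem ha (hJ.isEigenWith hg), g, hg, ha⟩ ha0
  refine ⟨v, hv, n, φ + n • (θ + χX), ?_⟩
  rwa [← T.eq_mul_pow_of_minimal I D hJ hmin hv hvφ hf' hlead]

end LinearPrime

end IdealProperty

section PrimeSystemSteps

variable {K : Type u} [Field K] {R : Type v} [Ring R] [Algebra K R] {r : ℕ}
  {act : Torus K r →* (R ≃ₐ[K] R)} {A B : Subalgebra K R} {X a b c g p q u v : R}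
  {h : Torus K r} {χX θ χ φ : Fin r → ℤ} {Y L : Set R} {J : (Fin r → ℤ) → Submodule K R}
  {t : K}

theorem IsPrimeIn.not_dvdIn_one [NoZeroDivisors R] (hp : IsPrimeIn K A p) : ¬ DvdIn A p 1 := by
  rintro ⟨d, hd, e⟩
  refine hp.2.2.1 ⟨d, hd, e.symm, mul_left_cancel₀ hp.ne_zero ?_⟩
  rw [← mul_assoc, ← e, one_mul, mul_one]

theorem OreStep.primeSystem_insert_of_der_eq_zero [NoZeroDivisors R] [Nontrivial R]
    (D : OreStep act A B X h χX) (I : PrimeSystem act A Y L)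
    (hδ : ∀ a ∈ A, innerSkewDer (act h) X a = 0) :
    PrimeSystem act B (insert X Y) (insert X L) := by
  have T := D.linearPrime_one_zero hδ (L := L)
  have := T.primeSystem_insert I D subset_rfl (fun p hp => (I.isPrimeIn p hp).not_dvdIn_one)
    (fun p hp => hδ p (I.isPrimeIn p hp).mem) fun J hJ χ f hf hf0 => by
      obtain ⟨v, hv, n, ψ, hvψ⟩ := T.exists_mul_pow_mem I D hJ hf hf0
      exact ⟨_, mul_mem (Submonoid.closure_mono (Set.subset_insert _ _) hv)
        (pow_mem (Submonoid.subset_closure (Set.mem_insert _ _)) n), ψ, hvψ⟩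
  simpa only [one_mul, sub_zero] using this

theorem QCommuting.exists_eq_smul_pow_mul (hL : QCommuting K L) (hp : p ∈ L)
    (hv : v ∈ Submonoid.closure L) :
    ∃ n : ℕ, ∃ w ∈ Submonoid.closure (L \ {p}), ∃ t : K, t ≠ 0 ∧ v = t • (p ^ n * w) := by
  induction hv using Submonoid.closure_induction with
  | mem x hx =>
    by_cases hxp : x = p
    · exact ⟨1, 1, one_mem _, 1, one_ne_zero, by simp [hxp]⟩
    · exact ⟨0, x, Submonoid.subset_closure ⟨hx, hxp⟩, 1, one_ne_zero, by simp⟩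
  | one => exact ⟨0, 1, one_mem _, 1, one_ne_zero, by simp⟩
  | mul x y _ _ hx hy =>
    obtain ⟨m, w, hw, s, hs, rfl⟩ := hx
    obtain ⟨n, w', hw', t, ht, rfl⟩ := hy
    obtain ⟨q, hq, e⟩ := hL.of_mem_closure (Submonoid.closure_mono Set.sdiff_subset hw)
      (pow_mem (Submonoid.subset_closure hp) n)
    refine ⟨m + n, w * w', mul_mem hw hw', s * t * q, mul_ne_zero (mul_ne_zero hs ht) hq, ?_⟩
    rw [smul_mul_smul_comm, mul_assoc, ← mul_assoc w, e, pow_add, smul_mul_assoc, mul_smul_comm,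
      smul_smul]
    noncomm_ring

namespace LinearPrime

section

variable (T : LinearPrime act A B X h χX L u c θ)

include T

theorem mul_der (hb : b ∈ A) (hbφ : IsEigenWith K act φ b) (hub : u * b = t • (b * u)) :
    u * innerSkewDer (act h) X b = c * b - (torusChar φ h * t) • (b * c) := by
  have e := T.mul_eq_smul_mul hb hbφ hub
  rw [sub_mul, mul_assoc, mul_eq_aut_mul_add_innerSkewDer (act h) X b, hbφ.apply, mul_add,
    ← mul_assoc, mul_smul_comm, hub, smul_smul, mul_sub, smul_sub, smul_mul_assoc, mul_assoc] at e
  rw [← sub_eq_zero] at e ⊢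
  rw [← e]
  abel

variable (D : OreStep act A B X h χX)

include D

theorem der_leadingCoeff (hu : u ∈ A) :
    innerSkewDer (act h) X u = (torusChar θ h * (torusChar χX h - 1)) • c :=
  (D.innerSkewDer_eq_of_linear_mul_gen T.isEigenWith T.const_isEigenWith hu T.const_mem
    T.mul_gen).1

theorem const_mul_leadingCoeff (hu : u ∈ A) :
    c * u = (torusChar θ h * torusChar χX h) • (u * c) := by
  have e := T.mul_der (t := 1) hu T.isEigenWith (one_smul K _).symm
  rw [T.der_leadingCoeff D hu, mul_smul_comm] at e
  rw [← eq_sub_iff_add_eq.1 e, mul_one, ← add_smul]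
  ring_nf

theorem der_pow_succ (hu : u ∈ A) (n : ℕ) : innerSkewDer (act h) X (u ^ (n + 1)) =
    (torusChar θ h ^ (n + 1) * (torusChar χX h ^ (n + 1) - 1)) • (u ^ n * c) := by
  induction n with
  | zero => simpa using T.der_leadingCoeff D hu
  | succ n ih =>
    rw [pow_succ' u (n + 1), innerSkewDer_mul, ih, T.der_leadingCoeff D hu, T.isEigenWith.apply,
      smul_mul_smul_comm, ← mul_assoc u, ← pow_succ', smul_mul_assoc,
      mul_pow_eq_smul_pow_mul (T.const_mul_leadingCoeff D hu), smul_smul, ← add_smul]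
    congr 1
    ring

variable (hJ : IsGradedIdeal act B J)

include hJ

theorem pow_mul_mul_mem_of_pow_succ_mul_mem (hu : u ∈ A) (hXg : QCommute K X g) {n : ℕ}
    (hg : u ^ (n + 1) * g ∈ J φ) : u ^ n * ((u * X - c) * g) ∈ J (χX + φ) := by
  obtain ⟨ρ, -, e⟩ := hXg
  have hleft := hJ.mul_left_mem hg D.gen_mem D.gen_isEigenWith
  have hright : u ^ (n + 1) * (X * g) ∈ J (χX + φ) := by
    rw [e, mul_smul_comm, ← mul_assoc, add_comm]
    exact Submodule.smul_mem _ ρ (hJ.mul_right_mem hg D.gen_mem D.gen_isEigenWith)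
  have hconst : u ^ n * c * g ∈ J (χX + φ) := by
    have ht : torusChar θ h ^ (n + 1) * (torusChar χX h ^ (n + 1) - 1) ≠ 0 :=
      mul_ne_zero (pow_ne_zero _ (torusChar_ne_zero θ h))
        (sub_ne_zero.2 (D.torusChar_pow_ne_one _ n.succ_ne_zero))
    rw [← inv_smul_smul₀ ht (u ^ n * c * g)]
    refine Submodule.smul_mem _ _ ?_
    convert sub_mem hleft (Submodule.smul_mem _ (torusChar θ h ^ (n + 1)) hright) using 1
    rw [← smul_mul_assoc, ← T.der_pow_succ D hu, ← mul_assoc X,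
      mul_eq_aut_mul_add_innerSkewDer (act h) X, (T.isEigenWith.pow (n + 1)).apply, torusChar_nsmul,
      add_mul, smul_mul_assoc, smul_mul_assoc, mul_assoc, add_sub_cancel_left]
  convert sub_mem hright hconst using 1
  rw [pow_succ]
  noncomm_ring

theorem exists_mem_of_pow_mul_mem (hu : u ∈ A) {Z : Set R} (hZ : u * X - c ∈ Z)
    (hX : ∀ z ∈ Z, QCommute K X z) {n : ℕ} (hg : g ∈ Submonoid.closure Z)
    (hgJ : u ^ n * g ∈ J φ) : ∃ v ∈ Submonoid.closure Z, ∃ ψ, v ∈ J ψ := by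
  induction n generalizing g φ with
  | zero => exact ⟨g, hg, φ, by simpa only [pow_zero, one_mul] using hgJ⟩
  | succ n ih =>
    exact ih (mul_mem (Submonoid.subset_closure hZ) hg)
      (T.pow_mul_mul_mem_of_pow_succ_mul_mem D hJ hu (.of_mem_closure hX hg) hgJ)

end

section

variable [NoZeroDivisors R] (T : LinearPrime act A B X h χX L u c θ) (I : PrimeSystem act A Y L)
  (D : OreStep act A B X h χX) (hu : u ∈ L)

include T I D hu

theorem der_eq_zero_of_ne (hq : q ∈ L) (hqu : q ≠ u) : innerSkewDer (act h) X q = 0 := by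
  have huP := I.isPrimeIn u hu
  have hqP := I.isPrimeIn q hq
  obtain ⟨φ, hφ⟩ := I.homogeneous q (I.subset hq)
  obtain ⟨t, -, e⟩ := I.qCommuting u (I.subset hu) q (I.subset hq)
  obtain ⟨d, hd, hcq⟩ := hqP.isNormalIn.exists_mul_eq_mul_left c T.const_mem
  have hdvd : DvdIn A q (u * innerSkewDer (act h) X q) := by
    refine ⟨d - (torusChar φ h * t) • c, sub_mem hd (Subalgebra.smul_mem _ T.const_mem _), ?_⟩
    rw [T.mul_der hqP.mem hφ e, hcq, mul_sub, mul_smul_comm]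
  rcases hqP.dvdIn_or_dvdIn huP.mem (D.der_mem q hqP.mem) hdvd with hqu' | ⟨d, hd, hδ⟩
  · exact absurd (I.eq_of_dvdIn u hu q hq hqu').symm hqu
  · obtain ⟨d', hd', e'⟩ := hqP.isNormalIn.exists_mul_eq_mul_right d hd
    exact D.der_eq_zero_of_der_eq_mul hd' hqP.mem (hδ.trans e')

theorem qCommute_gen_of_mem {z : R} (hz : z ∈ insert (u * X - c) (L \ {u})) : QCommute K X z := by
  rcases hz with rfl | ⟨hzL, hzu⟩
  · exact QCommute.symm ⟨_, inv_ne_zero (torusChar_ne_zero θ h), T.mul_gen⟩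
  · obtain ⟨φ, hφ⟩ := I.homogeneous z (I.subset hzL)
    refine ⟨torusChar φ h, torusChar_ne_zero φ h, ?_⟩
    rw [mul_eq_aut_mul_add_innerSkewDer (act h) X z, T.der_eq_zero_of_ne I D hu hzL hzu, hφ.apply,
      add_zero, smul_mul_assoc]

theorem primeSystem_insert_diff [Nontrivial R] :
    PrimeSystem act B (insert (u * X - c) Y) (insert (u * X - c) (L \ {u})) := by
  refine T.primeSystem_insert I D Set.sdiff_subset
    (fun q hq hqu => hq.2 (I.eq_of_dvdIn u hu q hq.1 hqu).symm)
    (fun q hq => T.der_eq_zero_of_ne I D hu hq.1 hq.2) fun J hJ χ f hf hf0 => ?_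
  obtain ⟨v, hv, n, ψ, hvψ⟩ := T.exists_mul_pow_mem I D hJ hf hf0
  have hL : QCommuting K L := fun a ha b hb => I.qCommuting a (I.subset ha) b (I.subset hb)
  obtain ⟨j, w, hw, t, ht, rfl⟩ := hL.exists_eq_smul_pow_mul hu hv
  refine T.exists_mem_of_pow_mul_mem D hJ (I.isPrimeIn u hu).mem (Set.mem_insert _ _)
    (fun z hz => T.qCommute_gen_of_mem I D hu hz) (n := j) (g := w * (u * X - c) ^ n) (φ := ψ)
    (mul_mem (Submonoid.closure_mono (Set.subset_insert _ _) hw)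
      (pow_mem (Submonoid.subset_closure (Set.mem_insert _ _)) n)) ?_
  rwa [smul_mul_assoc, Submodule.smul_mem_iff _ ht, mul_assoc] at hvψ

end

end LinearPrime

end PrimeSystemSteps

section HomogeneousPrimes

variable {K : Type u} [Field K] {R : Type v} [Ring R] [Algebra K R] {r : ℕ}
  {act : Torus K r →* (R ≃ₐ[K] R)} {A : Subalgebra K R} {p q : R} {χ : Fin r → ℤ}
  {Y L : Set R}

theorem PrimeSystem.bot [Nontrivial R] : PrimeSystem act (⊥ : Subalgebra K R) ∅ ∅ where
  finite := Set.finite_empty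
  subset := subset_rfl
  subset_algebra := Set.empty_subset _
  ne_zero := by simp
  homogeneous := by simp
  qCommuting := by simp [QCommuting]
  exists_denominator a ha := ⟨1, one_mem _, by simpa using ha⟩
  isPrimeIn := by simp
  eq_of_dvdIn := by simp
  exists_mem_gradedIdeal J hJ χ a ha ha0 := by
    obtain ⟨t, rfl⟩ := Algebra.mem_bot.1 (hJ.mem ha)
    have ht : t ≠ 0 := by
      rintro rfl
      exact ha0 (map_zero _)
    refine ⟨1, one_mem _, χ, ?_⟩
    rwa [Algebra.algebraMap_eq_smul_one, Submodule.smul_mem_iff _ ht] at ha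
  exists_algebraMap_eq a ha _ _ _ := by
    obtain ⟨t, rfl⟩ := Algebra.mem_bot.1 ha
    exact ⟨t, rfl⟩

/-- The graded ideal of multiples of `q` in `A`. -/
def gradedMultiples (act : Torus K r →* (R ≃ₐ[K] R)) (A : Subalgebra K R) (q : R)
    (χ : Fin r → ℤ) : Submodule K R where
  carrier := {a | IsEigenWith K act χ a ∧ DvdIn A q a}
  zero_mem' := ⟨.zero χ, 0, zero_mem _, (mul_zero q).symm⟩
  add_mem' := by
    rintro a b ⟨ha, d, hd, rfl⟩ ⟨hb, d', hd', rfl⟩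
    exact ⟨ha.add hb, d + d', add_mem hd hd', (mul_add q d d').symm⟩
  smul_mem' := by
    rintro t a ⟨ha, hqa⟩
    exact ⟨ha.smul t, hqa.smul t⟩

theorem IsNormalIn.isGradedIdeal_gradedMultiples (hq : IsNormalIn A q) :
    IsGradedIdeal act A (gradedMultiples act A q) where
  mem := by
    rintro χ a ⟨-, d, hd, rfl⟩
    exact mul_mem hq.mem hd
  isEigenWith ha := ha.1
  mul_left_mem ha hb hbψ := ⟨hbψ.mul ha.1, hq.dvdIn_mul_left ha.2 hb⟩
  mul_right_mem ha hb hbψ := ⟨ha.1.mul hbψ, ha.2.mul_right hb⟩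

theorem IsPrimeIn.smul (hp : IsPrimeIn K A p) (t : Kˣ) : IsPrimeIn K A ((t : K) • p) := by
  have dvdIn_smul {a : R} (ha : DvdIn A p a) : DvdIn A ((t : K) • p) a := by
    obtain ⟨d, hd, rfl⟩ := ha
    exact ⟨(t : K)⁻¹ • d, Subalgebra.smul_mem _ hd _, by
      rw [smul_mul_smul_comm, mul_inv_cancel₀ t.ne_zero, one_smul]⟩
  refine ⟨Subalgebra.smul_mem _ hp.mem _, smul_ne_zero t.ne_zero hp.ne_zero, ?_, ?_, ?_, ?_⟩
  · rintro ⟨w, hw, e, e'⟩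
    refine hp.2.2.1 ⟨(t : K) • w, Subalgebra.smul_mem _ hw _, ?_, ?_⟩
    · rwa [mul_smul_comm, ← smul_mul_assoc]
    · rwa [smul_mul_assoc, ← mul_smul_comm]
  · intro a ha
    obtain ⟨b, hb, e⟩ := hp.isNormalIn.exists_mul_eq_mul_left a ha
    exact ⟨b, hb, by rw [mul_smul_comm, e, smul_mul_assoc]⟩
  · intro a ha
    obtain ⟨b, hb, e⟩ := hp.isNormalIn.exists_mul_eq_mul_right a ha
    exact ⟨b, hb, by rw [mul_smul_comm, ← e, smul_mul_assoc]⟩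
  · rintro a ha b hb ⟨d, hd, e⟩
    have hab : DvdIn A p (a * b) :=
      ⟨(t : K) • d, Subalgebra.smul_mem _ hd _, by rw [e, mul_smul_comm, smul_mul_assoc]⟩
    exact (hp.dvdIn_or_dvdIn ha hb hab).imp dvdIn_smul dvdIn_smul

namespace PrimeSystem

theorem exists_dvdIn_of_isPrimeIn [NoZeroDivisors R] (I : PrimeSystem act A Y L)
    (hq : IsPrimeIn K A q) (hχ : IsEigenWith K act χ q) : ∃ p ∈ L, DvdIn A q p := by
  have hJ : IsGradedIdeal act A (gradedMultiples act A q) :=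
    hq.isNormalIn.isGradedIdeal_gradedMultiples
  have hqJ : q ∈ gradedMultiples act A q χ := ⟨hχ, 1, one_mem A, (mul_one q).symm⟩
  obtain ⟨v, hv, -, -, hqv⟩ := I.exists_mem_gradedIdeal _ hJ χ q hqJ hq.ne_zero
  induction hv using Submonoid.closure_induction with
  | mem p hp => exact ⟨p, hp, hqv⟩
  | one => exact absurd hqv hq.not_dvdIn_one
  | mul v w hv hw ihv ihw =>
    exact (hq.dvdIn_or_dvdIn (I.isNormalIn hv).mem (I.isNormalIn hw).mem hqv).elim ihv ihw

theorem exists_eq_algebraMap_of_mul_eq_one [Nontrivial R] (I : PrimeSystem act A Y L) {a b : R}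
    (ha : a ∈ A) (hb : b ∈ A) (hab : a * b = 1) : ∃ t : Kˣ, a = algebraMap K R t := by
  obtain ⟨t, rfl⟩ := I.exists_algebraMap_eq a ha b hb hab
  have ht : t ≠ 0 := by
    rintro rfl
    simp at hab
  exact ⟨Units.mk0 t ht, rfl⟩

variable [NoZeroDivisors R] [Nontrivial R]

theorem eq_smul_of_dvdIn (I : PrimeSystem act A Y L) (hp : p ∈ L) (hq : IsPrimeIn K A q)
    (hqp : DvdIn A q p) : ∃ t : Kˣ, q = (t : K) • p := by
  have hpP := I.isPrimeIn p hp
  obtain ⟨d, hd, e⟩ := hqp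
  rcases hpP.dvdIn_or_dvdIn hq.mem hd ⟨1, one_mem A, by rw [mul_one, e]⟩ with
    ⟨w, hw, e'⟩ | ⟨w, hw, e'⟩
  · have hwd : w * d = 1 := by
      apply mul_left_cancel₀ hpP.ne_zero
      rw [← mul_assoc, ← e', ← e, mul_one]
    obtain ⟨t, rfl⟩ := I.exists_eq_algebraMap_of_mul_eq_one hw hd hwd
    exact ⟨t, by rw [e', Algebra.smul_def, Algebra.commutes]⟩
  · obtain ⟨q', hq', e''⟩ := hpP.isNormalIn.exists_mul_eq_mul_left q hq.mem
    have hqw : q' * w = 1 := by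
      apply mul_left_cancel₀ hpP.ne_zero
      rw [← mul_assoc, ← e'', mul_one, mul_assoc, ← e', ← e]
    obtain ⟨t, rfl⟩ := I.exists_eq_algebraMap_of_mul_eq_one hq' hw hqw
    refine absurd ⟨algebraMap K R (t : K)⁻¹, A.algebraMap_mem _, ?_⟩ hq.not_dvdIn_one
    have hqt : q = algebraMap K R t := by
      apply mul_right_cancel₀ hpP.ne_zero
      rw [e'', Algebra.commutes]
    rw [hqt, ← map_mul, mul_inv_cancel₀ t.ne_zero, map_one]

theorem isPrimeIn_and_isEigenWith_iff (I : PrimeSystem act A Y L) :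
    (IsPrimeIn K A q ∧ ∃ χ, IsEigenWith K act χ q) ↔ ∃ p ∈ L, ∃ t : Kˣ, q = (t : K) • p := by
  constructor
  · rintro ⟨hq, χ, hχ⟩
    obtain ⟨p, hp, hqp⟩ := I.exists_dvdIn_of_isPrimeIn hq hχ
    exact ⟨p, hp, I.eq_smul_of_dvdIn hp hq hqp⟩
  · rintro ⟨p, hp, t, rfl⟩
    obtain ⟨χ, hχ⟩ := I.homogeneous p (I.subset hp)
    exact ⟨(I.isPrimeIn p hp).smul t, χ, hχ.smul _⟩

end PrimeSystem

end HomogeneousPrimes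

section OrderedMonomials

variable {K : Type u} [Field K] {R : Type v} [Ring R] [Algebra K R] {N n : ℕ} {x : Fin N → R}
  {m : Fin N → ℕ} {j : Fin N} {a b : R}

theorem prod_map_pow_mul_pow {ι M : Type*} [Preorder ι] [DecidableEq ι] [Monoid M] (x : ι → M)
    {m : ι → ℕ} {k : ι} (n : ℕ) (hm : ∀ i, k ≤ i → m i = 0) {l : List ι}
    (hl : l.Pairwise (· < ·)) (hk : k ∈ l) :
    (l.map fun i => x i ^ m i).prod * x k ^ n =
      (l.map fun i => x i ^ Function.update m k n i).prod := by
  induction l with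
  | nil => simp at hk
  | cons i l ih =>
    obtain ⟨hil, hl⟩ := List.pairwise_cons.1 hl
    rcases eq_or_ne i k with rfl | hik
    · have old : l.map (fun i => x i ^ m i) = l.map fun _ => 1 :=
        List.map_congr_left fun j hj => by rw [hm j (hil j hj).le, pow_zero]
      have new : l.map (fun j => x j ^ Function.update m i n j) = l.map fun _ => 1 :=
        List.map_congr_left fun j hj => by
          rw [Function.update_of_ne (hil j hj).ne', hm j (hil j hj).le, pow_zero]
      simp [old, new, hm i le_rfl]
    · have hkl : k ∈ l := (List.mem_cons.1 hk).resolve_left hik.symm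
      rw [List.map_cons, List.map_cons, List.prod_cons, List.prod_cons, mul_assoc, ih hl hkl,
        Function.update_of_ne hik]

/-- The exponent vectors of monomials in the first `k` of the `N` generators. -/
def exponentsBelow (N k : ℕ) : Set (Fin N → ℕ) := {m | ∀ i : Fin N, k ≤ i → m i = 0}

theorem update_mem_exponentsBelow (hm : m ∈ exponentsBelow N j) (n : ℕ) :
    Function.update m j n ∈ exponentsBelow N (j + 1) := by
  intro i hi
  rw [Function.update_of_ne (by rintro rfl; lia)]
  exact hm i (by lia)

theorem ordMonomial_mul_pow (x : Fin N → R) (hm : m ∈ exponentsBelow N j) (n : ℕ) :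
    ordMonomial x m * x j ^ n = ordMonomial x (Function.update m j n) :=
  prod_map_pow_mul_pow x n hm (List.pairwise_lt_finRange N) (List.mem_finRange j)

theorem update_injOn_exponentsBelow (j : Fin N) (n : ℕ) :
    Set.InjOn (fun m => Function.update m j n) (exponentsBelow N j) := by
  intro m hm m' hm' h
  funext i
  rcases eq_or_ne i j with rfl | hi
  · rw [hm i le_rfl, hm' i le_rfl]
  · simpa [hi] using congrFun h i

theorem mul_pow_mem_span_ordMonomial
    (ha : a ∈ Submodule.span K (ordMonomial x '' exponentsBelow N j)) (n : ℕ) :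
    a * x j ^ n ∈
      Submodule.span K (ordMonomial x '' {m | m ∈ exponentsBelow N (j + 1) ∧ m j = n}) := by
  induction ha using Submodule.span_induction with
  | mem z hz =>
    obtain ⟨m, hm, rfl⟩ := hz
    rw [ordMonomial_mul_pow x hm]
    exact Submodule.subset_span ⟨_, ⟨update_mem_exponentsBelow hm n, by simp⟩, rfl⟩
  | zero => simp
  | add a b _ _ ha hb =>
    rw [add_mul]
    exact add_mem ha hb
  | smul t a _ ha =>
    rw [smul_mul_assoc]
    exact Submodule.smul_mem _ _ ha

theorem mem_span_ordMonomial_of_mem_skewDegreeLT {A : Subalgebra K R}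
    (hA : ∀ a ∈ A, a ∈ Submodule.span K (ordMonomial x '' exponentsBelow N j))
    (hb : b ∈ skewDegreeLT A (x j) n) :
    b ∈ Submodule.span K (ordMonomial x '' {m | m ∈ exponentsBelow N (j + 1) ∧ m j < n}) := by
  induction hb using skewDegreeLT_induction with
  | zero => exact zero_mem _
  | add_mul_pow n f a _ ha ih =>
    refine add_mem (Submodule.span_mono (Set.image_mono ?_) ih) (Submodule.span_mono
      (Set.image_mono ?_) (mul_pow_mem_span_ordMonomial (hA a ha) n))
    · exact fun m hm => ⟨hm.1, hm.2.trans n.lt_succ_self⟩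
    · exact fun m hm => ⟨hm.1, hm.2.trans_lt n.lt_succ_self⟩

theorem eq_zero_of_map_eq_zero_of_mem_span {S ι M : Type*} [Ring S] [AddCommGroup M] [Module S M]
    {v : ι → M} (hv : LinearIndependent S v) {s : Set ι} {g : ι → ι} (hg : s.InjOn g)
    {φ : M →ₗ[S] M} (hφ : ∀ i ∈ s, φ (v i) = v (g i)) {a : M} (ha : a ∈ Submodule.span S (v '' s))
    (ha0 : φ a = 0) : a = 0 := by
  obtain ⟨c, hc, rfl⟩ := (Finsupp.mem_span_image_iff_linearCombination S).1 ha
  have hvs : LinearIndepOn S (φ ∘ v) s := by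
    refine (linearIndepOn_congr (w := v ∘ g) hφ).2 ?_
    exact hv.comp (fun i : s => g i) hg.injective
  rw [linearIndepOn_iff.1 hvs c hc (by rwa [← Finsupp.apply_linearCombination]), map_zero]

theorem leftIndependentPowers_of_ordMonomial (hx : LinearIndependent K (ordMonomial (R := R) x))
    {A : Subalgebra K R}
    (hA : ∀ a ∈ A, a ∈ Submodule.span K (ordMonomial x '' exponentsBelow N j)) :
    LeftIndependentPowers A (x j) := by
  intro n a ha hlow
  have hdisjoint := hx.disjoint_span_image
    (s := {m | m ∈ exponentsBelow N (j + 1) ∧ m j = n})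
    (t := {m | m ∈ exponentsBelow N (j + 1) ∧ m j < n})
    (Set.disjoint_left.2 fun m hm hm' => hm'.2.ne hm.2)
  have hzero : a * x j ^ n = 0 := Submodule.disjoint_def.1 hdisjoint _
    (mul_pow_mem_span_ordMonomial (hA a ha) n) (mem_span_ordMonomial_of_mem_skewDegreeLT hA hlow)
  exact eq_zero_of_map_eq_zero_of_mem_span hx (update_injOn_exponentsBelow j n)
    (φ := LinearMap.mulRight K (x j ^ n)) (fun m hm => ordMonomial_mul_pow x hm n) (hA a ha) hzero

end OrderedMonomials

section Presentation

variable {K : Type u} [Field K] {R : Type v} [Ring R] [Algebra K R] {r N : ℕ}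

theorem Rsub_mono (x : Fin N → R) {m n : ℕ} (h : m ≤ n) : Rsub K x m ≤ Rsub K x n :=
  Algebra.adjoin_mono (Set.image_mono fun _ hl => lt_of_lt_of_le hl h)

theorem mem_Rsub (x : Fin N → R) {l : Fin N} {m : ℕ} (h : l < m) : x l ∈ Rsub K x m :=
  Algebra.subset_adjoin ⟨l, h, rfl⟩

theorem Rsub_zero (x : Fin N → R) : Rsub K x 0 = ⊥ := by
  simp [Rsub]

theorem Rsub_eq_adjoin_range (x : Fin N → R) : Rsub K x N = Algebra.adjoin K (Set.range x) := by
  simp [Rsub]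

theorem Rsub_succ_le (x : Fin N → R) (k : Fin N) :
    Rsub K x (k + 1) ≤ Algebra.adjoin K (insert (x k) (Rsub K x k : Set R)) := by
  refine Algebra.adjoin_mono ?_
  rintro _ ⟨l, hl, rfl⟩
  rcases Nat.lt_succ_iff_lt_or_eq.1 hl with hlk | hlk
  · exact Set.mem_insert_of_mem _ (mem_Rsub x hlk)
  · rw [Fin.ext hlk]
    exact Set.mem_insert _ _

namespace QNA

variable (Q : QNA K R N r)

include Q in
theorem nontrivial : Nontrivial R :=
  ⟨_, _, Q.pbw.ne_zero (0 : Fin N → ℕ)⟩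

theorem x_ne_zero (k : Fin N) : Q.x k ≠ 0 := by
  intro h
  refine Q.pbw.ne_zero (Pi.single k 1 : Fin N → ℕ) (List.prod_eq_zero (List.mem_map.2 ?_))
  exact ⟨k, List.mem_finRange k, by simp [h]⟩

theorem act_mem_Rsub (m : ℕ) (ξ : Torus K r) {a : R} (ha : a ∈ Rsub K Q.x m) :
    Q.act ξ a ∈ Rsub K Q.x m := by
  induction ha using Algebra.adjoin_induction with
  | mem z hz =>
    obtain ⟨l, hl, rfl⟩ := hz
    obtain ⟨f, hf⟩ := Q.eigenvec l
    rw [hf.apply]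
    exact Subalgebra.smul_mem _ (mem_Rsub Q.x hl) _
  | algebraMap t =>
    rw [AlgEquiv.commutes]
    exact Subalgebra.algebraMap_mem _ t
  | add a b _ _ ha hb =>
    rw [map_add]
    exact add_mem ha hb
  | mul a b _ _ ha hb =>
    rw [map_mul]
    exact mul_mem ha hb

theorem isOreGenerator (k : Fin N) : IsOreGenerator (Rsub K Q.x k) (Q.x k) (Q.act (Q.h k)) where
  map_mem _ ha := Q.act_mem_Rsub k (Q.h k) ha
  comm_mem := Q.stable k

theorem exists_mem_skewDegreeLT (k : Fin N) {b : R} (hb : b ∈ Rsub K Q.x (k + 1)) :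
    ∃ n, b ∈ skewDegreeLT (Rsub K Q.x k) (Q.x k) n :=
  (Q.isOreGenerator k).exists_mem_skewDegreeLT (Rsub_succ_le Q.x k hb)

theorem mem_span_ordMonomial {k : ℕ} (hk : k ≤ N) {a : R} (ha : a ∈ Rsub K Q.x k) :
    a ∈ Submodule.span K (ordMonomial Q.x '' exponentsBelow N k) := by
  induction k generalizing a with
  | zero =>
    rw [Rsub_zero] at ha
    obtain ⟨t, rfl⟩ := Algebra.mem_bot.1 ha
    rw [Algebra.algebraMap_eq_smul_one]
    exact Submodule.smul_mem _ _ (Submodule.subset_span ⟨0, fun _ _ => rfl, by simp [ordMonomial]⟩)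
  | succ k ih =>
    obtain ⟨n, hn⟩ := Q.exists_mem_skewDegreeLT ⟨k, hk⟩ ha
    have hspan := mem_span_ordMonomial_of_mem_skewDegreeLT (j := ⟨k, hk⟩)
      (fun a ha => ih (Nat.le_of_succ_le hk) ha) hn
    exact Submodule.span_mono (Set.image_mono fun m hm => hm.1) hspan

theorem leftIndependentPowers (k : Fin N) : LeftIndependentPowers (Rsub K Q.x k) (Q.x k) :=
  leftIndependentPowers_of_ordMonomial Q.pbw fun _ ha => Q.mem_span_ordMonomial k.2.le ha

theorem torusChar_h {k : Fin N} {χ : Fin r → ℤ} (hχ : IsEigenWith K Q.act χ (Q.x k)) :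
    torusChar χ (Q.h k) = Q.lam k :=
  smul_left_injective K (Q.x_ne_zero k) ((hχ.apply (Q.h k)).symm.trans (Q.hx k))

theorem exists_oreStep (k : Fin N) :
    ∃ χ, OreStep Q.act (Rsub K Q.x k) (Rsub K Q.x (k + 1)) (Q.x k) (Q.h k) χ := by
  obtain ⟨χ, hχ⟩ := Q.eigenvec k
  exact ⟨χ, {
    act_mem := fun ξ _ ha => Q.act_mem_Rsub k ξ ha
    le := Rsub_mono Q.x (Nat.le_succ k)
    gen_mem := mem_Rsub Q.x (Nat.lt_succ_self k)
    der_mem := Q.stable k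
    der_nilpotent := Q.locnil k
    gen_isEigenWith := hχ
    torusChar_pow_ne_one := by
      rw [Q.torusChar_h hχ]
      exact Q.lam_not_root k
    exists_degree := fun _ hb => Q.exists_mem_skewDegreeLT k hb
    indep := Q.leftIndependentPowers k }⟩

theorem mul_ne_zero {k : ℕ} (hk : k ≤ N) : ∀ a ∈ Rsub K Q.x k, ∀ b ∈ Rsub K Q.x k,
    a ≠ 0 → b ≠ 0 → a * b ≠ 0 := by
  induction k with
  | zero =>
    have := Q.nontrivial
    intro a ha b hb ha0 hb0
    rw [Rsub_zero] at ha hb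
    obtain ⟨s, rfl⟩ := Algebra.mem_bot.1 ha
    obtain ⟨t, rfl⟩ := Algebra.mem_bot.1 hb
    rw [← map_mul]
    rw [map_ne_zero] at ha0 hb0 ⊢
    exact _root_.mul_ne_zero ha0 hb0
  | succ k ih =>
    obtain ⟨χ, D⟩ := Q.exists_oreStep ⟨k, hk⟩
    exact fun a ha b hb => D.mul_ne_zero_of_mem (ih (Nat.le_of_succ_le hk)) ha hb

include Q in
theorem noZeroDivisors : NoZeroDivisors R where
  eq_zero_or_eq_zero_of_mul_eq_zero {a b} hab := by
    have mem (a : R) : a ∈ Rsub K Q.x N := by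
      rw [Rsub_eq_adjoin_range, Q.gen]
      trivial
    by_contra! h
    exact Q.mul_ne_zero le_rfl a (mem a) b (mem b) h.1 h.2 hab

end QNA

end Presentation

section LevelSets

variable {N m : ℕ} {η η' : Fin N → ℤ} {j k l : Fin N}

/-- `l` is the last index below `m` in its level set of `η`, that is, `l < m ≤ s(l)`. -/
def IsLastBelow (η : Fin N → ℤ) (m : ℕ) (l : Fin N) : Prop :=
  l < m ∧ ∀ l' : Fin N, l < l' → l' < m → η l' ≠ η l

theorem isLastBelow_succ_iff :
    IsLastBelow η (k + 1) l ↔ l ≤ k ∧ ∀ l' : Fin N, l < l' → l' ≤ k → η l' ≠ η l := by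
  simp only [IsLastBelow, Nat.lt_succ_iff, Fin.le_def]

theorem isLastBelow_succ_iff_eq_or :
    IsLastBelow η (k + 1) l ↔ l = k ∨ IsLastBelow η k l ∧ η k ≠ η l := by
  rw [isLastBelow_succ_iff]
  constructor
  · rintro ⟨hlk, hlast⟩
    exact hlk.eq_or_lt.imp id fun h => ⟨⟨h, fun i hli hik => hlast i hli (le_of_lt hik)⟩,
      hlast k h le_rfl⟩
  · rintro (rfl | ⟨hl, hkl⟩)
    · exact ⟨le_rfl, fun i hli hil => absurd hli hil.not_gt⟩
    · refine ⟨le_of_lt hl.1, fun i hli hik => ?_⟩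
      rcases hik.eq_or_lt with rfl | hik
      · exact hkl
      · exact hl.2 i hli hik

theorem isLastBelow_succ_self (η : Fin N → ℤ) (k : Fin N) : IsLastBelow η (k + 1) k :=
  isLastBelow_succ_iff_eq_or.2 (Or.inl rfl)

theorem IsLastBelow.eq_of_eq (hl : IsLastBelow η m l) (hj : IsLastBelow η m j) (e : η l = η j) :
    l = j := by
  rcases lt_trichotomy l j with h | h | h
  · exact absurd e.symm (hl.2 j h hj.1)
  · exact h
  · exact absurd e (hj.2 l h hl.1)

theorem IsLastBelow.congr (hl : IsLastBelow η m l) (h : ∀ i : Fin N, i < m → η' i = η i) :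
    IsLastBelow η' m l := by
  refine ⟨hl.1, fun i hli him => ?_⟩
  rw [h i him, h l hl.1]
  exact hl.2 i hli him

theorem isLastBelow_congr (h : ∀ i : Fin N, i < m → η' i = η i) :
    IsLastBelow η' m = IsLastBelow η m :=
  funext fun _ => propext ⟨fun hl => hl.congr fun i hi => (h i hi).symm, fun hl => hl.congr h⟩

theorem image_isLastBelow_congr {α : Type*} {y y' : Fin N → α}
    (hη : ∀ i : Fin N, i < m → η' i = η i) (hy : ∀ i : Fin N, i < m → y' i = y i) :
    y' '' {i | IsLastBelow η' m i} = y '' {i | IsLastBelow η m i} := by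
  rw [isLastBelow_congr hη]
  exact Set.image_congr fun i hi => hy i hi.1

theorem exists_isLastBelow (η : Fin N → ℤ) (hl : l < m) :
    ∃ j, IsLastBelow η m j ∧ l ≤ j ∧ η j = η l := by
  obtain ⟨j, hj, hmax⟩ := (Finset.univ.filter fun i : Fin N => i < m ∧ η i = η l).exists_max_image
    id ⟨l, by simp [hl]⟩
  simp only [Finset.mem_filter, Finset.mem_univ, true_and, id] at hj hmax
  exact ⟨j, ⟨hj.1, fun i hji him e => hji.not_ge (hmax i ⟨him, e.trans hj.2⟩)⟩,
    hmax l ⟨hl, rfl⟩, hj.2⟩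

theorem predIdx_eq_of_isLastBelow (hl : IsLastBelow η k l) (e : η k = η l) :
    predIdx η k = l := by
  refine le_antisymm (Finset.max_le fun i hi => ?_) (Finset.le_max ?_)
  · obtain ⟨hik, hi⟩ := (Finset.mem_filter.1 hi).2
    rw [WithBot.coe_le_coe]
    by_contra! hli
    exact hl.2 i hli hik (hi.trans e)
  · exact Finset.mem_filter.2 ⟨Finset.mem_univ l, hl.1, e.symm⟩

theorem lt_of_predIdx_eq (h : predIdx η k = l) : l < k :=
  (Finset.mem_filter.1 (Finset.mem_of_max h)).2.1

theorem eq_iff_eq_of_isLastBelow_iff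
    (h : ∀ m ≤ N, ∀ l, IsLastBelow η' m l ↔ IsLastBelow η m l) (k l : Fin N) :
    η' k = η' l ↔ η k = η l := by
  have of_lt (k : Fin N) : ∀ l < k, η' k = η' l ↔ η k = η l := by
    induction k using WellFoundedLT.induction with
    | ind k ih =>
      intro l hlk
      obtain ⟨j, hj, hlj, e⟩ := exists_isLastBelow (m := k) η hlk
      have e' : η' j = η' l := by
        rcases hlj.eq_or_lt with rfl | hlj
        · rfl
        · exact (ih j hj.1 l hlj).2 e
      have hjk := h (k + 1) k.2 j
      rw [isLastBelow_succ_iff_eq_or, isLastBelow_succ_iff_eq_or, h k k.2.le] at hjk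
      simp only [hj, (show j < k from hj.1).ne, true_and, false_or] at hjk
      rw [← e, ← e']
      exact not_iff_not.1 hjk
  rcases lt_trichotomy k l with hkl | rfl | hlk
  · rw [eq_comm, of_lt l k hkl, eq_comm]
  · simp only
  · exact of_lt k l hlk

end LevelSets

section Construction

variable {K : Type u} [Field K] {R : Type v} [Ring R] [Algebra K R] {r N : ℕ}

/-- The state of the recursive construction of `(η, c, y)` once the indices below `k` have been
treated; the values at later indices are irrelevant. The predecessor `p(i)` occurs as the last
index `p < i` in the level set of `i`. -/
structure PrimeConstruction (Q : QNA K R N r) (k : ℕ) (η : Fin N → ℤ) (c y : Fin N → R) :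
    Prop where
  primeSystem : ∀ m ≤ k, PrimeSystem Q.act (Rsub K Q.x m) (y '' {i | i < m})
    (y '' {i | IsLastBelow η m i})
  eq_x : ∀ i : Fin N, i < k → deltaZero K Q i → y i = Q.x i
  exists_pred : ∀ i : Fin N, i < k → ¬ deltaZero K Q i → c i ∈ Rsub K Q.x i ∧
    ∃ p, IsLastBelow η i p ∧ η i = η p ∧ y i = y p * Q.x i - c i

namespace PrimeConstruction

variable {Q : QNA K R N r} {m n : ℕ} {η η' : Fin N → ℤ} {c c' y y' : Fin N → R} {i j k : Fin N}

theorem mem (S : PrimeConstruction Q n η c y) (hm : m ≤ n) (hi : i < m) : y i ∈ Rsub K Q.x m :=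
  (S.primeSystem m hm).subset_algebra ⟨i, hi, rfl⟩

theorem ne_zero (S : PrimeConstruction Q n η c y) (hi : i < n) : y i ≠ 0 :=
  (S.primeSystem n le_rfl).ne_zero _ ⟨i, hi, rfl⟩

theorem notMem (S : PrimeConstruction Q n η c y) (hi : i < n) : y i ∉ Rsub K Q.x i := by
  by_cases h : deltaZero K Q i
  · have := Q.nontrivial
    rw [S.eq_x i hi h]
    simpa using (Q.leftIndependentPowers i).mul_sub_notMem (one_mem _) one_ne_zero (zero_mem _)
  · obtain ⟨hc, p, hp, -, e⟩ := S.exists_pred i hi h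
    rw [e]
    exact (Q.leftIndependentPowers i).mul_sub_notMem (S.mem hi.le hp.1)
      (S.ne_zero (hp.1.trans hi)) hc

theorem eq_of_eq_smul (S : PrimeConstruction Q n η c y) (hi : i < n) (hj : j < n) {t : Kˣ}
    (e : y i = (t : K) • y j) : i = j := by
  rcases lt_trichotomy i j with hij | hij | hji
  · refine absurd ?_ (S.notMem hj)
    have hmem : (t : K) • y j ∈ Rsub K Q.x j := e ▸ S.mem hj.le hij
    exact (Submodule.smul_mem_iff (Subalgebra.toSubmodule (Rsub K Q.x j)) t.ne_zero).1 hmem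
  · exact hij
  · refine absurd ?_ (S.notMem hi)
    rw [e]
    exact Subalgebra.smul_mem _ (S.mem hi.le hji) _

theorem zero (Q : QNA K R N r) (η : Fin N → ℤ) (c y : Fin N → R) :
    PrimeConstruction Q 0 η c y where
  primeSystem m hm := by
    have := Q.nontrivial
    obtain rfl := Nat.le_zero.1 hm
    simpa [Rsub_zero, IsLastBelow] using PrimeSystem.bot
  eq_x _ hi := absurd hi (Nat.not_lt_zero _)
  exists_pred _ hi := absurd hi (Nat.not_lt_zero _)

theorem congr (S : PrimeConstruction Q n η c y) (hη : ∀ i : Fin N, i < n → η' i = η i)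
    (hc : ∀ i : Fin N, i < n → c' i = c i) (hy : ∀ i : Fin N, i < n → y' i = y i) :
    PrimeConstruction Q n η' c' y' where
  primeSystem m hm := by
    have himage : y' '' {i | i < m} = y '' {i | i < m} :=
      Set.image_congr fun i hi => hy i (lt_of_lt_of_le hi hm)
    rw [himage, image_isLastBelow_congr (fun i hi => hη i (hi.trans_le hm))
      fun i hi => hy i (hi.trans_le hm)]
    exact S.primeSystem m hm
  eq_x i hi h := (hy i hi).trans (S.eq_x i hi h)
  exists_pred i hi h := by
    obtain ⟨hci, p, hp, e, ey⟩ := S.exists_pred i hi h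
    have hpn : p < n := hp.1.trans hi
    rw [hc i hi, hη i hi, hy i hi]
    exact ⟨hci, p, hp.congr fun j hj => hη j (hj.trans hi), e.trans (hη p hpn).symm,
      by rw [hy p hpn, ey]⟩

theorem succ (S : PrimeConstruction Q k η c y)
    (I : PrimeSystem Q.act (Rsub K Q.x (k + 1)) (insert (y k) (y '' {i | (i : ℕ) < k}))
      (insert (y k) (y '' {i | IsLastBelow η k i ∧ η k ≠ η i})))
    (hx : deltaZero K Q k → y k = Q.x k)
    (hpred : ¬ deltaZero K Q k → c k ∈ Rsub K Q.x k ∧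
      ∃ p, IsLastBelow η k p ∧ η k = η p ∧ y k = y p * Q.x k - c k) :
    PrimeConstruction Q (k + 1) η c y where
  primeSystem m hm := by
    rcases hm.eq_or_lt with rfl | hm
    · convert I using 1 <;> rw [← Set.image_insert_eq] <;> congr 1 <;> ext i
      · simp only [Set.mem_insert_iff, Set.mem_ofPred_eq, Fin.ext_iff]
        lia
      · exact isLastBelow_succ_iff_eq_or
    · exact S.primeSystem m (Nat.lt_succ_iff.1 hm)
  eq_x i hi := by
    rcases (Nat.lt_succ_iff.1 hi).eq_or_lt with hik | hik
    · rwa [Fin.ext hik]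
    · exact S.eq_x i hik
  exists_pred i hi := by
    rcases (Nat.lt_succ_iff.1 hi).eq_or_lt with hik | hik
    · rwa [Fin.ext hik]
    · exact S.exists_pred i hik

theorem extend (S : PrimeConstruction Q k η c y) (e : ℤ) (ck yk : R)
    (I : PrimeSystem Q.act (Rsub K Q.x (k + 1)) (insert yk (y '' {i | (i : ℕ) < k}))
      (insert yk (y '' {i | IsLastBelow η k i ∧ e ≠ η i})))
    (hx : deltaZero K Q k → yk = Q.x k)
    (hpred : ¬ deltaZero K Q k → ck ∈ Rsub K Q.x k ∧
      ∃ p, IsLastBelow η k p ∧ e = η p ∧ yk = y p * Q.x k - ck) :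
    ∃ η c y, PrimeConstruction Q (k + 1) η c y := by
  have hη (i : Fin N) (hi : (i : ℕ) < k) : Function.update η k e i = η i :=
    Function.update_of_ne (Fin.ne_of_lt hi) _ _
  have hc (i : Fin N) (hi : (i : ℕ) < k) : Function.update c k ck i = c i :=
    Function.update_of_ne (Fin.ne_of_lt hi) _ _
  have hy (i : Fin N) (hi : (i : ℕ) < k) : Function.update y k yk i = y i :=
    Function.update_of_ne (Fin.ne_of_lt hi) _ _
  refine ⟨_, _, _, (S.congr hη hc hy).succ ?_ ?_ ?_⟩
  · have hlast : {i | IsLastBelow (Function.update η k e) k i ∧ e ≠ Function.update η k e i} =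
        {i | IsLastBelow η k i ∧ e ≠ η i} := by
      rw [isLastBelow_congr hη]
      exact Set.ext fun i => and_congr_right fun hi => by rw [hη i hi.1]
    have himage : Function.update y k yk '' {i | (i : ℕ) < k} = y '' {i | (i : ℕ) < k} :=
      Set.image_congr hy
    have himage_last : Function.update y k yk '' {i | IsLastBelow η k i ∧ e ≠ η i} =
        y '' {i | IsLastBelow η k i ∧ e ≠ η i} :=
      Set.image_congr fun i hi => hy i hi.1.1
    rw [Function.update_self, Function.update_self, hlast, himage, himage_last]
    exact I
  · rwa [Function.update_self]
  · intro h
    obtain ⟨hck, p, hp, ep, ey⟩ := hpred h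
    simp only [Function.update_self]
    exact ⟨hck, p, hp.congr hη, ep.trans (hη p hp.1).symm, by rw [hy p hp.1, ey]⟩

theorem image_isLastBelow_ne (S : PrimeConstruction Q n η c y) (hi : IsLastBelow η n i) :
    y '' {j | IsLastBelow η n j ∧ η i ≠ η j} = y '' {j | IsLastBelow η n j} \ {y i} := by
  have inj : Set.InjOn y {j | j < n} := fun j hj l hl e =>
    S.eq_of_eq_smul hj hl (t := 1) (by simpa using e)
  rw [← Set.image_singleton, ← (inj.mono fun j hj => hj.1).image_sdiff_subset
    (Set.singleton_subset_iff.2 hi)]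
  congr 1
  ext j
  exact and_congr_right fun hj => not_congr ⟨fun e => hj.eq_of_eq hi e.symm, fun e => by rw [e]⟩

theorem exists_succ (S : PrimeConstruction Q k η c y) :
    ∃ η c y, PrimeConstruction Q (k + 1) η c y := by
  have := Q.nontrivial
  have := Q.noZeroDivisors
  obtain ⟨χ, D⟩ := Q.exists_oreStep k
  have I := S.primeSystem k le_rfl
  by_cases h : deltaZero K Q k
  · obtain ⟨M, hM⟩ := (Set.finite_range η).bddAbove
    have fresh (i : Fin N) : M + 1 ≠ η i := ((hM ⟨i, rfl⟩).trans_lt (lt_add_one M)).ne'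
    refine S.extend (M + 1) 0 (Q.x k) ?_ (fun _ => rfl) (absurd h)
    simpa only [fresh, ne_eq, not_false_eq_true, and_true] using
      D.primeSystem_insert_of_der_eq_zero I h
  · have hδ : ∃ a ∈ Rsub K Q.x k, innerSkewDer (Q.act (Q.h k)) (Q.x k) a ≠ 0 := by
      by_contra! hδ
      exact h hδ
    obtain ⟨_, ⟨p, hp, rfl⟩, ck, θ, T⟩ := D.exists_linearPrime I hδ
    refine S.extend (η p) ck (y p * Q.x k - ck) ?_ (absurd · h)
      fun _ => ⟨T.const_mem, p, hp, rfl, rfl⟩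
    rw [S.image_isLastBelow_ne hp]
    exact T.primeSystem_insert_diff I D ⟨p, hp, rfl⟩

theorem exists_of_le (Q : QNA K R N r) (hn : n ≤ N) : ∃ η c y, PrimeConstruction Q n η c y := by
  induction n with
  | zero => exact ⟨0, 0, 0, .zero Q 0 0 0⟩
  | succ n ih =>
    obtain ⟨η, c, y, S⟩ := ih (Nat.le_of_succ_le hn)
    exact S.exists_succ (k := ⟨n, hn⟩)

section Complete

variable {u v b : R} (S : PrimeConstruction Q N η c y)

include S

theorem isPrimeIn_and_isEigenWith_iff (k : Fin N) :
    (IsPrimeIn K (Rsub K Q.x (k + 1)) u ∧ ∃ f, IsEigenWith K Q.act f u) ↔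
      ∃ l, IsLastBelow η (k + 1) l ∧ ∃ t : Kˣ, u = (t : K) • y l := by
  have := Q.nontrivial
  have := Q.noZeroDivisors
  rw [(S.primeSystem (k + 1) k.2).isPrimeIn_and_isEigenWith_iff]
  simp only [Set.exists_mem_image, Set.mem_ofPred_eq]

theorem isPrimeIn (k : Fin N) : IsPrimeIn K (Rsub K Q.x (k + 1)) (y k) :=
  (S.primeSystem (k + 1) k.2).isPrimeIn _ ⟨k, isLastBelow_succ_self η k, rfl⟩

theorem isPrimeSeq : IsPrimeSeq K Q η c y where
  c_mem k hk := (S.exists_pred k k.2 hk).1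
  rec_delta_zero k hk := S.eq_x k k.2 hk
  rec_delta_ne k hk := by
    obtain ⟨-, p, hp, e, h⟩ := S.exists_pred k k.2 hk
    rw [predIdx_eq_of_isLastBelow hp e]
    exact h
  homog k := (S.primeSystem N le_rfl).homogeneous _ ⟨k, k.2, rfl⟩
  prime_iff k u := by
    simp only [S.isPrimeIn_and_isEigenWith_iff k, isLastBelow_succ_iff, and_assoc]

theorem exists_mul_gen_sub_eq_smul (hv : v ∈ Rsub K Q.x k) (hv0 : v ≠ 0) (hb : b ∈ Rsub K Q.x k)
    (hu : IsPrimeIn K (Rsub K Q.x (k + 1)) (v * Q.x k - b))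
    (hχ : ∃ f, IsEigenWith K Q.act f (v * Q.x k - b)) :
    ∃ t : Kˣ, v * Q.x k - b = (t : K) • y k := by
  obtain ⟨l, hl, t, e⟩ := (S.isPrimeIn_and_isEigenWith_iff k).1 ⟨hu, hχ⟩
  rcases isLastBelow_succ_iff_eq_or.1 hl with rfl | ⟨hl, -⟩
  · exact ⟨t, e⟩
  · refine absurd ?_ ((Q.leftIndependentPowers k).mul_sub_notMem hv hv0 hb)
    rw [e]
    exact Subalgebra.smul_mem _ (S.mem k.2.le hl.1) _

theorem exists_eq_smul_of_mul_gen_sub_eq_smul (hk : ¬ deltaZero K Q k) (hv : v ∈ Rsub K Q.x k)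
    (hb : b ∈ Rsub K Q.x k) {t : Kˣ} (e : v * Q.x k - b = (t : K) • y k) :
    ∃ p, IsPrimeIn K (Rsub K Q.x k) (y p) ∧ v = (t : K) • y p := by
  obtain ⟨hc, p, hp, -, ey⟩ := S.exists_pred k k.2 hk
  refine ⟨p, (S.primeSystem k k.2.le).isPrimeIn _ ⟨p, hp, rfl⟩, ?_⟩
  rw [ey, smul_sub, ← smul_mul_assoc] at e
  exact ((Q.leftIndependentPowers k).linear_unique hv hb
    (Subalgebra.smul_mem _ (S.mem k.2.le hp.1) _) (Subalgebra.smul_mem _ hc _) e).1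

theorem eq_of_isPrimeSeq_of_not_deltaZero (P : IsPrimeSeq K Q η' c' y') (hk : ¬ deltaZero K Q k)
    (ih : ∀ i < k, y' i = y i) : y' k = y k := by
  have := Q.nontrivial
  obtain ⟨hprime, hχ⟩ := (P.prime_iff k (y' k)).2
    ⟨k, le_rfl, fun l hkl hlk => absurd hkl hlk.not_gt, 1, by simp⟩
  have hc := P.c_mem k hk
  have hrec := P.rec_delta_ne k hk
  cases hq : predIdx η' k using WithBot.recBotCoe with
  | bot =>
    rw [hq, WithBot.recBotCoe_bot] at hrec
    rw [hrec] at hprime hχ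
    obtain ⟨t, e⟩ := S.exists_mul_gen_sub_eq_smul (one_mem _) one_ne_zero hc hprime hχ
    obtain ⟨p, hp, e⟩ := S.exists_eq_smul_of_mul_gen_sub_eq_smul hk (one_mem _) hc e
    exact absurd ⟨_, Subalgebra.algebraMap_mem _ (t : K), by rw [e, ← Algebra.commutes,
      ← Algebra.smul_def], by rw [e, ← Algebra.smul_def]⟩ hp.2.2.1
  | coe q =>
    have hqk := lt_of_predIdx_eq hq
    rw [hq, WithBot.recBotCoe_coe, ih q hqk] at hrec
    rw [hrec] at hprime hχ ⊢
    have hyq := S.mem k.2.le hqk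
    obtain ⟨t, e⟩ := S.exists_mul_gen_sub_eq_smul hyq (S.ne_zero q.2) hc hprime hχ
    obtain ⟨p, -, ep⟩ := S.exists_eq_smul_of_mul_gen_sub_eq_smul hk hyq hc e
    obtain rfl := S.eq_of_eq_smul q.2 p.2 ep
    have ht : (t : K) = 1 :=
      smul_left_injective K (S.ne_zero q.2) (ep.symm.trans (one_smul K _).symm)
    rw [e, ht, one_smul]

theorem eq_of_isPrimeSeq (P : IsPrimeSeq K Q η' c' y') : y' = y := by
  funext k
  induction k using WellFoundedLT.induction with
  | ind k ih =>
    by_cases hk : deltaZero K Q k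
    · rw [P.rec_delta_zero k hk, S.eq_x k k.2 hk]
    · exact S.eq_of_isPrimeSeq_of_not_deltaZero P hk ih

theorem isLastBelow_iff_of_isPrimeSeq (P : IsPrimeSeq K Q η' c' y) :
    ∀ m ≤ N, ∀ l, IsLastBelow η' m l ↔ IsLastBelow η m l
  | 0, _, _ => by simp [IsLastBelow]
  | k + 1, hk, l => by
    have primes (u : R) : (∃ l, IsLastBelow η' (k + 1) l ∧ ∃ t : Kˣ, u = (t : K) • y l) ↔
        ∃ l, IsLastBelow η (k + 1) l ∧ ∃ t : Kˣ, u = (t : K) • y l := by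
      have h := (P.prime_iff ⟨k, hk⟩ u).symm.trans (S.isPrimeIn_and_isEigenWith_iff ⟨k, hk⟩)
      simpa only [← and_assoc, ← isLastBelow_succ_iff] using h
    constructor
    · intro hl
      obtain ⟨j, hj, t, e⟩ := (primes (y l)).1 ⟨l, hl, 1, by simp⟩
      rwa [S.eq_of_eq_smul l.2 j.2 e]
    · intro hl
      obtain ⟨j, hj, t, e⟩ := (primes (y l)).2 ⟨l, hl, 1, by simp⟩
      rwa [S.eq_of_eq_smul l.2 j.2 e]

end Complete

end PrimeConstruction

end Construction

/-- **Prime elements of quantum nilpotent algebras.**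
Let `R` be a quantum nilpotent algebra of dimension `N` over `K` with torus `H = (Kˣ)^r`.
Then there exist a function `η : [1,N] → ℤ` and elements `c_k ∈ R_{k-1}` (for the `k` with
`δ_k ≠ 0`) such that the recursively defined elements `y_k := y_{p(k)} x_k − c_k`
(resp. `y_k := x_k` when `δ_k = 0`) are `H`-eigenvectors, and for every `k ∈ [1,N]` the
homogeneous prime elements of `R_k` are precisely the nonzero scalar multiples of the
elements `y_l`, `l ∈ [1,k]`, `s(l) > k`.  In particular each `y_k` is a homogeneous prime
element of `R_k`.  Moreover the sequence `y_1, …, y_N` and the level sets of such an `η`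
are unique. -/
theorem prime_elements_of_quantum_nilpotent_algebra
    {K : Type u} [Field K] {R : Type v} [Ring R] [Algebra K R] {N r : ℕ}
    (Q : QNA K R N r) :
    ∃ (η : Fin N → ℤ) (c : Fin N → R) (y : Fin N → R),
      IsPrimeSeq K Q η c y ∧
      (∀ k : Fin N, IsPrimeIn K (Rsub K Q.x ((k : ℕ) + 1)) (y k)) ∧
      (∀ (η' : Fin N → ℤ) (c' y' : Fin N → R), IsPrimeSeq K Q η' c' y' →
        y' = y ∧ ∀ k l : Fin N, η' k = η' l ↔ η k = η l) := by
  obtain ⟨η, c, y, S⟩ := PrimeConstruction.exists_of_le Q le_rfl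
  refine ⟨η, c, y, S.isPrimeSeq, S.isPrimeIn, fun η' c' y' P => ?_⟩
  obtain rfl := S.eq_of_isPrimeSeq P
  exact ⟨rfl, eq_iff_eq_of_isLastBelow_iff (S.isLastBelow_iff_of_isPrimeSeq P)⟩
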